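/- Let κ = log(π/2)/2. For every ε > 0 there exist a constant C and a subset A ⊆ S₂ of relative density 1 in S₂ such that for every m ∈ A, W₂²(ρ_m, σ) ≤ C (log m)^{−2κ/3 + ε}. -/

import Mathlib

/-!
The exponent `2κ/3 = log(π/2)/3 ≈ 0.15` is below `1/5`, and the inequality
`W₂²(ρ_m, σ) ≤ (log m)^(-1/5)` already holds on a subset of relative density 1 (`exponent_bound`
records the comparison, so that `C = 1` works). It comes from a first moment bound and Markov's
inequality.

*Transport.* On the circle `ℝ / ℤ`, couple the uniform measure on a finite set `X` to a shifted
Lebesgue measure by the quantile function. The cost is the integral of the square of the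
discrepancy `F_X(t) - t - 1/2` minus its mean, for the optimal shift (`W2sq_le_variance`); Parseval
(`hasSum_muhat`) turns this into the sum over `n ≠ 0` of the squared moduli of the Fourier
coefficients divided by `n²`. The chord distance is at most the arc distance, so this bounds `W₂²`.
For `ρ_m` only the frequencies `4k` survive, by invariance under multiplication by `i`, and
`W₂²(ρ_m, σ) ≤ ∑_k fk k m / (8 k²)` (`W2sq_rhoM_le`), where `fk k m = (A k m / A 0 m)²` and `A k m` is
one quarter of the sum of `(z/|z|)^(4k)` over the Gaussian integers `z` of norm `m`.

*Mean values.* The function `fk k` is multiplicative with values in `[0, 1]`. At a split prime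
`p = |ϖ|²` its value is `cos²(4k arg ϖ)`, which is `1/2` on average, while it is `0` at the inert
primes. This is expressed without equidistribution of Gaussian primes, by comparing the Euler
factors: `F⁴ ≤ Z_0 Z_{2k} · O(1)` for the Dirichlet series `F` of `fk k` and `Z_j` of `A j`, as
`4 cos² θ = 2 + 2 cos 2θ` (`local_compare`). Near `s = 1` the series `Z_0` is `O(1 / (s - 1))`
(`Z_zero_le`), and `Z_{2k}` is `O(k)` (`Z_le`) by summing over vertical lines of lattice points, on
which the oscillating character nearly cancels. Hence `F(s) ≪ (k / (s - 1))^(1/4)` (`tsum_fk_le`).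
The Hall–Tenenbaum inequality (`sum_fk_log_le`) and Rankin's trick with `s = 1 + 1 / log N` give
`∑_{m ≤ N} fk k m ≪ k^(1/4) N (log N)^(-3/4)` (`sum_fk_le`), and the sum over `k` weighted by `1/k²`
converges.

*Size of `S₂`.* It remains to know that `S₂` has `≫ N (log N)^(-1/2)` elements up to `N`
(`sum_hind_ge`). Since `n ↦ Bn n`, the number of factorizations of `n` into two elements of `S₂`, is
at least `A 0 n`, the harmonic sum over `S₂` has order at least `(log N)^(1/2)`
(`sum_hind_div_sq_ge`). Multiplying elements of `S₂` by prime powers `≡ 1 (mod 4)`, of which there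
are sufficiently many by a Chebyshev argument (`psi1_ge`), converts this into the counting bound.

*Conclusion.* At most `≪ (log N)^(1/5) · N (log N)^(-3/4) = N (log N)^(-11/20)` elements of `S₂` up
to `N` are exceptional, which is `o(N (log N)^(-1/2))` (`relDensityOne_of_exceptional`).
-/

open MeasureTheory ProbabilityTheory Real Filter

noncomputable section

abbrev En (n : ℕ) := EuclideanSpace ℝ (Fin n)

/-- The rescaled lattice points `Λ_m = {λ ∈ (1/√m)ℤⁿ : |λ| = 1}` on the unit sphere. -/
def Lam (n m : ℕ) : Set (En n) :=
  {x | ‖x‖ = 1 ∧ ∀ i, ∃ z : ℤ, x i = z / Real.sqrt m}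

/-- `r_n(m)`, the number of points of `Λ_m`. -/
def rcnt (n m : ℕ) : ℕ := Nat.card (Lam n m)

/-- The normalized counting (probability) measure `ρ_m` on `Λ_m`. -/
def rhoM (n m : ℕ) : Measure (En n) :=
  ((rcnt n m : ENNReal))⁻¹ • Measure.count.restrict (Lam n m)

/-- The uniform probability measure on the unit sphere `S^{n-1}`,
defined via the `(n-1)`-dimensional Hausdorff measure. -/
def unifSphere (n : ℕ) : Measure (En n) :=
  (μH[(n : ℝ) - 1] (Metric.sphere (0 : En n) 1))⁻¹ •
    (μH[(n : ℝ) - 1]).restrict (Metric.sphere (0 : En n) 1)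

/-- Squared Wasserstein-2 distance: infimum of the quadratic transport cost over
all couplings. -/
def W2sq {n : ℕ} (μ ν : Measure (En n)) : ℝ :=
  sInf {c : ℝ | ∃ ρ : Measure (En n × En n),
    ρ.map Prod.fst = μ ∧ ρ.map Prod.snd = ν ∧
    c = ∫ p : En n × En n, dist p.1 p.2 ^ 2 ∂ρ}

/-- Integers that are sums of two squares. -/
def S₂ : Set ℕ := {m | 1 ≤ m ∧ ∃ a b : ℤ, (m : ℤ) = a ^ 2 + b ^ 2}

/-- `A` has relative density one in `B`. -/
def HasRelDensityOne (A B : Set ℕ) : Prop :=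
  Tendsto (fun N : ℕ =>
      (Nat.card ↥(A ∩ Set.Icc 1 N) : ℝ) / (Nat.card ↥(B ∩ Set.Icc 1 N) : ℝ))
    atTop (nhds 1)

/-! ### Gaussian integers of a given norm and angular characters -/

/-- The Gaussian integers of norm `n`, as a finset. -/
def gset (n : ℕ) : Finset GaussianInt :=
  ((Finset.Icc (-(n : ℤ)) n ×ˢ Finset.Icc (-(n : ℤ)) n).image
    (fun p => (⟨p.1, p.2⟩ : GaussianInt))).filter (fun z => z.norm = n)

lemma mem_gset {n : ℕ} {z : GaussianInt} : z ∈ gset n ↔ z.norm = n := by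
  unfold gset
  simp only [Finset.mem_filter, Finset.mem_image, Finset.mem_product, Finset.mem_Icc, Prod.exists,
    and_iff_right_iff_imp]
  intro h
  refine ⟨z.re, z.im, ?_, rfl⟩
  rw [Zsqrtd.norm_def] at h
  refine ⟨⟨?_, ?_⟩, ?_, ?_⟩ <;>
    nlinarith [Int.le_self_sq z.re, Int.le_self_sq (-z.re), Int.le_self_sq z.im,
      Int.le_self_sq (-z.im), mul_self_nonneg z.re, mul_self_nonneg z.im]

/-- The angular character `z ↦ (z/|z|)^{4k}`, invariant under units. -/
def psi (k : ℕ) (z : GaussianInt) : ℂ := ((z : ℂ) / (‖(z : ℂ)‖ : ℂ)) ^ (4 * k)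

lemma psi_mul (k : ℕ) (z w : GaussianInt) : psi k (z * w) = psi k z * psi k w := by
  simp only [psi, GaussianInt.toComplex_mul, norm_mul, Complex.ofReal_mul]
  rw [← mul_pow, mul_div_mul_comm]

lemma gnorm_sq (z : GaussianInt) : ‖(z : ℂ)‖ ^ 2 = (z.norm : ℝ) := by
  rw [GaussianInt.intCast_real_norm, Complex.normSq_eq_norm_sq]

lemma norm_psi (k : ℕ) {z : GaussianInt} (hz : z ≠ 0) : ‖psi k z‖ = 1 := by
  have : (z : ℂ) ≠ 0 := by simpa using hz
  simp [psi, this]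

lemma psi_natCast (k : ℕ) {n : ℕ} (hn : n ≠ 0) : psi k (n : GaussianInt) = 1 := by
  simp only [psi, map_natCast, Complex.norm_natCast, Complex.ofReal_natCast]
  rw [div_self (by exact_mod_cast hn), one_pow]

lemma psi_star (k : ℕ) (z : GaussianInt) : psi k (star z) = (starRingEnd ℂ) (psi k z) := by
  simp [psi]

lemma psi_zero' (z : GaussianInt) : psi 0 z = 1 := by simp [psi]

/-- Units of `ℤ[i]` are fourth roots of unity. -/
lemma unit_pow_four {u : GaussianInt} (hu : u.norm = 1) : u ^ 4 = 1 := by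
  obtain ⟨a, b⟩ := u
  rw [Zsqrtd.norm_def] at hu
  simp only at hu
  have ha : -1 ≤ a ∧ a ≤ 1 := by constructor <;> nlinarith [mul_self_nonneg b, mul_self_nonneg a]
  have hb : -1 ≤ b ∧ b ≤ 1 := by constructor <;> nlinarith [mul_self_nonneg b, mul_self_nonneg a]
  obtain ⟨h1, h2⟩ := ha
  obtain ⟨h3, h4⟩ := hb
  interval_cases a <;> interval_cases b <;> first | (norm_num at hu; done) | decide

lemma psi_unit (k : ℕ) {u : GaussianInt} (hu : u.norm = 1) : psi k u = 1 := by
  have h1 : ‖(u : ℂ)‖ = 1 := by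
    have := gnorm_sq u
    rw [hu] at this
    have h0 := norm_nonneg (u : ℂ)
    norm_num at this
    rcases this with h | h
    · exact h
    · linarith
  have h2 : (u : ℂ) ^ 4 = 1 := by
    rw [← map_pow, unit_pow_four hu, map_one]
  simp [psi, h1, pow_mul, h2]

/-- `A_k(n) = ¼ ∑_{N z = n} (z/|z|)^{4k}`. -/
def Ac (k n : ℕ) : ℂ := (1 / 4) * ∑ z ∈ gset n, psi k z

lemma gset_one_card : (gset 1).card = 4 := by decide +kernel

lemma gset_ne_zero {n : ℕ} (hn : n ≠ 0) {z : GaussianInt} (hz : z ∈ gset n) : z ≠ 0 := by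
  rintro rfl
  rw [mem_gset] at hz
  simp at hz; exact hn (by exact_mod_cast hz.symm)

/-- Existence part of the factorization of an element of norm `mn` with `m`, `n` coprime. -/
lemma exists_factor {m n : ℕ} (hm : m ≠ 0) (hmn : m.Coprime n) {v : GaussianInt}
    (hv : v ∈ gset (m * n)) : ∃ z ∈ gset m, ∃ w ∈ gset n, z * w = v := by
  rw [mem_gset] at hv
  classical
  set d := EuclideanDomain.gcd v (m : GaussianInt) with hd
  obtain ⟨w, hw⟩ := EuclideanDomain.gcd_dvd_left v (m : GaussianInt)
  obtain ⟨w', hw'⟩ := EuclideanDomain.gcd_dvd_right v (m : GaussianInt)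
  rw [← hd] at hw hw'
  have hb := EuclideanDomain.gcd_eq_gcd_ab v (m : GaussianInt)
  rw [← hd] at hb
  set x := EuclideanDomain.gcdA v (m : GaussianInt)
  set y := EuclideanDomain.gcdB v (m : GaussianInt)
  have h1 : d.norm ∣ (m : ℤ) := by
    have e1 : d.norm ∣ (m : ℤ) * m := ⟨w'.norm, by rw [← Zsqrtd.norm_mul, ← hw', Zsqrtd.norm_natCast]⟩
    have e2 : d.norm ∣ (m : ℤ) * n := ⟨w.norm, by rw [← Zsqrtd.norm_mul, ← hw, hv]; push_cast; rfl⟩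
    have hc : IsCoprime (m : ℤ) (n : ℤ) := Nat.isCoprime_iff_coprime.mpr hmn
    obtain ⟨a, b, hab⟩ := hc
    have : (m : ℤ) = a * (m * m) + b * (m * n) := by linear_combination (-(m:ℤ)) * hab
    rw [this]
    exact dvd_add (Dvd.dvd.mul_left e1 _) (Dvd.dvd.mul_left e2 _)
  have h2 : (m : ℤ) ∣ d.norm := by
    have : ((m : ℤ) : GaussianInt) ∣ ((d.norm : ℤ) : GaussianInt) := by
      have hvv : ((v.norm : ℤ) : GaussianInt) = v * star v := Zsqrtd.norm_eq_mul_conj v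
      rw [hv] at hvv
      rw [Zsqrtd.norm_eq_mul_conj, hb]
      simp only [star_add, star_mul', star_natCast]
      refine ⟨n * x * star x + v * x * star y + y * star v * star x + y * m * star y, ?_⟩
      push_cast at hvv ⊢
      linear_combination (-(x * star x)) * hvv
    rwa [Zsqrtd.intCast_dvd_intCast] at this
  have h3 : d.norm = m := Int.dvd_antisymm (GaussianInt.norm_nonneg d) (by positivity) h1 h2
  refine ⟨d, mem_gset.2 h3, w, mem_gset.2 ?_, hw.symm⟩
  have : (m : ℤ) * w.norm = m * n := by
    rw [← h3, ← Zsqrtd.norm_mul, ← hw, hv, h3]; push_cast; rfl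
  exact mul_left_cancel₀ (by exact_mod_cast hm) this

lemma Ac_mul (k : ℕ) {m n : ℕ} (hmn : m.Coprime n) (hm : m ≠ 0) (hn : n ≠ 0) :
    Ac k (m * n) = Ac k m * Ac k n := by
  classical
  have key : ∑ p ∈ gset m ×ˢ gset n, psi k (p.1 * p.2) = 4 * ∑ v ∈ gset (m * n), psi k v := by
    rw [← Finset.sum_fiberwise_of_maps_to (s := gset m ×ˢ gset n) (t := gset (m * n))
      (g := fun p => p.1 * p.2)]
    · rw [Finset.mul_sum]
      refine Finset.sum_congr rfl fun v hv => ?_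
      rw [Finset.sum_congr rfl (g := fun _ => psi k v)
        (fun p hp => by rw [(Finset.mem_filter.1 hp).2]), Finset.sum_const, nsmul_eq_mul]
      congr 1
      obtain ⟨z, hz, w, hw, hzw⟩ := exists_factor hm hmn hv
      have hz0 := gset_ne_zero hm hz
      have hw0 := gset_ne_zero hn hw
      have : ((gset m ×ˢ gset n).filter (fun p => p.1 * p.2 = v)).card = (gset 1).card := by
        symm
        refine Finset.card_bij (fun u _ => (z * u, w * star u)) ?_ ?_ ?_
        · intro u hu
          rw [mem_gset] at hz hw hu
          have huu : u * star u = 1 := by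
            rw [← Zsqrtd.norm_eq_mul_conj, hu]; norm_num
          simp only [Finset.mem_filter, Finset.mem_product, mem_gset, Zsqrtd.norm_mul,
            Zsqrtd.norm_conj, hz, hw, hu]
          refine ⟨by norm_num, ?_⟩
          rw [← hzw]; linear_combination (z * w) * huu
        · intro u _ u' _ h
          simp only [Prod.mk.injEq] at h
          exact mul_left_cancel₀ hz0 h.1
        · rintro ⟨z', w'⟩ hp
          simp only [Finset.mem_filter, Finset.mem_product] at hp
          obtain ⟨⟨hz', hw'⟩, hv'⟩ := hp
          rw [mem_gset] at hz hw hz' hw'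
          have hcop : IsCoprime z w' := by
            have hc : IsCoprime (m : ℤ) (n : ℤ) := Nat.isCoprime_iff_coprime.mpr hmn
            obtain ⟨a, b, hab⟩ := hc
            refine ⟨a * star z, b * star w', ?_⟩
            have e1 : ((z.norm : ℤ) : GaussianInt) = z * star z := Zsqrtd.norm_eq_mul_conj z
            have e2 : ((w'.norm : ℤ) : GaussianInt) = w' * star w' := Zsqrtd.norm_eq_mul_conj w'
            rw [hz] at e1; rw [hw'] at e2
            have : ((a * m + b * n : ℤ) : GaussianInt) = 1 := by rw [hab]; norm_num
            push_cast at this e1 e2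
            linear_combination this - a * e1 - b * e2
          have hdvd : z ∣ z' := hcop.dvd_of_dvd_mul_right ⟨w, by rw [hv', hzw]⟩
          obtain ⟨u, rfl⟩ := hdvd
          have hu : u.norm = 1 := by
            rw [Zsqrtd.norm_mul, hz] at hz'
            exact mul_left_cancel₀ (a := (m : ℤ)) (by exact_mod_cast hm) (by rw [hz', mul_one])
          have huu : u * star u = 1 := by
            rw [← Zsqrtd.norm_eq_mul_conj, hu]; norm_num
          refine ⟨u, mem_gset.2 (by simpa using hu), ?_⟩
          have : w = u * w' := mul_left_cancel₀ hz0 (by rw [hzw, ← hv']; ring)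
          rw [this]
          congr 1
          linear_combination w' * huu
      rw [this, gset_one_card]; norm_num
    · intro p hp
      rw [Finset.mem_product, mem_gset, mem_gset] at hp
      rw [mem_gset, Zsqrtd.norm_mul, hp.1, hp.2]; push_cast; rfl
  rw [Finset.sum_product] at key
  simp only [psi_mul, ← Finset.mul_sum] at key
  rw [← Finset.sum_mul] at key
  unfold Ac
  linear_combination (-1/16) * key

lemma Ac_one (k : ℕ) : Ac k 1 = 1 := by
  unfold Ac
  rw [Finset.sum_congr rfl (g := fun _ => (1 : ℂ))
    (fun z hz => psi_unit k (by simpa using mem_gset.1 hz))]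
  simp [gset_one_card]

/-! ### Values at prime powers -/

lemma prime_of_norm {p : ℕ} (hp : p.Prime) {ϖ : GaussianInt} (h : ϖ.norm = p) : Prime ϖ := by
  rw [← irreducible_iff_prime]
  refine ⟨?_, ?_⟩
  · intro hu
    rw [← Zsqrtd.norm_eq_one_iff' (by norm_num), h] at hu
    exact hp.one_lt.ne' (by exact_mod_cast hu)
  · intro a b hab
    have h1 : a.norm.natAbs * b.norm.natAbs = p := by
      rw [← Int.natAbs_mul, ← Zsqrtd.norm_mul, ← hab, h]; rfl
    rw [← Zsqrtd.norm_eq_one_iff, ← Zsqrtd.norm_eq_one_iff]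
    rcases Nat.prime_mul_iff.1 (h1 ▸ hp) with h | h
    · exact Or.inr h.2
    · exact Or.inl h.2

lemma gset_image {m n : ℕ} {ϖ : GaussianInt} (h : ϖ.norm = m) :
    (gset n).image (ϖ * ·) ⊆ gset (m * n) := by
  intro z hz
  obtain ⟨w, hw, rfl⟩ := Finset.mem_image.1 hz
  rw [mem_gset] at *
  rw [Zsqrtd.norm_mul, h, hw]; push_cast; rfl

lemma mem_image_of_dvd {m n : ℕ} (hm : m ≠ 0) {ϖ z : GaussianInt} (h : ϖ.norm = m)
    (hz : z ∈ gset (m * n)) (hd : ϖ ∣ z) : z ∈ (gset n).image (ϖ * ·) := by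
  obtain ⟨w, rfl⟩ := hd
  refine Finset.mem_image.2 ⟨w, ?_, rfl⟩
  rw [mem_gset] at *
  rw [Zsqrtd.norm_mul, h] at hz
  exact mul_left_cancel₀ (a := (m : ℤ)) (by exact_mod_cast hm) (by rw [hz]; push_cast; rfl)

lemma sum_image_mul (k n : ℕ) {ϖ : GaussianInt} (h : ϖ ≠ 0) :
    ∑ z ∈ (gset n).image (ϖ * ·), psi k z = psi k ϖ * ∑ z ∈ gset n, psi k z := by
  rw [Finset.sum_image (fun a _ b _ hab => mul_left_cancel₀ h hab), Finset.mul_sum]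
  exact Finset.sum_congr rfl fun z _ => psi_mul k ϖ z

/-- An element of norm `p n` is divisible by `ϖ` or by its conjugate, where `ϖ` has prime norm
`p`. -/
lemma gset_prime_mul {p : ℕ} (hp : p.Prime) {ϖ : GaussianInt} (h : ϖ.norm = p) (n : ℕ) :
    gset (p * n) = (gset n).image (ϖ * ·) ∪ (gset n).image (star ϖ * ·) := by
  have h' : (star ϖ).norm = p := by rw [Zsqrtd.norm_conj, h]
  ext z
  constructor
  · intro hz
    have hd : ϖ ∣ z * star z := by
      rw [← Zsqrtd.norm_eq_mul_conj, mem_gset.1 hz]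
      have : ((ϖ.norm : ℤ) : GaussianInt) = ϖ * star ϖ := Zsqrtd.norm_eq_mul_conj ϖ
      rw [h] at this
      refine ⟨star ϖ * n, ?_⟩
      push_cast at this ⊢
      rw [this]; ring
    rw [Finset.mem_union]
    rcases (prime_of_norm hp h).dvd_or_dvd hd with hd | ⟨w, hw⟩
    · exact Or.inl (mem_image_of_dvd hp.ne_zero h hz hd)
    · refine Or.inr (mem_image_of_dvd hp.ne_zero h' hz ⟨star w, ?_⟩)
      rw [← star_star z, hw, star_mul']
  · intro hz
    rcases Finset.mem_union.1 hz with hz | hz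
    · exact gset_image h hz
    · exact gset_image h' hz

lemma exists_norm_prime {p : ℕ} (hp : p.Prime) (h : p % 4 ≠ 3) : ∃ ϖ : GaussianInt, ϖ.norm = p := by
  have := Fact.mk hp
  obtain ⟨a, b, hab⟩ := Nat.Prime.sq_add_sq (p := p) h
  refine ⟨⟨a, b⟩, ?_⟩
  rw [Zsqrtd.norm_def, ← hab]; push_cast; ring

lemma star_coprime {p : ℕ} (hp : p.Prime) (h2 : p ≠ 2) {ϖ : GaussianInt} (h : ϖ.norm = p) :
    IsCoprime ϖ (star ϖ) := by
  have hpp : ((p : ℤ) : GaussianInt) = ϖ * star ϖ := by rw [← h]; exact Zsqrtd.norm_eq_mul_conj ϖ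
  have htr : ϖ + star ϖ = ((2 * ϖ.re : ℤ) : GaussianInt) := by
    ext <;> simp
    ring
  have hpZ : Prime (p : ℤ) := Nat.prime_iff_prime_int.1 hp
  have hc : IsCoprime (p : ℤ) (2 * ϖ.re) := by
    rw [hpZ.irreducible.coprime_iff_not_dvd]
    intro hd
    rw [Zsqrtd.norm_def] at h
    have hpos : (0 : ℤ) < p := by exact_mod_cast hp.pos
    rcases hpZ.dvd_or_dvd hd with hd | hd
    · have := (Nat.prime_dvd_prime_iff_eq hp Nat.prime_two).1 (by exact_mod_cast hd)
      exact h2 this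
    · have h3 : (p : ℤ) ∣ ϖ.im := by
        refine hpZ.dvd_of_dvd_pow (n := 2) ?_
        have : ϖ.im ^ 2 = p - ϖ.re * ϖ.re := by linarith
        rw [this]; exact dvd_sub (dvd_refl _) (Dvd.dvd.mul_left hd _)
      obtain ⟨c, hc⟩ := hd
      obtain ⟨e, he⟩ := h3
      rw [hc, he] at h
      have : (p : ℤ) * (c * c + e * e) = 1 :=
        mul_left_cancel₀ hpos.ne' (by linarith)
      exact hpZ.not_isUnit (IsUnit.of_mul_eq_one _ this)
  obtain ⟨a, b, hab⟩ := hc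
  refine ⟨a * star ϖ + b, b, ?_⟩
  have : ((a * p + b * (2 * ϖ.re) : ℤ) : GaussianInt) = 1 := by rw [hab]; norm_num
  push_cast at this htr hpp
  linear_combination this + a * (-hpp) + b * htr

lemma psi_mul_star (k : ℕ) {p : ℕ} (hp : p.Prime) {ϖ : GaussianInt} (h : ϖ.norm = p) :
    psi k ϖ * psi k (star ϖ) = 1 := by
  have hpp : ((p : ℤ) : GaussianInt) = ϖ * star ϖ := by rw [← h]; exact Zsqrtd.norm_eq_mul_conj ϖ
  rw [← psi_mul, ← hpp]
  exact psi_natCast k hp.ne_zero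

lemma ne_zero_of_norm {p : ℕ} (hp : p.Prime) {ϖ : GaussianInt} (h : ϖ.norm = p) : ϖ ≠ 0 := by
  rintro rfl
  simp at h
  exact hp.ne_zero (by exact_mod_cast h.symm)

/-- At a split prime `p = ϖ ϖ̄` the only elements of norm `p` are the associates of `ϖ` and `ϖ̄`. -/
lemma Ac_split_one {p : ℕ} (hp : p.Prime) (h2 : p ≠ 2) {ϖ : GaussianInt} (h : ϖ.norm = p) (k : ℕ) :
    Ac k p = psi k ϖ + psi k (star ϖ) := by
  classical
  have h' : (star ϖ).norm = p := by rw [Zsqrtd.norm_conj, h]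
  have hϖ := ne_zero_of_norm hp h
  have hϖ' := ne_zero_of_norm hp h'
  have key : ∑ z ∈ gset (p * 1), psi k z =
      (psi k ϖ + psi k (star ϖ)) * ∑ z ∈ gset 1, psi k z := by
    rw [gset_prime_mul hp h, Finset.sum_union, sum_image_mul k _ hϖ, sum_image_mul k _ hϖ']
    · ring
    · rw [Finset.disjoint_left]
      rintro z hz hz'
      obtain ⟨w, hw, rfl⟩ := Finset.mem_image.1 hz
      obtain ⟨w', hw', hww⟩ := Finset.mem_image.1 hz'
      have hd : star ϖ ∣ w := (star_coprime hp h2 h).symm.dvd_of_dvd_mul_left ⟨w', hww.symm⟩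
      obtain ⟨c, rfl⟩ := hd
      rw [mem_gset, Zsqrtd.norm_mul, h'] at hw
      exact (Nat.prime_iff_prime_int.1 hp).not_isUnit (IsUnit.of_mul_eq_one _ (by simpa using hw))
  rw [mul_one] at key
  have := Ac_one k
  unfold Ac at *
  linear_combination (1/4) * key + (psi k ϖ + psi k (star ϖ)) * this

/-- Hecke relation at a split prime `p = ϖ ϖ̄`: an element of norm `p ^ (j + 2)` is divisible by
`ϖ` or by `ϖ̄`, and those divisible by both are `p` times an element of norm `p ^ j`. -/
lemma Ac_split_rec {p : ℕ} (hp : p.Prime) (h2 : p ≠ 2) {ϖ : GaussianInt} (h : ϖ.norm = p)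
    (k j : ℕ) : Ac k (p ^ (j + 2)) = Ac k p * Ac k (p ^ (j + 1)) - Ac k (p ^ j) := by
  classical
  have h' : (star ϖ).norm = p := by rw [Zsqrtd.norm_conj, h]
  have hϖ := ne_zero_of_norm hp h
  have hϖ' := ne_zero_of_norm hp h'
  have key := Finset.sum_union_inter (s₁ := (gset (p ^ (j+1))).image (ϖ * ·))
    (s₂ := (gset (p ^ (j+1))).image (star ϖ * ·)) (f := psi k)
  have hint : (gset (p ^ (j+1))).image (ϖ * ·) ∩ (gset (p ^ (j+1))).image (star ϖ * ·)
      = (gset (p ^ j)).image (ϖ * star ϖ * ·) := by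
    ext z
    rw [Finset.mem_inter]
    constructor
    · rintro ⟨hz, hz'⟩
      obtain ⟨w, hw, rfl⟩ := Finset.mem_image.1 hz
      obtain ⟨w', hw', hww⟩ := Finset.mem_image.1 hz'
      have hd : star ϖ ∣ w := (star_coprime hp h2 h).symm.dvd_of_dvd_mul_left ⟨w', hww.symm⟩
      rw [pow_succ'] at hw
      have := mem_image_of_dvd hp.ne_zero h' hw hd
      obtain ⟨c, hc, rfl⟩ := Finset.mem_image.1 this
      exact Finset.mem_image.2 ⟨c, hc, by ring⟩
    · intro hz
      obtain ⟨c, hc, rfl⟩ := Finset.mem_image.1 hz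
      rw [pow_succ']
      refine ⟨Finset.mem_image.2 ⟨star ϖ * c, gset_image h' (Finset.mem_image_of_mem _ hc), by ring⟩,
        Finset.mem_image.2 ⟨ϖ * c, gset_image h (Finset.mem_image_of_mem _ hc), by ring⟩⟩
  rw [hint, ← gset_prime_mul hp h, sum_image_mul k _ hϖ, sum_image_mul k _ hϖ',
    sum_image_mul k _ (mul_ne_zero hϖ hϖ'), psi_mul, psi_mul_star k hp h, ← pow_succ'] at key
  rw [Ac_split_one hp h2 h]
  unfold Ac
  rw [show j + 2 = j + 1 + 1 from rfl]
  linear_combination (1/4) * key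

lemma Ac_two_rec (k j : ℕ) : Ac k (2 ^ (j + 1)) = psi k ⟨1, 1⟩ * Ac k (2 ^ j) := by
  classical
  have h : (⟨1, 1⟩ : GaussianInt).norm = (2 : ℕ) := by decide
  have hd : (⟨1, 1⟩ : GaussianInt) ∣ star ⟨1, 1⟩ := ⟨⟨0, -1⟩, by decide⟩
  have hs : (gset (2 ^ j)).image (star (⟨1, 1⟩ : GaussianInt) * ·) ⊆
      (gset (2 ^ j)).image ((⟨1, 1⟩ : GaussianInt) * ·) := by
    intro z hz
    refine mem_image_of_dvd two_ne_zero h (gset_image (m := 2) (by decide) hz) ?_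
    obtain ⟨w, hw, rfl⟩ := Finset.mem_image.1 hz
    exact Dvd.dvd.mul_right hd w
  have := sum_image_mul k (2 ^ j) (ne_zero_of_norm Nat.prime_two h)
  unfold Ac
  rw [pow_succ', gset_prime_mul Nat.prime_two h, Finset.union_eq_left.2 hs, this]
  ring

lemma psi_two_sq (k : ℕ) : psi k ⟨1, 1⟩ ^ 2 = 1 := by
  have h : (⟨1, 1⟩ : GaussianInt).norm = (2 : ℕ) := by decide
  have h1 := psi_mul_star k Nat.prime_two h
  have h2 : psi k (star ⟨1, 1⟩) = psi k ⟨1, 1⟩ := by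
    rw [show star (⟨1, 1⟩ : GaussianInt) = ⟨1, 1⟩ * ⟨0, -1⟩ by decide, psi_mul,
      psi_unit k (u := ⟨0, -1⟩) (by decide), mul_one]
  rw [h2] at h1
  rw [sq, h1]

lemma psi_sq (k : ℕ) (z : GaussianInt) : psi (2 * k) z = psi k z ^ 2 := by
  unfold psi; rw [← pow_mul]; congr 1; ring

lemma inert_dvd {p : ℕ} (hp : p.Prime) (h3 : p % 4 = 3) {n : ℕ} {z : GaussianInt}
    (hz : z ∈ gset (p * n)) : (p : GaussianInt) ∣ z := by
  have := Fact.mk hp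
  have hP := GaussianInt.prime_of_nat_prime_of_mod_four_eq_three p h3
  have hd : (p : GaussianInt) ∣ z * star z := by
    rw [← Zsqrtd.norm_eq_mul_conj, mem_gset.1 hz]
    exact ⟨n, by push_cast; rfl⟩
  rcases hP.dvd_or_dvd hd with hd | ⟨w, hw⟩
  · exact hd
  · exact ⟨star w, by rw [← star_star z, hw, star_mul', star_natCast]⟩

lemma Ac_inert_one {p : ℕ} (hp : p.Prime) (h3 : p % 4 = 3) (k : ℕ) : Ac k p = 0 := by
  have : gset p = ∅ := by
    rw [Finset.eq_empty_iff_forall_notMem]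
    intro z hz
    obtain ⟨w, rfl⟩ := inert_dvd hp h3 (n := 1) (by simpa using hz)
    rw [mem_gset, Zsqrtd.norm_mul, Zsqrtd.norm_natCast, mul_assoc] at hz
    have hp0 : (p : ℤ) ≠ 0 := by exact_mod_cast hp.ne_zero
    have : (p : ℤ) * w.norm = 1 := mul_left_cancel₀ hp0 (by rw [hz, mul_one])
    exact (Nat.prime_iff_prime_int.1 hp).not_isUnit (IsUnit.of_mul_eq_one _ this)
  simp [Ac, this]

lemma Ac_inert_rec {p : ℕ} (hp : p.Prime) (h3 : p % 4 = 3) (k j : ℕ) :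
    Ac k (p ^ (j + 2)) = Ac k (p ^ j) := by
  have hnorm : (p : GaussianInt).norm = ((p * p : ℕ) : ℤ) := by
    rw [Zsqrtd.norm_natCast]; push_cast; rfl
  have hp0 : (p : GaussianInt) ≠ 0 := by exact_mod_cast hp.ne_zero
  have : gset (p ^ (j + 2)) = (gset (p ^ j)).image ((p : GaussianInt) * ·) := by
    have e : p ^ (j + 2) = p * p * p ^ j := by ring
    apply Finset.Subset.antisymm
    · intro z hz
      rw [e] at hz
      exact mem_image_of_dvd (mul_ne_zero hp.ne_zero hp.ne_zero) hnorm hz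
        (inert_dvd hp h3 (n := p * p ^ j) (by rwa [← mul_assoc]))
    · rw [e]; exact gset_image hnorm
  unfold Ac
  rw [this, sum_image_mul k _ hp0, psi_natCast k hp.ne_zero, one_mul]

/-- The coefficient `A_k(n)` is real. -/
lemma Ac_conj (k n : ℕ) : (starRingEnd ℂ) (Ac k n) = Ac k n := by
  unfold Ac
  simp only [map_mul, map_sum, map_div₀, map_one, map_ofNat]
  congr 1
  refine Finset.sum_nbij' star star ?_ ?_ ?_ ?_ ?_
  · intro z hz; rw [mem_gset] at *; rw [Zsqrtd.norm_conj, hz]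
  · intro z hz; rw [mem_gset] at *; rw [Zsqrtd.norm_conj, hz]
  · intro z _; exact star_star z
  · intro z _; exact star_star z
  · intro z _; exact (psi_star k z).symm

/-- `Ac k n` as a real number; `Ac k n` is real because conjugation permutes the elements of norm
`n`. -/
def A (k n : ℕ) : ℝ := (Ac k n).re

lemma ofReal_A (k n : ℕ) : (A k n : ℂ) = Ac k n := by
  unfold A; exact Complex.conj_eq_iff_re.1 (Ac_conj k n)

lemma A_mul (k : ℕ) {m n : ℕ} (hmn : m.Coprime n) (hm : m ≠ 0) (hn : n ≠ 0) :
    A k (m * n) = A k m * A k n := by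
  apply Complex.ofReal_injective
  push_cast
  simp only [ofReal_A, Ac_mul k hmn hm hn]

lemma A_one (k : ℕ) : A k 1 = 1 := by unfold A; rw [Ac_one]; rfl

lemma A_zero_eq (n : ℕ) : A 0 n = (gset n).card / 4 := by
  apply Complex.ofReal_injective
  rw [ofReal_A]; unfold Ac
  simp [psi_zero']; ring

lemma A_zero_nonneg (n : ℕ) : 0 ≤ A 0 n := by rw [A_zero_eq]; positivity

lemma abs_A_le (k : ℕ) {n : ℕ} (hn : n ≠ 0) : |A k n| ≤ A 0 n := by
  rw [A_zero_eq, ← Real.norm_eq_abs, ← Complex.norm_real, ofReal_A]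
  unfold Ac
  rw [norm_mul]
  have : ‖∑ z ∈ gset n, psi k z‖ ≤ (gset n).card := by
    refine (norm_sum_le _ _).trans ?_
    rw [Finset.sum_congr rfl fun z hz => norm_psi k (gset_ne_zero hn hz)]
    simp
  norm_num
  linarith

lemma A_split_rec {p : ℕ} (hp : p.Prime) (h1 : p % 4 = 1) (k j : ℕ) :
    A k (p ^ (j + 2)) = A k p * A k (p ^ (j + 1)) - A k (p ^ j) := by
  obtain ⟨ϖ, h⟩ := exists_norm_prime hp (by omega)
  apply Complex.ofReal_injective
  push_cast
  simp only [ofReal_A]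
  exact Ac_split_rec hp (by rintro rfl; norm_num at h1) h k j

lemma A_split_sq {p : ℕ} (hp : p.Prime) (h1 : p % 4 = 1) (k : ℕ) :
    A k p ^ 2 = 2 + A (2 * k) p := by
  obtain ⟨ϖ, h⟩ := exists_norm_prime hp (by omega)
  have h2 : p ≠ 2 := by rintro rfl; norm_num at h1
  apply Complex.ofReal_injective
  push_cast
  simp only [ofReal_A]
  rw [Ac_split_one hp h2 h, Ac_split_one hp h2 h, psi_sq, psi_sq]
  linear_combination 2 * psi_mul_star k hp h

lemma A_split_zero {p : ℕ} (hp : p.Prime) (h1 : p % 4 = 1) : A 0 p = 2 := by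
  obtain ⟨ϖ, h⟩ := exists_norm_prime hp (by omega)
  have h2 : p ≠ 2 := by rintro rfl; norm_num at h1
  apply Complex.ofReal_injective
  rw [ofReal_A, Ac_split_one hp h2 h, psi_zero', psi_zero']; norm_num

lemma A_two_pow (k j : ℕ) : A (2 * k) (2 ^ j) = 1 := by
  induction j with
  | zero => simpa using A_one (2 * k)
  | succ j ih =>
    apply Complex.ofReal_injective
    rw [ofReal_A, Ac_two_rec, psi_sq, psi_two_sq, ← ofReal_A, ih]; norm_num

lemma A_inert_one {p : ℕ} (hp : p.Prime) (h3 : p % 4 = 3) (k : ℕ) : A k p = 0 := by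
  unfold A; rw [Ac_inert_one hp h3]; rfl

lemma A_inert_rec {p : ℕ} (hp : p.Prime) (h3 : p % 4 = 3) (k j : ℕ) :
    A k (p ^ (j + 2)) = A k (p ^ j) := by
  unfold A; rw [Ac_inert_rec hp h3]

lemma A_inert_nonneg {p : ℕ} (hp : p.Prime) (h3 : p % 4 = 3) (k : ℕ) :
    ∀ j, 0 ≤ A k (p ^ j) ∧ 0 ≤ A k (p ^ (j + 1)) := by
  intro j
  induction j with
  | zero => simp [A_one, A_inert_one hp h3]
  | succ j ih => exact ⟨ih.2, by rw [A_inert_rec hp h3]; exact ih.1⟩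

/-! ### The Hecke series as a lattice sum -/

/-- The summand `ψ_k(z) N(z)^{-s}` of the Hecke series. -/
def hf (k : ℕ) (s : ℝ) (z : GaussianInt) : ℂ := psi k z * (((z.norm : ℝ) ^ (-s) : ℝ) : ℂ)

/-- The summand restricted to the fundamental domain `0 < a`, `-a < b ≤ a` for the units. -/
def hfD (k : ℕ) (s : ℝ) (z : GaussianInt) : ℂ :=
  if 0 < z.re ∧ -z.re < z.im ∧ z.im ≤ z.re then hf k s z else 0

lemma hf_unit (k : ℕ) (s : ℝ) {u : GaussianInt} (hu : u.norm = 1) (z : GaussianInt) :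
    hf k s (u * z) = hf k s z := by
  unfold hf; rw [psi_mul, psi_unit k hu, Zsqrtd.norm_mul, hu, one_mul, one_mul]

/-- The unit `i` of `ℤ[i]`. -/
def uI : GaussianInt := ⟨0, 1⟩

lemma hf_zero (k : ℕ) {s : ℝ} (hs : s ≠ 0) : hf k s 0 = 0 := by
  unfold hf; simp [Real.zero_rpow (neg_ne_zero.2 hs)]

lemma hfD_of {k : ℕ} {s : ℝ} {z : GaussianInt} {a b : ℤ} {c : ℂ} (h1 : z.re = a) (h2 : z.im = b)
    (h3 : hf k s z = c) : hfD k s z = if 0 < a ∧ -a < b ∧ b ≤ a then c else 0 := by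
  subst h1 h2 h3; rfl

/-- A nonzero `z` has exactly one associate in the fundamental domain of `hfD`, and `hf` does not
see the unit. The hypothesis `s ≠ 0` makes the terms at `z = 0` vanish. -/
lemma hf_eq (k : ℕ) {s : ℝ} (hs : s ≠ 0) (z : GaussianInt) :
    hf k s z = hfD k s z + hfD k s (uI * z) + hfD k s (-z) + hfD k s (-uI * z) := by
  have e1 := hf_unit k s (u := uI) (by decide) z
  have e2 := hf_unit k s (u := -1) (by decide) z
  have e3 := hf_unit k s (u := -uI) (by decide) z
  rw [neg_one_mul] at e2
  obtain ⟨a, b⟩ := z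
  rw [hfD_of (a := a) (b := b) rfl rfl rfl,
    hfD_of (a := -b) (b := a) (by simp [uI]) (by simp [uI]) e1,
    hfD_of (a := -a) (b := -b) rfl rfl e2,
    hfD_of (a := b) (b := -a) (by simp [uI]) (by simp [uI]) e3]
  by_cases hz : a = 0 ∧ b = 0
  · rw [hz.1, hz.2, show (⟨0, 0⟩ : GaussianInt) = 0 from rfl, hf_zero k hs]
    simp
  by_cases c1 : 0 < a ∧ -a < b ∧ b ≤ a
  · rw [if_pos c1, if_neg (by omega), if_neg (by omega), if_neg (by omega)]; simp
  rw [if_neg c1]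
  by_cases c2 : 0 < -b ∧ - -b < a ∧ a ≤ -b
  · rw [if_pos c2, if_neg (by omega), if_neg (by omega)]; simp
  rw [if_neg c2]
  by_cases c3 : 0 < -a ∧ - -a < -b ∧ -b ≤ -a
  · rw [if_pos c3, if_neg (by omega)]; simp
  rw [if_neg c3, if_pos (by omega)]; simp

/-- The point `(a + 1) + b i`; the shift makes the first coordinate run over positive integers. -/
def jD (p : ℕ × ℤ) : GaussianInt := ⟨p.1 + 1, p.2⟩

lemma jD_inj : Function.Injective jD := by
  rintro ⟨a, b⟩ ⟨c, d⟩ h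
  simp only [jD, Zsqrtd.ext_iff] at h
  ext <;> simp <;> omega

lemma jD_range (k : ℕ) (s : ℝ) : ∀ z ∉ Set.range jD, hfD k s z = 0 := by
  intro z hz
  unfold hfD
  rw [if_neg]
  rintro ⟨h, _⟩
  refine hz ⟨((z.re - 1).toNat, z.im), ?_⟩
  ext <;> simp [jD]
  omega

lemma jD_zero (k : ℕ) (s : ℝ) (a : ℕ) : ∀ b ∉ Finset.Ioc (-((a : ℤ) + 1)) (a + 1),
    hfD k s (jD (a, b)) = 0 := by
  intro b hb
  unfold hfD
  rw [if_neg]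
  simp only [jD, Finset.mem_Ioc] at *
  omega

lemma jD_norm (k : ℕ) {s : ℝ} (hs : 0 < s) (a : ℕ) (b : ℤ) :
    ‖hfD k s (jD (a, b))‖ ≤ ((a : ℝ) + 1) ^ (-(2 * s)) := by
  unfold hfD
  split_ifs with h
  · unfold hf
    rw [norm_mul, norm_psi k, one_mul, Complex.norm_real, Real.norm_eq_abs, abs_of_nonneg]
    · rw [show -(2 * s) = 2 * (-s) by ring, Real.rpow_mul (by positivity)]
      apply Real.rpow_le_rpow_of_nonpos
      · positivity
      · have : ((jD (a, b)).norm : ℝ) = ((a : ℝ) + 1) ^ 2 + b ^ 2 := by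
          rw [Zsqrtd.norm_def]; simp [jD]; ring
        rw [this]
        norm_num
        positivity
      · linarith
    · apply Real.rpow_nonneg
      exact_mod_cast GaussianInt.norm_nonneg _
    · intro h0
      rw [h0] at h
      simp at h
  · simp; positivity

lemma sum_norm_le (k : ℕ) {s : ℝ} (hs : 0 < s) (a : ℕ) :
    ∑ b ∈ Finset.Ioc (-((a : ℤ) + 1)) (a + 1), ‖hfD k s (jD (a, b))‖ ≤
      2 * ((a : ℝ) + 1) ^ (-(2 * s - 1)) := by
  refine (Finset.sum_le_sum fun b _ => jD_norm k hs a b).trans ?_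
  rw [Finset.sum_const, nsmul_eq_mul, Int.card_Ioc]
  have : (((a : ℤ) + 1 - -((a : ℤ) + 1)).toNat : ℝ) = 2 * ((a : ℝ) + 1) := by
    rw [show ((a : ℤ) + 1 - -((a : ℤ) + 1)) = ((2 * (a + 1) : ℕ) : ℤ) by push_cast; ring,
      Int.toNat_natCast]
    push_cast; ring
  rw [this, show -(2 * s - 1) = 1 + -(2 * s) by ring, Real.rpow_add (by positivity), Real.rpow_one]
  linarith

lemma summable_shift {t : ℝ} (ht : 1 < t) : Summable fun a : ℕ => ((a : ℝ) + 1) ^ (-t) := by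
  have := (summable_nat_add_iff 1).2 (Real.summable_nat_rpow.2 (show -t < -1 by linarith))
  simpa using this

lemma summable_D (k : ℕ) {s : ℝ} (hs : 1 < s) : Summable fun p : ℕ × ℤ => hfD k s (jD p) := by
  apply Summable.of_norm
  rw [summable_prod_of_nonneg (fun _ => norm_nonneg _)]
  have hz : ∀ a : ℕ, ∀ b ∉ Finset.Ioc (-((a : ℤ) + 1)) (a + 1), ‖hfD k s (jD (a, b))‖ = 0 := by
    intro a b hb; rw [jD_zero k s a b hb, norm_zero]
  refine ⟨fun a => summable_of_ne_finset_zero (hz a), ?_⟩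
  refine Summable.of_nonneg_of_le (fun a => tsum_nonneg fun _ => norm_nonneg _) (fun a => ?_)
    ((summable_shift (t := 2 * s - 1) (by linarith)).mul_left 2)
  rw [tsum_eq_sum (hz a)]
  exact sum_norm_le k (by linarith) a

lemma hasSum_hfD (k : ℕ) {s : ℝ} (hs : 1 < s) :
    HasSum (hfD k s) (∑' a : ℕ, ∑ b ∈ Finset.Ioc (-((a : ℤ) + 1)) (a + 1), hfD k s (jD (a, b))) := by
  rw [← jD_inj.hasSum_iff (jD_range k s)]
  have h := summable_D k hs
  convert! h.hasSum using 1
  rw [h.tsum_prod]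
  congr 1; ext a
  rw [tsum_eq_sum (jD_zero k s a)]

/-- Multiplication by a unit as a permutation. -/
def uEquiv (u v : GaussianInt) (h : u * v = 1) : GaussianInt ≃ GaussianInt where
  toFun z := u * z
  invFun z := v * z
  left_inv z := by
    show v * (u * z) = z
    rw [← mul_assoc, mul_comm v, h, one_mul]
  right_inv z := by
    show u * (v * z) = z
    rw [← mul_assoc, h, one_mul]

lemma hasSum_hf (k : ℕ) {s : ℝ} (hs : 1 < s) :
    HasSum (hf k s)
      (4 * ∑' a : ℕ, ∑ b ∈ Finset.Ioc (-((a : ℤ) + 1)) (a + 1), hfD k s (jD (a, b))) := by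
  have h := hasSum_hfD k hs
  have h1 := (uEquiv uI (-uI) (by decide)).hasSum_iff.2 h
  have h2 := (uEquiv (-1) (-1) (by decide)).hasSum_iff.2 h
  have h3 := (uEquiv (-uI) uI (by decide)).hasSum_iff.2 h
  convert! ((h.add h1).add h2).add h3 using 1
  · ext z
    rw [hf_eq k (by linarith) z]
    simp [uEquiv]
  · ring

lemma sum_gset_hf (k n : ℕ) (s : ℝ) :
    ∑ z ∈ gset n, hf k s z = 4 * ((A k n * (n : ℝ) ^ (-s) : ℝ) : ℂ) := by
  rw [Finset.sum_congr rfl (g := fun z => psi k z * (((n : ℝ) ^ (-s) : ℝ) : ℂ))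
    (fun z hz => by unfold hf; rw [mem_gset.1 hz, Int.cast_natCast])]
  rw [← Finset.sum_mul]
  push_cast
  rw [ofReal_A]; unfold Ac; ring

/-- The Dirichlet series of `A k`, rearranged as a sum over the fundamental domain along vertical
lines of fixed real part `a + 1`. -/
lemma hasSum_A (k : ℕ) {s : ℝ} (hs : 1 < s) :
    HasSum (fun n : ℕ => ((A k n * (n : ℝ) ^ (-s) : ℝ) : ℂ))
      (∑' a : ℕ, ∑ b ∈ Finset.Ioc (-((a : ℤ) + 1)) (a + 1), hfD k s (jD (a, b))) := by
  have h := (hasSum_hf k hs).tsum_fiberwise (fun z => z.norm.natAbs)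
  have e : ∀ n : ℕ, (∑' z : (fun z : GaussianInt => z.norm.natAbs) ⁻¹' {n}, hf k s z) =
      4 * ((A k n * (n : ℝ) ^ (-s) : ℝ) : ℂ) := by
    intro n
    rw [← sum_gset_hf, ← Finset.tsum_subtype']
    have : (fun z : GaussianInt => z.norm.natAbs) ⁻¹' {n} = ↑(gset n) := by
      ext z
      have := GaussianInt.norm_nonneg z
      simp only [Set.mem_preimage, Set.mem_singleton_iff, Finset.mem_coe, mem_gset]
      omega
    rw [this]
  simp only [e] at h
  have h2 := h.mul_left (1 / 4)
  convert! h2 using 1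
  · ext n; ring
  · ring

/-- The Hecke series, as a real number. -/
def Z (k : ℕ) (s : ℝ) : ℝ := ∑' n : ℕ, A k n * (n : ℝ) ^ (-s)

lemma summable_A (k : ℕ) {s : ℝ} (hs : 1 < s) : Summable (fun n : ℕ => A k n * (n : ℝ) ^ (-s)) := by
  exact_mod_cast (hasSum_A k hs).summable

lemma ofReal_Z (k : ℕ) {s : ℝ} (hs : 1 < s) : (Z k s : ℂ) =
    ∑' a : ℕ, ∑ b ∈ Finset.Ioc (-((a : ℤ) + 1)) (a + 1), hfD k s (jD (a, b)) := by
  rw [← (hasSum_A k hs).tsum_eq, Z, Complex.ofReal_tsum]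

lemma tsum_shift_le {t : ℝ} (ht : 1 < t) : ∑' a : ℕ, ((a : ℝ) + 1) ^ (-t) ≤ t / (t - 1) := by
  have ht1 : 0 < t - 1 := by linarith
  -- comparison with the telescoping sum of `x ^ (1 - t) / (t - 1)`
  have step : ∀ a : ℕ, ((a : ℝ) + 1 + 1) ^ (-t) ≤
      ((a : ℝ) + 1) ^ (-(t - 1)) / (t - 1) - ((a : ℝ) + 1 + 1) ^ (-(t - 1)) / (t - 1) := by
    intro a
    set x : ℝ := (a : ℝ) + 1 + 1 with hx
    have hxp : 0 < x := by positivity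
    have hx1 : (a : ℝ) + 1 = x * (1 + -(1 / x)) := by rw [hx]; field_simp; ring
    have hu : 1 / x < 1 := by rw [div_lt_one hxp, hx]; have : (0:ℝ) ≤ a := by positivity
                              linarith
    have hle : 1 + (t - 1) * (1 / x) ≤ (1 + -(1 / x)) ^ (-(t - 1)) := by
      rw [Real.rpow_def_of_pos (by linarith)]
      have h1 := Real.log_le_sub_one_of_pos (show 0 < 1 + -(1 / x) by linarith)
      have h2 := Real.add_one_le_exp (Real.log (1 + -(1 / x)) * -(t - 1))
      nlinarith
    rw [hx1, Real.mul_rpow hxp.le (by linarith), ← sub_div, le_div_iff₀ ht1]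
    have e : x ^ (-t) = x ^ (-(t - 1)) * (1 / x) := by
      rw [show -t = -(t - 1) - 1 by ring, Real.rpow_sub_one hxp.ne']; ring
    rw [e]
    have := mul_le_mul_of_nonneg_left hle (Real.rpow_nonneg hxp.le (-(t - 1)))
    nlinarith
  have fin : ∀ n : ℕ, ∑ a ∈ Finset.range (n + 1), ((a : ℝ) + 1) ^ (-t) ≤
      t / (t - 1) - ((n : ℝ) + 1) ^ (-(t - 1)) / (t - 1) := by
    intro n
    induction n with
    | zero => simp; rw [← sub_nonneg]; field_simp; ring_nf; rfl
    | succ n ih =>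
      rw [Finset.sum_range_succ]
      have := step n
      push_cast
      linarith
  refine Real.tsum_le_of_sum_range_le (fun a => by positivity) fun n => ?_
  rw [← Finset.sum_range_succ_sub_top fun a : ℕ => ((a : ℝ) + 1) ^ (-t)]
  have h1 := fin n
  have h2 : 0 ≤ ((n : ℝ) + 1) ^ (-(t - 1)) / (t - 1) := by positivity
  have h3 : 0 ≤ ((n : ℝ) + 1) ^ (-t) := by positivity
  linarith

lemma Z_zero_le {s : ℝ} (hs : 1 < s) (hs2 : s ≤ 2) : Z 0 s ≤ 3 / (s - 1) := by
  have h1 : |Z 0 s| ≤ ∑' a : ℕ, 2 * ((a : ℝ) + 1) ^ (-(2 * s - 1)) := by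
    rw [← Real.norm_eq_abs, ← Complex.norm_real, ofReal_Z 0 hs]
    refine tsum_of_norm_bounded
      ((summable_shift (t := 2 * s - 1) (by linarith)).mul_left 2).hasSum fun a => ?_
    exact (norm_sum_le _ _).trans (sum_norm_le 0 (by linarith) a)
  rw [tsum_mul_left] at h1
  have h2 := tsum_shift_le (t := 2 * s - 1) (by linarith)
  have h3 : 2 * ((2 * s - 1) / (2 * s - 1 - 1)) ≤ 3 / (s - 1) := by
    rw [show 2 * s - 1 - 1 = 2 * (s - 1) by ring]
    have : 0 < s - 1 := by linarith
    rw [mul_div_assoc', mul_div_mul_left _ _ (by norm_num)]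
    gcongr
    linarith
  linarith [le_abs_self (Z 0 s)]

/-! ### Boundedness of the Hecke series near `s = 1` -/

/-- `ψ_k(a + bi)` for `a > 0`, as a function of the slope `y = b / a`. -/
def Ek (k : ℕ) (y : ℝ) : ℂ := Complex.exp (((4 * k * Real.arctan y : ℝ) : ℂ) * Complex.I)

lemma norm_Ek (k : ℕ) (y : ℝ) : ‖Ek k y‖ = 1 := Complex.norm_exp_ofReal_mul_I _

lemma hasDerivAt_Ek (k : ℕ) (y : ℝ) :
    HasDerivAt (Ek k) (Ek k y * (((4 * k * (1 / (1 + y ^ 2)) : ℝ) : ℂ) * Complex.I)) y :=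
  (((Real.hasDerivAt_arctan y).const_mul (4 * (k : ℝ))).ofReal_comp.mul_const Complex.I).cexp

/-- The density `E_k(y) / (1 + y²)`, whose integral over `[-1, 1]` vanishes for
`k ≠ 0`. -/
def Pk (k : ℕ) (y : ℝ) : ℂ := Ek k y * (((1 + y ^ 2)⁻¹ : ℝ) : ℂ)

/-- An antiderivative of `Pk` for `k ≠ 0`. -/
def Qk (k : ℕ) (y : ℝ) : ℂ := Ek k y * (4 * k * Complex.I)⁻¹

lemma hasDerivAt_Qk {k : ℕ} (hk : k ≠ 0) (y : ℝ) : HasDerivAt (Qk k) (Pk k y) y := by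
  convert! (hasDerivAt_Ek k y).mul_const (4 * k * Complex.I)⁻¹ using 1
  have : (k : ℂ) ≠ 0 := by exact_mod_cast hk
  unfold Pk
  push_cast
  field_simp

lemma hasDerivAt_Pk (k : ℕ) (y : ℝ) : HasDerivAt (Pk k)
    (Ek k y * (((4 * k * (1 / (1 + y ^ 2)) : ℝ) : ℂ) * Complex.I) * (((1 + y ^ 2)⁻¹ : ℝ) : ℂ) +
      Ek k y * ((-(2 * y) / (1 + y ^ 2) ^ 2 : ℝ) : ℂ)) y := by
  have h : HasDerivAt (fun y : ℝ => (1 + y ^ 2)⁻¹) (-(2 * y) / (1 + y ^ 2) ^ 2) y := by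
    have h1 : HasDerivAt (fun y : ℝ => 1 + y ^ 2) (2 * y) y := by
      simpa using (hasDerivAt_pow 2 y).const_add 1
    exact h1.fun_inv (by positivity)
  exact (hasDerivAt_Ek k y).mul h.ofReal_comp

lemma norm_deriv_Pk (k : ℕ) (y : ℝ) :
    ‖Ek k y * (((4 * k * (1 / (1 + y ^ 2)) : ℝ) : ℂ) * Complex.I) * (((1 + y ^ 2)⁻¹ : ℝ) : ℂ) +
      Ek k y * ((-(2 * y) / (1 + y ^ 2) ^ 2 : ℝ) : ℂ)‖ ≤ 4 * k + 1 := by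
  refine (norm_add_le _ _).trans ?_
  have hp : 1 ≤ 1 + y ^ 2 := by nlinarith
  have h1 : (1 + y ^ 2)⁻¹ ≤ 1 := inv_le_one_of_one_le₀ hp
  have h0 : 0 ≤ (1 + y ^ 2)⁻¹ := by positivity
  have hy : |2 * y| ≤ 1 + y ^ 2 := by rw [abs_le]; constructor <;> nlinarith [sq_nonneg (y - 1), sq_nonneg (y + 1)]
  simp only [norm_mul, norm_Ek, Complex.norm_real, Complex.norm_I, one_mul, mul_one, Real.norm_eq_abs]
  have e1 : |4 * (k : ℝ) * (1 / (1 + y ^ 2))| * |(1 + y ^ 2)⁻¹| ≤ 4 * (k : ℝ) := by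
    rw [abs_of_nonneg (by positivity), abs_of_nonneg (by positivity), one_div, mul_assoc]
    have : (1 + y ^ 2)⁻¹ * (1 + y ^ 2)⁻¹ ≤ 1 := by nlinarith
    have hk : (0:ℝ) ≤ 4 * k := by positivity
    nlinarith
  have e2 : |-(2 * y) / (1 + y ^ 2) ^ 2| ≤ 1 := by
    rw [abs_div, abs_neg, abs_of_nonneg (show 0 ≤ (1 + y ^ 2) ^ 2 by positivity),
      div_le_one (by positivity)]
    nlinarith
  simp only [abs_mul] at e1
  linarith

lemma Pk_lip (k : ℕ) (x y : ℝ) : ‖Pk k y - Pk k x‖ ≤ (4 * k + 1) * ‖y - x‖ :=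
  convex_univ.norm_image_sub_le_of_norm_hasDerivWithin_le
    (fun t _ => (hasDerivAt_Pk k t).hasDerivWithinAt) (fun t _ => norm_deriv_Pk k t)
    (Set.mem_univ _) (Set.mem_univ _)

lemma Qk_taylor {k : ℕ} (hk : k ≠ 0) {x y : ℝ} (hxy : x ≤ y) :
    ‖Qk k y - Qk k x - Pk k y * ((y - x : ℝ) : ℂ)‖ ≤ (4 * k + 1) * (y - x) ^ 2 := by
  have hg : ∀ t : ℝ, HasDerivAt (fun t : ℝ => Qk k t - Pk k y * (t : ℂ)) (Pk k t - Pk k y) t := by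
    intro t
    simpa using (hasDerivAt_Qk hk t).fun_sub ((hasDerivAt_id t).ofReal_comp.const_mul (Pk k y))
  have := (convex_Icc x y).norm_image_sub_le_of_norm_hasDerivWithin_le (C := (4 * k + 1) * (y - x))
    (fun t _ => (hg t).hasDerivWithinAt) (fun t ht => by
      refine (Pk_lip k y t).trans ?_
      rw [Real.norm_eq_abs, abs_of_nonpos (by linarith [ht.2])]
      gcongr
      linarith [ht.1]) (Set.left_mem_Icc.2 hxy) (Set.right_mem_Icc.2 hxy)
  rw [Real.norm_eq_abs, abs_of_nonneg (by linarith)] at this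
  convert! this using 1
  · congr 1; push_cast; ring
  · ring

/-- `arctan 1 - arctan (-1) = π / 2`, so the exponents at the two endpoints differ by a multiple of
`2 π i`. This is what makes the sum over a vertical line of lattice points cancel. -/
lemma Qk_one (k : ℕ) : Qk k 1 = Qk k (-1) := by
  unfold Qk Ek
  rw [Real.arctan_neg, Real.arctan_one]
  congr 1
  rw [Complex.exp_eq_exp_iff_exists_int]
  refine ⟨k, ?_⟩
  push_cast
  ring

lemma sum_Ioc_eq_range {M : Type*} [AddCommMonoid M] (n : ℕ) (f : ℤ → M) :
    ∑ b ∈ Finset.Ioc (-(n : ℤ)) n, f b = ∑ j ∈ Finset.range (2 * n), f ((j : ℤ) + 1 - n) := by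
  symm
  refine Finset.sum_bij (fun j _ => (j : ℤ) + 1 - n) ?_ ?_ ?_ ?_
  · intro j hj; simp only [Finset.mem_range, Finset.mem_Ioc] at *; omega
  · intro a _ b _ h; simp at h; exact h
  · intro b hb
    simp only [Finset.mem_Ioc] at hb
    exact ⟨(b - 1 + n).toNat, by simp only [Finset.mem_range]; omega, by omega⟩
  · intros; rfl

/-- The sums `∑ P_k(b/n)` stay bounded in `n`: they telescope up to a quadratic error. -/
lemma sum_Pk {k : ℕ} (hk : k ≠ 0) {n : ℕ} (hn : n ≠ 0) :
    ‖∑ b ∈ Finset.Ioc (-(n : ℤ)) n, Pk k ((b : ℝ) / n)‖ ≤ 2 * (4 * k + 1) := by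
  have hn0 : (0 : ℝ) < n := by exact_mod_cast Nat.pos_of_ne_zero hn
  have hnC : (n : ℂ) ≠ 0 := by exact_mod_cast hn
  rw [sum_Ioc_eq_range]
  set q : ℕ → ℂ := fun j => Qk k (((j : ℝ) - n) / n) with hq
  have htel : ∑ j ∈ Finset.range (2 * n), (q (j + 1) - q j) = 0 := by
    rw [Finset.sum_range_sub, hq]
    simp only
    rw [show (((2 * n : ℕ) : ℝ) - n) / n = 1 by push_cast; field_simp; ring,
      show (((0 : ℕ) : ℝ) - n) / n = -1 by push_cast; field_simp; ring, Qk_one, sub_self]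
  have hj : ∀ j ∈ Finset.range (2 * n),
      ‖(n : ℂ) * (q (j + 1) - q j) - Pk k ((((j : ℤ) + 1 - n : ℤ) : ℝ) / n)‖ ≤ (4 * k + 1) / n := by
    intro j _
    have h := Qk_taylor hk (x := ((j : ℝ) - n) / n) (y := (((j : ℤ) + 1 - n : ℤ) : ℝ) / n)
      (by gcongr; push_cast; linarith)
    have e : (((j : ℤ) + 1 - n : ℤ) : ℝ) / n - ((j : ℝ) - n) / n = 1 / n := by
      push_cast; field_simp; ring
    rw [e] at h
    have e2 : (n : ℂ) * (q (j + 1) - q j) - Pk k ((((j : ℤ) + 1 - n : ℤ) : ℝ) / n) =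
       n * (Qk k ((((j : ℤ) + 1 - n : ℤ) : ℝ) / n) - Qk k (((j : ℝ) - n) / n) -
        Pk k ((((j : ℤ) + 1 - n : ℤ) : ℝ) / n) * ((1 / n : ℝ) : ℂ)) := by
      rw [hq]; push_cast; field_simp
    rw [e2, norm_mul, Complex.norm_natCast]
    calc (n : ℝ) * _ ≤ n * ((4 * k + 1) * (1 / n) ^ 2) := by gcongr
      _ = _ := by field_simp
  have := norm_sum_le_of_le _ hj
  rw [Finset.sum_sub_distrib, ← Finset.mul_sum, htel, mul_zero, zero_sub, norm_neg] at this
  refine this.trans (le_of_eq ?_)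
  rw [Finset.sum_const, Finset.card_range, nsmul_eq_mul]
  push_cast; field_simp

lemma hf_eq_Ek (k : ℕ) {s : ℝ} {n : ℕ} (hn : n ≠ 0) (b : ℤ) :
    hf k s ⟨n, b⟩ = (((n : ℝ) ^ (-(2 * s)) : ℝ) : ℂ) *
      (Ek k ((b : ℝ) / n) * (((1 + ((b : ℝ) / n) ^ 2) ^ (-s) : ℝ) : ℂ)) := by
  have hn0 : (0 : ℝ) < n := by exact_mod_cast Nat.pos_of_ne_zero hn
  set y : ℝ := (b : ℝ) / n with hy
  have hb : (b : ℝ) = n * y := by rw [hy]; field_simp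
  have hN : (((⟨n, b⟩ : GaussianInt).norm : ℤ) : ℝ) = n ^ 2 * (1 + y ^ 2) := by
    rw [Zsqrtd.norm_def]; push_cast; rw [hb]; ring
  have hnorm : ‖((⟨n, b⟩ : GaussianInt) : ℂ)‖ = n * √(1 + y ^ 2) := by
    rw [← sq_eq_sq₀ (norm_nonneg _) (by positivity), gnorm_sq, hN, mul_pow, Real.sq_sqrt (by positivity)]
  have hz : ((⟨n, b⟩ : GaussianInt) : ℂ) = n * (1 + y * Complex.I) := by
    rw [GaussianInt.toComplex_def]
    have : (b : ℂ) = n * y := by exact_mod_cast congrArg (fun t : ℝ => (t : ℂ)) hb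
    simp only [this]; push_cast; ring
  have hE : Ek k y = ((1 + y * Complex.I) / (√(1 + y ^ 2) : ℝ)) ^ (4 * k) := by
    unfold Ek
    rw [show ((4 * k * Real.arctan y : ℝ) : ℂ) * Complex.I =
      ((4 * k : ℕ) : ℂ) * ((Real.arctan y : ℝ) * Complex.I) by push_cast; ring, Complex.exp_nat_mul,
      Complex.exp_mul_I, ← Complex.ofReal_cos, ← Complex.ofReal_sin, Real.cos_arctan,
      Real.sin_arctan]
    congr 1
    push_cast; ring
  unfold hf psi
  rw [hN, hnorm, hz, hE]
  have hnC : (n : ℂ) ≠ 0 := by exact_mod_cast hn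
  have hs : ((√(1 + y ^ 2) : ℝ) : ℂ) ≠ 0 := by
    exact_mod_cast (Real.sqrt_pos.2 (by positivity)).ne'
  rw [Real.mul_rpow (by positivity) (by positivity), show -(2 * s) = 2 * -s by ring,
    Real.rpow_mul hn0.le, Real.rpow_two]
  push_cast
  rw [mul_div_mul_left _ _ hnC]
  ring

lemma rpow_diff_le {s : ℝ} (hs : 1 < s) {y : ℝ} (hy : y ^ 2 ≤ 1) :
    |(1 + y ^ 2) ^ (-s) - (1 + y ^ 2)⁻¹| ≤ s - 1 := by
  set x : ℝ := 1 + y ^ 2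
  have hx : 1 ≤ x := by nlinarith
  have hx2 : x ≤ 2 := by simp only [x]; linarith
  have e : x ^ (-s) = x⁻¹ * x ^ (-(s - 1)) := by
    rw [show -s = -(s - 1) - 1 by ring, Real.rpow_sub_one (by positivity)]; ring
  have h1 : x ^ (-(s - 1)) ≤ 1 := Real.rpow_le_one_of_one_le_of_nonpos hx (by linarith)
  have h2 : 1 - (s - 1) ≤ x ^ (-(s - 1)) := by
    rw [Real.rpow_def_of_pos (by positivity)]
    have h1 := Real.log_le_sub_one_of_pos (show 0 < x by positivity)
    have h2 := Real.add_one_le_exp (Real.log x * -(s - 1))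
    nlinarith
  have h3 : x⁻¹ ≤ 1 := inv_le_one_of_one_le₀ hx
  have h4 : 0 ≤ x⁻¹ := by positivity
  rw [e, abs_le]
  constructor <;> nlinarith

lemma hfD_in (k : ℕ) (s : ℝ) (a : ℕ) {b : ℤ} (hb : b ∈ Finset.Ioc (-((a : ℤ) + 1)) (a + 1)) :
    hfD k s (jD (a, b)) = hf k s ⟨((a + 1 : ℕ) : ℤ), b⟩ := by
  unfold hfD jD
  rw [if_pos]
  · push_cast; rfl
  · rw [Finset.mem_Ioc] at hb; refine ⟨?_, hb.1, hb.2⟩; simp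

/-- Contribution of one vertical line: the character sum alone is `O(k)`, and replacing the weight
`(1 + (b / n) ^ 2) ^ (-s)` by its value at `s = 1` costs `O((s - 1) n)`. -/
lemma inner_le {k : ℕ} (hk : k ≠ 0) {s : ℝ} (hs : 1 < s) (a : ℕ) :
    ‖∑ b ∈ Finset.Ioc (-((a : ℤ) + 1)) (a + 1), hfD k s (jD (a, b))‖ ≤
      2 * (4 * k + 1) * ((a : ℝ) + 1) ^ (-(2 * s)) +
        2 * (s - 1) * ((a : ℝ) + 1) ^ (-(2 * s - 1)) := by
  rw [Finset.sum_congr rfl (fun b hb => hfD_in k s a hb)]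
  have ha : ((a : ℤ) + 1) = ((a + 1 : ℕ) : ℤ) := by push_cast; rfl
  have ha' : ((a : ℝ) + 1) = ((a + 1 : ℕ) : ℝ) := by push_cast; rfl
  rw [ha, ha']
  set n := a + 1 with hn
  have hn' : n ≠ 0 := by omega
  have hn0 : (0 : ℝ) < n := by exact_mod_cast Nat.pos_of_ne_zero hn'
  rw [Finset.sum_congr rfl (fun b _ => hf_eq_Ek k hn' b), ← Finset.mul_sum, norm_mul,
    Complex.norm_real, Real.norm_eq_abs, abs_of_nonneg (by positivity)]
  have h2 : ‖∑ b ∈ Finset.Ioc (-(n : ℤ)) n, (Ek k ((b : ℝ) / n) *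
      (((1 + ((b : ℝ) / n) ^ 2) ^ (-s) : ℝ) : ℂ) - Pk k ((b : ℝ) / n))‖ ≤ 2 * n * (s - 1) := by
    have := norm_sum_le_of_le (Finset.Ioc (-(n : ℤ)) n) (n := fun _ => s - 1)
      (f := fun b : ℤ => Ek k ((b : ℝ) / n) *
      (((1 + ((b : ℝ) / n) ^ 2) ^ (-s) : ℝ) : ℂ) - Pk k ((b : ℝ) / n)) ?_
    · refine this.trans (le_of_eq ?_)
      rw [Finset.sum_const, nsmul_eq_mul, Int.card_Ioc]
      congr 1
      rw [show ((n : ℤ) - -(n : ℤ)) = ((2 * n : ℕ) : ℤ) by push_cast; ring, Int.toNat_natCast]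
      push_cast; ring
    · intro b hb
      rw [Finset.mem_Ioc] at hb
      unfold Pk
      rw [← mul_sub, norm_mul, norm_Ek, one_mul, ← Complex.ofReal_sub, Complex.norm_real,
        Real.norm_eq_abs]
      apply rpow_diff_le hs
      rw [sq_le_one_iff_abs_le_one, abs_le]
      constructor
      · rw [le_div_iff₀ hn0]; have : (-(n:ℤ) : ℝ) < b := by exact_mod_cast hb.1
        push_cast at this; linarith
      · rw [div_le_one hn0]; exact_mod_cast hb.2
  have h1 := sum_Pk hk hn'
  rw [Finset.sum_sub_distrib] at h2
  have h3 := norm_le_norm_add_norm_sub' (∑ b ∈ Finset.Ioc (-(n : ℤ)) n, Ek k ((b : ℝ) / n) *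
      (((1 + ((b : ℝ) / n) ^ 2) ^ (-s) : ℝ) : ℂ)) (∑ b ∈ Finset.Ioc (-(n : ℤ)) n, Pk k ((b : ℝ) / n))
  have hp : 0 ≤ (n : ℝ) ^ (-(2 * s)) := by positivity
  have e : (n : ℝ) ^ (-(2 * s - 1)) = n * (n : ℝ) ^ (-(2 * s)) := by
    rw [show -(2 * s - 1) = 1 + -(2 * s) by ring, Real.rpow_add hn0, Real.rpow_one]
  rw [e]
  nlinarith

/-- Boundedness of the Hecke series near `s = 1`, with linear dependence on the frequency. -/
lemma Z_le {k : ℕ} (hk : k ≠ 0) {s : ℝ} (hs : 1 < s) (hs2 : s ≤ 2) : Z k s ≤ 27 * k := by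
  have s1 := (summable_shift (t := 2 * s) (by linarith)).mul_left (2 * (4 * (k : ℝ) + 1))
  have s2 := (summable_shift (t := 2 * s - 1) (by linarith)).mul_left (2 * (s - 1))
  have h1 : |Z k s| ≤ ∑' a : ℕ, (2 * (4 * (k : ℝ) + 1) * ((a : ℝ) + 1) ^ (-(2 * s)) +
        2 * (s - 1) * ((a : ℝ) + 1) ^ (-(2 * s - 1))) := by
    rw [← Real.norm_eq_abs, ← Complex.norm_real, ofReal_Z k hs]
    exact tsum_of_norm_bounded (s1.add s2).hasSum fun a => inner_le hk hs a
  rw [s1.tsum_add s2, tsum_mul_left, tsum_mul_left] at h1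
  have h2 := tsum_shift_le (t := 2 * s) (by linarith)
  have h3 := tsum_shift_le (t := 2 * s - 1) (by linarith)
  have h4 : 2 * s / (2 * s - 1) ≤ 2 := by rw [div_le_iff₀ (by linarith)]; linarith
  have h5 : 2 * (s - 1) * ((2 * s - 1) / (2 * s - 1 - 1)) ≤ 3 := by
    have : 0 < s - 1 := by linarith
    rw [show 2 * s - 1 - 1 = 2 * (s - 1) by ring, mul_div_cancel₀ _ (by positivity)]
    linarith
  have h6 : 2 * (s - 1) * ∑' a : ℕ, ((a : ℝ) + 1) ^ (-(2 * s - 1)) ≤ 3 :=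
    (mul_le_mul_of_nonneg_left h3 (by linarith)).trans h5
  have h7 : 2 * (4 * (k : ℝ) + 1) * ∑' a : ℕ, ((a : ℝ) + 1) ^ (-(2 * s)) ≤ 2 * (4 * (k : ℝ) + 1) * 2 :=
    mul_le_mul_of_nonneg_left (h2.trans h4) (by positivity)
  have hk1 : (1 : ℝ) ≤ k := by exact_mod_cast Nat.one_le_iff_ne_zero.2 hk
  linarith [le_abs_self (Z k s)]

/-! ### Harmonic sums of the representation function -/

/-- Each `a ≤ M` contributes the `a` points `(a, b)` with `0 ≤ b < a`, all of norm below
`2 a ^ 2`. -/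
lemma sum_A_zero_ge_harmonic {N M : ℕ} (hM : 2 * M ^ 2 ≤ N) :
    (1 / 8 : ℝ) * ∑ a ∈ Finset.Icc 1 M, (1 : ℝ) / a ≤ ∑ n ∈ Finset.Icc 1 N, A 0 n / n := by
  set P : Finset ((_ : ℕ) × ℕ) := (Finset.Icc 1 M).sigma (fun a => Finset.range a) with hP
  set g : ((_ : ℕ) × ℕ) → ℕ := fun p => p.1 ^ 2 + p.2 ^ 2 with hg
  have hmem : ∀ p ∈ P, (1 ≤ p.1 ∧ p.1 ≤ M) ∧ p.2 < p.1 := by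
    intro p hp
    simpa [hP] using hp
  have hmaps : ∀ p ∈ P, g p ∈ Finset.Icc 1 N := by
    intro p hp
    obtain ⟨⟨h1, h2⟩, h3⟩ := hmem p hp
    simp only [hg, Finset.mem_Icc]
    constructor <;> nlinarith
  have h1 : ∑ p ∈ P, (1 : ℝ) / g p = ∑ n ∈ Finset.Icc 1 N, ∑ p ∈ P with g p = n, (1 : ℝ) / g p :=
    (Finset.sum_fiberwise_of_maps_to hmaps _).symm
  have h2 : ∀ n ∈ Finset.Icc 1 N, ∑ p ∈ P with g p = n, (1 : ℝ) / g p ≤ 4 * (A 0 n / n) := by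
    intro n _
    rw [Finset.sum_congr rfl (g := fun _ => (1 : ℝ) / n)
      (fun p hp => by rw [(Finset.mem_filter.1 hp).2]), Finset.sum_const, nsmul_eq_mul, A_zero_eq]
    have : (P.filter fun p => g p = n).card ≤ (gset n).card := by
      apply Finset.card_le_card_of_injOn (fun p => (⟨p.1, p.2⟩ : GaussianInt))
      · intro p hp
        have := (Finset.mem_filter.1 hp).2
        simp only [Finset.mem_coe, mem_gset, Zsqrtd.norm_def, ← this, hg]
        push_cast; ring
      · rintro ⟨a, b⟩ _ ⟨c, d⟩ _ h
        simp only [Zsqrtd.ext_iff, Nat.cast_inj] at h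
        simp [h.1, h.2]
    have h4 : ((P.filter fun p => g p = n).card : ℝ) ≤ (gset n).card := by exact_mod_cast this
    calc _ ≤ ((gset n).card : ℝ) * (1 / n) := by gcongr
      _ = _ := by ring
  have h3 : ∑ a ∈ Finset.Icc 1 M, (1 / 2 : ℝ) * (1 / a) ≤ ∑ p ∈ P, (1 : ℝ) / g p := by
    rw [hP, Finset.sum_sigma]
    refine Finset.sum_le_sum fun a ha => ?_
    have ha1 : 1 ≤ a := (Finset.mem_Icc.1 ha).1
    have ha0 : (0 : ℝ) < a := by exact_mod_cast ha1
    calc (1 / 2 : ℝ) * (1 / a) = ∑ b ∈ Finset.range a, (1 : ℝ) / (2 * a ^ 2) := by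
          rw [Finset.sum_const, Finset.card_range, nsmul_eq_mul]; field_simp
      _ ≤ _ := by
          refine Finset.sum_le_sum fun b hb => ?_
          have hb' : (b : ℝ) ≤ a := by exact_mod_cast (Finset.mem_range.1 hb).le
          simp only [hg]
          push_cast
          apply one_div_le_one_div_of_le
          · positivity
          · nlinarith [show (0 : ℝ) ≤ b by positivity]
  rw [← Finset.mul_sum] at h3
  have h4 := Finset.sum_le_sum h2
  rw [← h1, ← Finset.mul_sum] at h4
  linarith

/-- Logarithmic growth of the harmonic sums of the representation function. -/
lemma sum_A_zero_ge {N : ℕ} (hN : 4 ≤ N) :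
    (1 / 32 : ℝ) * Real.log N ≤ ∑ n ∈ Finset.Icc 1 N, A 0 n / n := by
  set M := Nat.sqrt (N / 2) with hM
  have h1 : 2 * M ^ 2 ≤ N := by
    have := Nat.sqrt_le' (N / 2)
    rw [← hM] at this
    omega
  refine le_trans ?_ (sum_A_zero_ge_harmonic h1)
  have h2 := log_add_one_le_harmonic M
  have h3 : ((harmonic M : ℚ) : ℝ) = ∑ a ∈ Finset.Icc 1 M, (1 : ℝ) / a := by
    rw [harmonic_eq_sum_Icc]; push_cast; simp
  rw [h3] at h2
  have h4 : N < 2 * (M + 1) ^ 2 := by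
    have := Nat.lt_succ_sqrt' (N / 2)
    rw [← hM] at this
    simp only [Nat.succ_eq_add_one] at this
    omega
  have h5 : (N : ℝ) ≤ 2 * ((M : ℝ) + 1) ^ 2 := by exact_mod_cast h4.le
  have hN' : (4 : ℝ) ≤ N := by exact_mod_cast hN
  have h6 : Real.log N ≤ Real.log 2 + 2 * Real.log ((M : ℝ) + 1) := by
    have := Real.log_le_log (by linarith) h5
    rwa [Real.log_mul (by norm_num) (by positivity), Real.log_pow] at this
  have h7 : 2 * Real.log 2 ≤ Real.log N := by
    rw [show 2 * Real.log 2 = Real.log 4 by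
      rw [show (4 : ℝ) = 2 ^ 2 by norm_num, Real.log_pow]; norm_num]
    exact Real.log_le_log (by norm_num) hN'
  push_cast at h2
  linarith

/-! ### Euler products and the normalized squared Weyl sums -/

/-- The squared `4k`-th Fourier coefficient of the lattice points of norm `n`. -/
def fk (k n : ℕ) : ℝ := (A k n / A 0 n) ^ 2

lemma fk_nonneg (k n : ℕ) : 0 ≤ fk k n := sq_nonneg _

lemma fk_le_one (k : ℕ) {n : ℕ} (hn : n ≠ 0) : fk k n ≤ 1 := by
  unfold fk
  rw [sq_le_one_iff_abs_le_one, abs_div, abs_of_nonneg (A_zero_nonneg n)]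
  exact div_le_one_of_le₀ (abs_A_le k hn) (A_zero_nonneg n)

lemma fk_one (k : ℕ) : fk k 1 = 1 := by unfold fk; simp [A_one]

lemma fk_mul (k : ℕ) {m n : ℕ} (h : m.Coprime n) : fk k (m * n) = fk k m * fk k n := by
  rcases eq_or_ne m 0 with rfl | hm
  · rw [Nat.coprime_zero_left] at h; subst h; rw [fk_one, mul_one, mul_one]
  rcases eq_or_ne n 0 with rfl | hn
  · rw [Nat.coprime_zero_right] at h; subst h; rw [fk_one, one_mul, one_mul]
  unfold fk
  rw [A_mul k h hm hn, A_mul 0 h hm hn, mul_div_mul_comm, mul_pow]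

lemma summable_fk (k : ℕ) {s : ℝ} (hs : 1 < s) : Summable fun n : ℕ => fk k n * (n : ℝ) ^ (-s) := by
  refine Summable.of_nonneg_of_le (fun n => mul_nonneg (fk_nonneg k n) (by positivity)) (fun n => ?_)
    (Real.summable_nat_rpow.2 (show -s < -1 by linarith))
  rcases eq_or_ne n 0 with rfl | hn
  · rw [Nat.cast_zero, Real.zero_rpow (by linarith), mul_zero]
  · have := mul_le_mul_of_nonneg_right (fk_le_one k hn) (show 0 ≤ (n : ℝ) ^ (-s) by positivity)
    linarith

lemma summable_norm_A (k : ℕ) {s : ℝ} (hs : 1 < s) :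
    Summable fun n : ℕ => ‖A k n * (n : ℝ) ^ (-s)‖ := by
  refine Summable.of_nonneg_of_le (fun n => norm_nonneg _) (fun n => ?_) (summable_A 0 hs)
  rcases eq_or_ne n 0 with rfl | hn
  · rw [Nat.cast_zero, Real.zero_rpow (by linarith), mul_zero, mul_zero, norm_zero]
  · rw [norm_mul, Real.norm_eq_abs, Real.norm_eq_abs, abs_of_nonneg (show 0 ≤ (n : ℝ) ^ (-s) by positivity)]
    exact mul_le_mul_of_nonneg_right (abs_A_le k hn) (by positivity)

lemma prime_pow_rpow (p e : ℕ) (s : ℝ) : ((p ^ e : ℕ) : ℝ) ^ (-s) = ((p : ℝ) ^ (-s)) ^ e := by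
  rw [Nat.cast_pow, ← Real.rpow_natCast, ← Real.rpow_mul (by positivity), mul_comm,
    Real.rpow_mul (by positivity), Real.rpow_natCast]

lemma tendsto_fk (k : ℕ) {s : ℝ} (hs : 1 < s) :
    Tendsto (fun n : ℕ => ∏ p ∈ n.primesBelow, ∑' e : ℕ, fk k (p ^ e) * ((p : ℝ) ^ (-s)) ^ e) atTop
      (nhds (∑' n : ℕ, fk k n * (n : ℝ) ^ (-s))) := by
  have := EulerProduct.eulerProduct (f := fun n : ℕ => fk k n * (n : ℝ) ^ (-s))
    (by simp [fk_one]) (fun {m n} h => by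
      rw [fk_mul k h, Nat.cast_mul, Real.mul_rpow (by positivity) (by positivity)]; ring)
    (summable_fk k hs).norm (by simp [Real.zero_rpow (show -s ≠ 0 by linarith)])
  simpa only [prime_pow_rpow] using this

lemma tendsto_A (k : ℕ) {s : ℝ} (hs : 1 < s) :
    Tendsto (fun n : ℕ => ∏ p ∈ n.primesBelow, ∑' e : ℕ, A k (p ^ e) * ((p : ℝ) ^ (-s)) ^ e) atTop
      (nhds (Z k s)) := by
  have := EulerProduct.eulerProduct (f := fun n : ℕ => A k n * (n : ℝ) ^ (-s))
    (by simp [A_one]) (fun {m n} h => by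
      have h0 : (0 : ℝ) ^ (-s) = 0 := Real.zero_rpow (by linarith)
      rcases eq_or_ne m 0 with rfl | hm
      · simp [h0]
      rcases eq_or_ne n 0 with rfl | hn
      · simp [h0]
      rw [A_mul k h hm hn, Nat.cast_mul, Real.mul_rpow (by positivity) (by positivity)]; ring)
    (summable_norm_A k hs) (by simp [Real.zero_rpow (show -s ≠ 0 by linarith)])
  simp only [prime_pow_rpow] at this
  exact this

lemma summable_A_prime (k : ℕ) {s : ℝ} (hs : 1 < s) {p : ℕ} (hp : p.Prime) :
    Summable fun e : ℕ => A k (p ^ e) * ((p : ℝ) ^ (-s)) ^ e := by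
  have := (summable_norm_A k hs).of_norm.comp_injective (Nat.pow_right_injective hp.two_le)
  refine this.congr fun e => ?_
  simp only [Function.comp, prime_pow_rpow]

lemma summable_fk_prime (k : ℕ) {s : ℝ} (hs : 1 < s) {p : ℕ} (hp : p.Prime) :
    Summable fun e : ℕ => fk k (p ^ e) * ((p : ℝ) ^ (-s)) ^ e := by
  have := (summable_fk k hs).comp_injective (Nat.pow_right_injective hp.two_le)
  refine this.congr fun e => ?_
  simp only [Function.comp, prime_pow_rpow]

lemma prime_rpow_bounds {s : ℝ} (hs : 1 < s) {p : ℕ} (hp : p.Prime) :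
    0 < (p : ℝ) ^ (-s) ∧ (p : ℝ) ^ (-s) ≤ 1 / 2 := by
  have hp0 : (0 : ℝ) < p := by exact_mod_cast hp.pos
  have hp2 : (2 : ℝ) ≤ p := by exact_mod_cast hp.two_le
  refine ⟨by positivity, ?_⟩
  calc (p : ℝ) ^ (-s) ≤ (p : ℝ) ^ (-1 : ℝ) :=
        Real.rpow_le_rpow_of_exponent_le (by linarith) (by linarith)
    _ = (p : ℝ)⁻¹ := Real.rpow_neg_one _
    _ ≤ 1 / 2 := by rw [one_div]; exact inv_anti₀ (by norm_num) hp2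

/-- Since `0 ≤ fk ≤ 1`, only the prime itself contributes to first order. -/
lemma factor_fk_le (k : ℕ) {s : ℝ} (hs : 1 < s) {p : ℕ} (hp : p.Prime) :
    ∑' e : ℕ, fk k (p ^ e) * ((p : ℝ) ^ (-s)) ^ e ≤
      Real.exp (fk k p * (p : ℝ) ^ (-s) + 2 * ((p : ℝ) ^ (-s)) ^ 2) := by
  obtain ⟨hx0, hx1⟩ := prime_rpow_bounds hs hp
  have hsum := summable_fk_prime k hs hp
  set x := (p : ℝ) ^ (-s)
  rw [← hsum.sum_add_tsum_nat_add 2, Finset.sum_range_succ, Finset.sum_range_one]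
  have hg : Summable fun e : ℕ => x ^ 2 * x ^ e :=
    (summable_geometric_of_lt_one hx0.le (by linarith)).mul_left _
  have h1 : ∑' e : ℕ, fk k (p ^ (e + 2)) * x ^ (e + 2) ≤ ∑' e : ℕ, x ^ 2 * x ^ e := by
    refine ((summable_nat_add_iff 2).2 hsum).tsum_le_tsum (fun e => ?_) hg
    rw [pow_add x, mul_comm (x ^ e)]
    have := fk_le_one k (pow_ne_zero (e + 2) hp.ne_zero)
    have h2 : 0 ≤ x ^ 2 * x ^ e := by positivity
    nlinarith
  rw [tsum_mul_left, tsum_geometric_of_lt_one hx0.le (by linarith)] at h1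
  have h2 : (1 - x)⁻¹ ≤ 2 := by
    rw [inv_le_comm₀ (by linarith) (by norm_num)]; linarith
  have h3 : x ^ 2 * (1 - x)⁻¹ ≤ x ^ 2 * 2 := by gcongr
  have h4 := Real.add_one_le_exp (fk k p * x + 2 * x ^ 2)
  simp only [pow_zero, pow_one, fk_one, mul_one]
  linarith

/-- First order lower bound for an Euler factor of the Hecke series at a split prime. -/
lemma factor_A_split (k : ℕ) {s : ℝ} (hs : 1 < s) {p : ℕ} (hp : p.Prime) (h4 : p % 4 = 1) :
    Real.exp (A k p * (p : ℝ) ^ (-s) - ((p : ℝ) ^ (-s)) ^ 2) ≤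
      ∑' e : ℕ, A k (p ^ e) * ((p : ℝ) ^ (-s)) ^ e := by
  obtain ⟨hx0, hx1⟩ := prime_rpow_bounds hs hp
  have hsum := summable_A_prime k hs hp
  set x := (p : ℝ) ^ (-s)
  set G := ∑' e : ℕ, A k (p ^ e) * x ^ e with hG
  have e1 : G = 1 + ∑' e : ℕ, A k (p ^ (e + 1)) * x ^ (e + 1) := by
    rw [hG, hsum.tsum_eq_zero_add]; simp [A_one]
  have e2 : G = 1 + A k p * x + ∑' e : ℕ, A k (p ^ (e + 2)) * x ^ (e + 2) := by
    rw [hG, ← hsum.sum_add_tsum_nat_add 2, Finset.sum_range_succ, Finset.sum_range_one]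
    simp [A_one]
  have s1 := (summable_nat_add_iff 1).2 hsum
  have e3 : ∑' e : ℕ, A k (p ^ (e + 2)) * x ^ (e + 2) = A k p * x * (G - 1) - x ^ 2 * G := by
    rw [show G - 1 = ∑' e : ℕ, A k (p ^ (e + 1)) * x ^ (e + 1) by linarith, hG, ← tsum_mul_left,
      ← tsum_mul_left, ← (s1.mul_left _).tsum_sub (hsum.mul_left _)]
    congr 1; ext e
    rw [A_split_rec hp h4]; ring
  have hrel : G * (1 - A k p * x + x ^ 2) = 1 := by rw [e3] at e2; linarith
  have hle : 1 - A k p * x + x ^ 2 ≤ Real.exp (-(A k p * x - x ^ 2)) := by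
    have := Real.add_one_le_exp (-(A k p * x - x ^ 2)); linarith
  have hpos : 0 < 1 - A k p * x + x ^ 2 := by
    have h1 := abs_A_le k hp.ne_zero
    rw [A_split_zero hp h4] at h1
    have h2 := (abs_le.1 h1).2
    nlinarith
  have hGpos : 0 < G := by
    by_contra h
    push Not at h
    nlinarith
  rw [Real.exp_neg] at hle
  have h5 : 1 ≤ G * (Real.exp (A k p * x - x ^ 2))⁻¹ := by
    rw [← hrel]; gcongr
  rwa [← div_eq_mul_inv, one_le_div (Real.exp_pos _)] at h5

lemma factor_A_ge_one (k : ℕ) {s : ℝ} (hs : 1 < s) {p : ℕ} (hp : p.Prime)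
    (h : ∀ e, 0 ≤ A k (p ^ e)) : 1 ≤ ∑' e : ℕ, A k (p ^ e) * ((p : ℝ) ^ (-s)) ^ e := by
  have := (summable_A_prime k hs hp).le_tsum 0 (fun e _ => mul_nonneg (h e) (by positivity))
  simpa [A_one] using this

/-- The local comparison `F_p⁴ ≤ Z₀,p Z₂ₖ,p (1 + O(p^{-2s}))`. -/
lemma local_compare (k : ℕ) {s : ℝ} (hs : 1 < s) (hs2 : s ≤ 2) {p : ℕ} (hp : p.Prime) :
    (∑' e : ℕ, fk k (p ^ e) * ((p : ℝ) ^ (-s)) ^ e) ^ 4 ≤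
      (∑' e : ℕ, A 0 (p ^ e) * ((p : ℝ) ^ (-s)) ^ e) *
      (∑' e : ℕ, A (2 * k) (p ^ e) * ((p : ℝ) ^ (-s)) ^ e) *
        Real.exp (24 * ((p : ℝ) ^ (-s)) ^ 2) := by
  have hF0 : 0 ≤ ∑' e : ℕ, fk k (p ^ e) * ((p : ℝ) ^ (-s)) ^ e :=
    tsum_nonneg fun e => mul_nonneg (fk_nonneg _ _) (by positivity)
  have hF := pow_le_pow_left₀ hF0 (factor_fk_le k hs hp) 4
  refine hF.trans ?_
  rw [← Real.exp_nat_mul]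
  obtain ⟨hx0, hx1⟩ := prime_rpow_bounds hs hp
  rcases hp.eq_two_or_odd with h2 | hodd
  · have hz : ∀ j e, 0 ≤ A (2 * j) (p ^ e) := fun j e => by rw [h2, A_two_pow]; norm_num
    have g0 := factor_A_ge_one 0 hs hp (hz 0)
    have g1 := factor_A_ge_one (2 * k) hs hp (hz k)
    have hq : 1 / 4 ≤ (p : ℝ) ^ (-s) := by
      rw [h2]
      calc (1 / 4 : ℝ) = ((2 : ℕ) : ℝ) ^ (-2 : ℝ) := by norm_num
        _ ≤ _ := Real.rpow_le_rpow_of_exponent_le (by norm_num) (by linarith)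
    have hf1 := fk_le_one k hp.ne_zero
    have hle : Real.exp ((4 : ℕ) * (fk k p * (p : ℝ) ^ (-s) + 2 * ((p : ℝ) ^ (-s)) ^ 2)) ≤
        Real.exp (24 * ((p : ℝ) ^ (-s)) ^ 2) := by
      apply Real.exp_le_exp.2
      push_cast
      nlinarith
    refine hle.trans (le_mul_of_one_le_left (Real.exp_pos _).le ?_)
    nlinarith
  · have hcases : p % 4 = 1 ∨ p % 4 = 3 := by omega
    rcases hcases with h4 | h4
    · have g0 := factor_A_split 0 hs hp h4
      have g1 := factor_A_split (2 * k) hs hp h4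
      have hsq := A_split_sq hp h4 k
      have hfk : 4 * fk k p = 2 + A (2 * k) p := by
        unfold fk; rw [A_split_zero hp h4, div_pow, hsq]; ring
      have g2 := mul_le_mul g0 g1 (Real.exp_pos _).le ((Real.exp_pos _).le.trans g0)
      refine le_trans ?_ (mul_le_mul_of_nonneg_right g2 (Real.exp_pos _).le)
      rw [← Real.exp_add, ← Real.exp_add, A_split_zero hp h4]
      apply Real.exp_le_exp.2
      push_cast
      nlinarith
    · have hz : ∀ j e, 0 ≤ A j (p ^ e) := fun j e => (A_inert_nonneg hp h4 j e).1
      have g0 := factor_A_ge_one 0 hs hp (hz 0)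
      have g1 := factor_A_ge_one (2 * k) hs hp (hz (2 * k))
      have hfk : fk k p = 0 := by unfold fk; rw [A_inert_one hp h4]; simp
      have hle : Real.exp ((4 : ℕ) * (fk k p * (p : ℝ) ^ (-s) + 2 * ((p : ℝ) ^ (-s)) ^ 2)) ≤
          Real.exp (24 * ((p : ℝ) ^ (-s)) ^ 2) := by
        apply Real.exp_le_exp.2
        push_cast
        rw [hfk]
        nlinarith
      refine hle.trans (le_mul_of_one_le_left (Real.exp_pos _).le ?_)
      nlinarith

lemma sum_primes_sq_le {s : ℝ} (hs : 1 < s) (n : ℕ) :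
    ∑ p ∈ n.primesBelow, 24 * ((p : ℝ) ^ (-s)) ^ 2 ≤ 48 := by
  rw [← Finset.mul_sum]
  have h1 : ∑ p ∈ n.primesBelow, ((p : ℝ) ^ (-s)) ^ 2 ≤
      ∑ a ∈ Finset.range n, ((a : ℝ) + 1) ^ (-(2 * s)) := by
    have hsub : n.primesBelow ⊆ (Finset.range n).image (fun a => a + 1) := by
      intro p hp
      have h1 := Nat.lt_of_mem_primesBelow hp
      have h2 := (Nat.prime_of_mem_primesBelow hp).pos
      rw [Finset.mem_image]
      exact ⟨p - 1, by rw [Finset.mem_range]; omega, by omega⟩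
    refine (Finset.sum_le_sum_of_subset_of_nonneg hsub fun _ _ _ => by positivity).trans ?_
    rw [Finset.sum_image (by intro a _ b _ h; simpa using h)]
    refine Finset.sum_le_sum fun a _ => le_of_eq ?_
    rw [← Real.rpow_natCast, ← Real.rpow_mul (by positivity)]
    push_cast
    congr 1; ring
  have h2 := (summable_shift (t := 2 * s) (by linarith)).sum_le_tsum (Finset.range n)
    (fun _ _ => by positivity)
  have h3 := tsum_shift_le (t := 2 * s) (by linarith)
  have h4 : 2 * s / (2 * s - 1) ≤ 2 := by rw [div_le_iff₀ (by linarith)]; linarith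
  linarith

/-- Bound for the Dirichlet series of `fk` near `s = 1`; the exponent `1/4` reflects that
`fk k p` is `1/2` on average over the split primes, which have density `1/2`. -/
lemma tsum_fk_le {k : ℕ} (hk : k ≠ 0) {s : ℝ} (hs : 1 < s) (hs2 : s ≤ 2) :
    (∑' n : ℕ, fk k n * (n : ℝ) ^ (-s)) ^ 4 ≤ 162 * Real.exp 48 * k / (s - 1) := by
  have h1 := (tendsto_fk k hs).pow 4
  have h2 := (((tendsto_A 0 hs).mul (tendsto_A (2 * k) hs)).mul_const (Real.exp 48))
  have h3 : (∑' n : ℕ, fk k n * (n : ℝ) ^ (-s)) ^ 4 ≤ Z 0 s * Z (2 * k) s * Real.exp 48 := by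
    refine le_of_tendsto_of_tendsto' h1 h2 fun n => ?_
    rw [← Finset.prod_pow, ← Finset.prod_mul_distrib]
    have hF0 : ∀ p : ℕ, 0 ≤ ∑' e : ℕ, fk k (p ^ e) * ((p : ℝ) ^ (-s)) ^ e := fun p =>
      tsum_nonneg fun e => mul_nonneg (fk_nonneg _ _) (by positivity)
    have hle := Finset.prod_le_prod (s := n.primesBelow) (fun p _ => pow_nonneg (hF0 p) 4)
      (fun p hp => local_compare k hs hs2 (Nat.prime_of_mem_primesBelow hp))
    refine hle.trans ?_
    rw [Finset.prod_mul_distrib, ← Real.exp_sum]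
    refine mul_le_mul_of_nonneg_left (Real.exp_le_exp.2 (sum_primes_sq_le hs n)) ?_
    refine Finset.prod_nonneg fun p hp => ?_
    have := local_compare k hs hs2 (Nat.prime_of_mem_primesBelow hp)
    have h5 := (pow_nonneg (hF0 p) 4).trans this
    exact nonneg_of_mul_nonneg_left h5 (Real.exp_pos _)
  have hz0 := Z_zero_le hs hs2
  have hz1 := Z_le (k := 2 * k) (by omega) hs hs2
  push_cast at hz1
  have hz2 : 0 ≤ Z 0 s := tsum_nonneg fun n => mul_nonneg (A_zero_nonneg n) (by positivity)
  have hs1 : 0 < s - 1 := by linarith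
  calc _ ≤ Z 0 s * Z (2 * k) s * Real.exp 48 := h3
    _ ≤ Z 0 s * (27 * (2 * k)) * Real.exp 48 := by gcongr
    _ ≤ 3 / (s - 1) * (27 * (2 * k)) * Real.exp 48 := by gcongr
    _ = _ := by ring

/-! ### Mean values of the normalized squared Weyl sums -/

/-- `log q` on prime powers `q`, and zero elsewhere. -/
def Lpp (q : ℕ) : ℝ := if IsPrimePow q then Real.log q else 0

lemma Lpp_nonneg (q : ℕ) : 0 ≤ Lpp q := by
  unfold Lpp; split_ifs
  · exact Real.log_natCast_nonneg q
  · exact le_rfl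

lemma Lpp_le {q n : ℕ} (h1 : 1 ≤ q) (hq : q ≤ n) : Lpp q ≤ (if q.Prime then Real.log q else 0) +
    Real.log n / Real.log 2 * (if ¬ q.Prime then ArithmeticFunction.vonMangoldt q else 0) := by
  have hl2 : 0 < Real.log 2 := Real.log_pos (by norm_num)
  have hln : Real.log q ≤ Real.log n :=
    Real.log_le_log (by exact_mod_cast h1) (by exact_mod_cast hq)
  have hn0 := Real.log_natCast_nonneg n
  unfold Lpp
  by_cases hp : q.Prime
  · simp [hp, hp.isPrimePow]
  · simp only [hp, if_false, not_false_eq_true, if_true, zero_add]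
    split_ifs with h
    · rw [ArithmeticFunction.vonMangoldt_apply, if_pos h]
      have h2 : (2 : ℝ) ≤ q.minFac := by
        exact_mod_cast (Nat.minFac_prime h.ne_one).two_le
      have h3 := Real.log_le_log (by norm_num) h2
      calc Real.log q ≤ Real.log n := hln
        _ = Real.log n / Real.log 2 * Real.log 2 := by field_simp
        _ ≤ _ := by gcongr
    · exact mul_nonneg (by positivity) ArithmeticFunction.vonMangoldt_nonneg

/-- A Chebyshev bound for the sum of `log q` over prime powers. -/
lemma sum_Lpp_le {n : ℕ} (hn : 1 ≤ n) : ∑ q ∈ Finset.Icc 1 n, Lpp q ≤ 50 * n := by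
  have hn1 : (1 : ℝ) ≤ n := by exact_mod_cast hn
  have h1 := Finset.sum_le_sum fun q hq =>
    Lpp_le (n := n) (Finset.mem_Icc.1 hq).1 (Finset.mem_Icc.1 hq).2
  rw [Finset.sum_add_distrib, ← Finset.mul_sum, ← Finset.sum_filter, ← Finset.sum_filter] at h1
  have e : Finset.Icc 1 n = Finset.Ioc 0 ⌊(n : ℝ)⌋₊ := by
    rw [Nat.floor_natCast]; rfl
  have hth := Chebyshev.theta_le_log4_mul_x (x := n) (by positivity)
  have hps := Chebyshev.psi_sub_theta_le hn1
  rw [Chebyshev.psi_sub_theta_eq_sum_not_prime, ← e] at hps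
  unfold Chebyshev.theta at hth
  rw [← e] at hth
  have hl2 : 0.69 < Real.log 2 := by linarith [Real.log_two_gt_d9]
  have hl2' : Real.log 2 < 0.7 := by linarith [Real.log_two_lt_d9]
  have hl4 : Real.log 4 < 1.4 := by
    rw [show (4 : ℝ) = 2 ^ 2 by norm_num, Real.log_pow]; push_cast; linarith
  have hlog : Real.log n ≤ 4 * (n : ℝ) ^ (1 / 4 : ℝ) := by
    have := Real.log_le_rpow_div (x := n) (ε := 1 / 4) (by positivity) (by norm_num)
    linarith
  have hlog0 := Real.log_natCast_nonneg n
  have hsq : Real.log n ^ 2 * √n ≤ 16 * n := by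
    calc Real.log n ^ 2 * √(n : ℝ) ≤ (4 * (n : ℝ) ^ (1 / 4 : ℝ)) ^ 2 * √(n : ℝ) := by gcongr
      _ = 16 * (((n : ℝ) ^ (1 / 4 : ℝ)) ^ (2 : ℕ) * (n : ℝ) ^ (1 / 2 : ℝ)) := by
        rw [Real.sqrt_eq_rpow]; ring
      _ = 16 * n := by
        rw [← Real.rpow_natCast, ← Real.rpow_mul (by positivity), ← Real.rpow_add (by positivity)]
        norm_num
  have h2 : Real.log n / Real.log 2 * (2 * √n * Real.log n) ≤ 47 * n := by
    rw [div_mul_eq_mul_div, div_le_iff₀ (by linarith)]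
    nlinarith
  have h3 := mul_le_mul_of_nonneg_left hps (show 0 ≤ Real.log n / Real.log 2 by positivity)
  nlinarith

lemma log_eq_sum_primeFactors (m : ℕ) :
    Real.log m = ∑ p ∈ m.primeFactors, Real.log ((p ^ m.factorization p : ℕ) : ℝ) := by
  rw [Real.log_nat_eq_sum_factorization, Finsupp.sum, Nat.support_factorization]
  refine Finset.sum_congr rfl fun p _ => ?_
  push_cast
  rw [Real.log_pow]

/-- The key inequality of the Hall–Tenenbaum bound for sums of multiplicative functions. -/
lemma sum_fk_log_le (k N : ℕ) :
    ∑ m ∈ Finset.Icc 1 N, fk k m * Real.log m ≤ 50 * N * ∑ n ∈ Finset.Icc 1 N, fk k n / n := by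
  set P : Finset ((_ : ℕ) × ℕ) := (Finset.Icc 1 N).sigma (fun m => m.primeFactors)
  set Q : Finset ((_ : ℕ) × ℕ) := (Finset.Icc 1 N).sigma (fun n => Finset.Icc 1 (N / n))
  set φ : ((_ : ℕ) × ℕ) → ((_ : ℕ) × ℕ) :=
    fun x => ⟨x.1 / x.2 ^ x.1.factorization x.2, x.2 ^ x.1.factorization x.2⟩ with hφ
  have hP : ∀ x ∈ P, (1 ≤ x.1 ∧ x.1 ≤ N) ∧ x.2.Prime ∧ x.2 ∣ x.1 := by
    intro x hx
    simp only [P, Finset.mem_sigma, Finset.mem_Icc, Nat.mem_primeFactors] at hx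
    exact ⟨hx.1, hx.2.1, hx.2.2.1⟩
  have hv : ∀ x ∈ P, x.1.factorization x.2 ≠ 0 := by
    intro x hx
    obtain ⟨h1, h2, h3⟩ := hP x hx
    exact (h2.factorization_pos_of_dvd (by omega) h3).ne'
  have h1 : ∑ m ∈ Finset.Icc 1 N, fk k m * Real.log m ≤
      ∑ x ∈ P, fk k (φ x).1 * Lpp (φ x).2 := by
    rw [Finset.sum_congr rfl (fun m _ => by rw [log_eq_sum_primeFactors m, Finset.mul_sum]),
      Finset.sum_sigma']
    refine Finset.sum_le_sum fun x hx => ?_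
    obtain ⟨h1, h2, h3⟩ := hP x hx
    have hpp : IsPrimePow (x.2 ^ x.1.factorization x.2) := h2.isPrimePow.pow (hv x hx)
    simp only [hφ, Lpp, if_pos hpp]
    refine mul_le_mul_of_nonneg_right ?_ (Real.log_natCast_nonneg _)
    have hc : (x.2 ^ x.1.factorization x.2).Coprime (x.1 / x.2 ^ x.1.factorization x.2) :=
      (Nat.coprime_ordCompl h2 (by omega)).pow_left _
    have e := fk_mul k hc
    rw [Nat.ordProj_mul_ordCompl_eq_self] at e
    rw [e]
    exact mul_le_of_le_one_left (fk_nonneg _ _) (fk_le_one k (pow_ne_zero _ h2.ne_zero))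
  have hinj : Set.InjOn φ P := by
    intro x hx y hy h
    obtain ⟨_, hx2, _⟩ := hP x hx
    obtain ⟨_, hy2, _⟩ := hP y hy
    obtain ⟨m, p⟩ := x
    obtain ⟨m', p'⟩ := y
    simp only [hφ, Sigma.mk.injEq, heq_eq_eq] at h
    have ep : p = p' := by
      have e1 := hx2.pow_minFac (hv _ hx)
      have e2 := hy2.pow_minFac (hv _ hy)
      simp only at e1 e2
      rw [← e1, ← e2]
      simp only [h.2]
    have em : m = m' := by
      rw [← Nat.ordProj_mul_ordCompl_eq_self m p, ← Nat.ordProj_mul_ordCompl_eq_self m' p', h.1, h.2]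
    rw [ep, em]
  have hmaps : P.image φ ⊆ Q := by
    intro y hy
    obtain ⟨x, hx, rfl⟩ := Finset.mem_image.1 hy
    obtain ⟨h1, h2, h3⟩ := hP x hx
    have hq : 0 < x.2 ^ x.1.factorization x.2 := pow_pos h2.pos _
    have e := Nat.ordProj_mul_ordCompl_eq_self x.1 x.2
    have hn : 0 < x.1 / x.2 ^ x.1.factorization x.2 := Nat.ordCompl_pos _ (by omega)
    simp only [Q, hφ, Finset.mem_sigma, Finset.mem_Icc]
    refine ⟨⟨hn, (Nat.div_le_self _ _).trans h1.2⟩, hq, ?_⟩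
    rw [Nat.le_div_iff_mul_le hn, e]
    exact h1.2
  have h2 : ∑ x ∈ P, fk k (φ x).1 * Lpp (φ x).2 ≤ ∑ y ∈ Q, fk k y.1 * Lpp y.2 := by
    rw [← Finset.sum_image (f := fun y : ((_ : ℕ) × ℕ) => fk k y.1 * Lpp y.2) hinj]
    exact Finset.sum_le_sum_of_subset_of_nonneg hmaps
      fun _ _ _ => mul_nonneg (fk_nonneg _ _) (Lpp_nonneg _)
  refine h1.trans (h2.trans ?_)
  rw [Finset.sum_sigma, Finset.mul_sum]
  refine Finset.sum_le_sum fun n hn => ?_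
  obtain ⟨hn1, hn2⟩ := Finset.mem_Icc.1 hn
  simp only
  rw [← Finset.mul_sum]
  have h5 := sum_Lpp_le (n := N / n) (Nat.div_pos hn2 hn1)
  have h6 : ((N / n : ℕ) : ℝ) ≤ N / n := Nat.cast_div_le
  calc fk k n * _ ≤ fk k n * (50 * (N / n)) :=
        mul_le_mul_of_nonneg_left (h5.trans (by linarith)) (fk_nonneg k n)
    _ = _ := by ring

/-- A mean value is bounded by a logarithmic mean: replace `log m` by `log N` in `sum_fk_log_le`,
using `log (N / m) ≤ N / m`. -/
lemma sum_fk_mul_log_le (k N : ℕ) :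
    Real.log N * ∑ m ∈ Finset.Icc 1 N, fk k m ≤ 51 * N * ∑ n ∈ Finset.Icc 1 N, fk k n / n := by
  have h1 := sum_fk_log_le k N
  have h2 : ∑ m ∈ Finset.Icc 1 N, fk k m * (Real.log N - Real.log m) ≤
      N * ∑ n ∈ Finset.Icc 1 N, fk k n / n := by
    rw [Finset.mul_sum]
    refine Finset.sum_le_sum fun m hm => ?_
    obtain ⟨h1, h2⟩ := Finset.mem_Icc.1 hm
    have hm0 : (0 : ℝ) < m := by exact_mod_cast h1
    have hN0 : (0 : ℝ) < N := by exact_mod_cast h1.trans h2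
    rw [← Real.log_div hN0.ne' hm0.ne']
    have := Real.log_le_sub_one_of_pos (show (0 : ℝ) < N / m by positivity)
    calc _ ≤ fk k m * (N / m) := mul_le_mul_of_nonneg_left (by linarith) (fk_nonneg k m)
      _ = _ := by ring
  simp only [mul_sub] at h2
  rw [Finset.sum_sub_distrib, ← Finset.sum_mul] at h2
  linarith

/-- Mean value bound for `fk`. -/
lemma sum_fk_le : ∃ C : ℝ, 0 < C ∧ ∀ k : ℕ, k ≠ 0 → ∀ N : ℕ, 3 ≤ N →
    ∑ m ∈ Finset.Icc 1 N, fk k m ≤ C * (k : ℝ) ^ (1 / 4 : ℝ) * N * Real.log N ^ (-(3 / 4) : ℝ) := by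
  set D : ℝ := 162 * Real.exp 48 with hD
  have hD0 : 0 < D := by positivity
  refine ⟨51 * (Real.exp 1 * D ^ (1 / 4 : ℝ)), by positivity, fun k hk N hN => ?_⟩
  have hN3 : (3 : ℝ) ≤ N := by exact_mod_cast hN
  have hL : 1 ≤ Real.log N := by
    rw [Real.le_log_iff_exp_le (by linarith)]
    linarith [Real.exp_one_lt_d9]
  set L := Real.log N with hLdef
  set s : ℝ := 1 + 1 / L with hs
  have hs1 : 1 < s := by rw [hs]; have : 0 < 1 / L := by positivity
                         linarith
  have hs2 : s ≤ 2 := by rw [hs]; have : 1 / L ≤ 1 := by rw [div_le_one (by linarith)]; exact hL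
                         linarith
  have hT := tsum_fk_le hk hs1 hs2
  set T := ∑' n : ℕ, fk k n * (n : ℝ) ^ (-s) with hTdef
  have hT0 : 0 ≤ T := tsum_nonneg fun n => mul_nonneg (fk_nonneg k n) (by positivity)
  have e1 : 162 * Real.exp 48 * k / (s - 1) = D * k * L := by
    rw [hs]; field_simp; simp [hD]
  rw [e1] at hT
  have hT2 : T ≤ D ^ (1 / 4 : ℝ) * (k : ℝ) ^ (1 / 4 : ℝ) * L ^ (1 / 4 : ℝ) := by
    rw [← Real.mul_rpow (by positivity) (by positivity),
      ← Real.mul_rpow (by positivity) (by positivity)]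
    have := Real.rpow_le_rpow (by positivity) hT (show (0 : ℝ) ≤ 1 / 4 by norm_num)
    rw [← Real.rpow_natCast, ← Real.rpow_mul hT0] at this
    norm_num at this
    norm_num
    exact this
  have h2 : ∑ n ∈ Finset.Icc 1 N, fk k n / n ≤ Real.exp 1 * T := by
    have h3 := (summable_fk k hs1).sum_le_tsum (Finset.Icc 1 N)
      (fun n _ => mul_nonneg (fk_nonneg k n) (by positivity))
    refine le_trans ?_ (mul_le_mul_of_nonneg_left h3 (Real.exp_pos 1).le)
    rw [Finset.mul_sum]
    refine Finset.sum_le_sum fun n hn => ?_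
    obtain ⟨hn1, hn2⟩ := Finset.mem_Icc.1 hn
    have hn0 : (0 : ℝ) < n := by exact_mod_cast hn1
    have hln : Real.log n ≤ L := Real.log_le_log hn0 (by exact_mod_cast hn2)
    have e2 : (n : ℝ) ^ (-s) = (n : ℝ)⁻¹ * Real.exp (-(Real.log n / L)) := by
      rw [hs, neg_add, Real.rpow_add hn0, Real.rpow_neg_one, Real.rpow_def_of_pos hn0]
      congr 2; ring
    have h4 : 1 ≤ Real.exp 1 * Real.exp (-(Real.log n / L)) := by
      rw [← Real.exp_add]
      apply Real.one_le_exp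
      have : Real.log n / L ≤ 1 := by rw [div_le_one (by linarith)]; exact hln
      linarith
    rw [e2]
    have h5 : 0 ≤ fk k n * (n : ℝ)⁻¹ := mul_nonneg (fk_nonneg k n) (by positivity)
    calc fk k n / n = fk k n * (n : ℝ)⁻¹ * 1 := by ring
      _ ≤ fk k n * (n : ℝ)⁻¹ * (Real.exp 1 * Real.exp (-(Real.log n / L))) := by gcongr
      _ = _ := by ring
  have h3 := sum_fk_mul_log_le k N
  have h4 : ∑ m ∈ Finset.Icc 1 N, fk k m ≤
      51 * N * (Real.exp 1 * (D ^ (1 / 4 : ℝ) * (k : ℝ) ^ (1 / 4 : ℝ) * L ^ (1 / 4 : ℝ))) / L := by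
    rw [le_div_iff₀ (by linarith), mul_comm _ L]
    refine h3.trans ?_
    gcongr
    exact h2.trans (by gcongr)
  refine h4.trans (le_of_eq ?_)
  rw [show (-(3 / 4) : ℝ) = 1 / 4 - 1 by norm_num, Real.rpow_sub_one (by positivity)]
  ring

/-! ### A Chebyshev bound for prime powers congruent to 1 modulo 4 -/

/-- Summation over `n = d e ≤ N` as an iterated sum over `d` and then `e ≤ N / d`. -/
lemma sum_dd (N : ℕ) (F : ℕ → ℕ → ℝ) :
    ∑ n ∈ Finset.Icc 1 N, ∑ p ∈ n.divisorsAntidiagonal, F p.1 p.2 =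
      ∑ d ∈ Finset.Icc 1 N, ∑ e ∈ Finset.Icc 1 (N / d), F d e := by
  rw [Finset.sum_sigma', Finset.sum_sigma']
  refine Finset.sum_bij' (fun x _ => ⟨x.2.1, x.2.2⟩) (fun y _ => ⟨y.1 * y.2, (y.1, y.2)⟩) ?_ ?_ ?_ ?_ ?_
  · rintro ⟨n, d, e⟩ h
    simp only [Finset.mem_sigma, Finset.mem_Icc, Nat.mem_divisorsAntidiagonal] at h ⊢
    obtain ⟨⟨h1, h2⟩, rfl, h3⟩ := h
    have hd : 0 < d := Nat.pos_of_ne_zero (by rintro rfl; simp at h3)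
    have he : 0 < e := Nat.pos_of_ne_zero (by rintro rfl; simp at h3)
    refine ⟨⟨hd, ?_⟩, he, ?_⟩
    · exact (Nat.le_mul_of_pos_right d he).trans h2
    · rw [Nat.le_div_iff_mul_le hd]; rw [mul_comm]; exact h2
  · rintro ⟨d, e⟩ h
    simp only [Finset.mem_sigma, Finset.mem_Icc, Nat.mem_divisorsAntidiagonal] at h ⊢
    obtain ⟨⟨h1, h2⟩, h3, h4⟩ := h
    rw [Nat.le_div_iff_mul_le h1] at h4
    refine ⟨⟨Nat.mul_pos h1 h3, by rw [mul_comm]; exact h4⟩, trivial, (Nat.mul_pos h1 h3).ne'⟩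
  · rintro ⟨n, d, e⟩ h
    simp only [Finset.mem_sigma, Finset.mem_Icc, Nat.mem_divisorsAntidiagonal] at h
    obtain ⟨⟨h1, h2⟩, rfl, h3⟩ := h
    rfl
  · rintro ⟨d, e⟩ h; rfl
  · rintro ⟨n, d, e⟩ h; rfl


/-- For completely multiplicative `c`, expand `log = Λ * 1` in `∑ c(n) log n`, with `Λ` the von
Mangoldt function. -/
lemma sum_log_eq (N : ℕ) (c : ℕ → ℝ) (hc : ∀ a b, c (a * b) = c a * c b) :
    ∑ n ∈ Finset.Icc 1 N, c n * Real.log n =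
      ∑ d ∈ Finset.Icc 1 N, ArithmeticFunction.vonMangoldt d * (c d * ∑ e ∈ Finset.Icc 1 (N / d), c e) := by
  have := sum_dd N (fun d e => ArithmeticFunction.vonMangoldt d * (c d * c e))
  simp only [← Finset.mul_sum] at this
  rw [← this]
  refine Finset.sum_congr rfl fun n hn => ?_
  rw [← ArithmeticFunction.vonMangoldt_sum,
    ← Nat.sum_divisorsAntidiagonal (fun i _ => ArithmeticFunction.vonMangoldt i), Finset.mul_sum]
  refine Finset.sum_congr rfl fun p hp => ?_
  rw [← hc, (Nat.mem_divisorsAntidiagonal.1 hp).1, mul_comm]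

lemma log_factorial_eq_sum (N : ℕ) :
    Real.log (N.factorial) = ∑ d ∈ Finset.Icc 1 N, ArithmeticFunction.vonMangoldt d * ((N / d : ℕ) : ℝ) := by
  have h := sum_log_eq N (fun _ => 1) (by simp)
  simp only [one_mul, Finset.sum_const, Nat.card_Icc, nsmul_eq_mul, mul_one,
    Nat.add_sub_cancel] at h
  rw [← h]
  induction N with
  | zero => simp
  | succ n ih =>
    rw [Nat.factorial_succ, Finset.sum_Icc_succ_top (by omega)]
    push_cast
    rw [Real.log_mul (by positivity) (by positivity), ih (by
      have h := sum_log_eq n (fun _ => 1) (by simp)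
      simpa using h)]
    ring

/-- Chebyshev's identity: `⌊2m/d⌋ - 2⌊m/d⌋` is the parity of `⌊2m/d⌋`. -/
lemma log_centralBinom_eq (m : ℕ) :
    Real.log (m.centralBinom) =
      ∑ d ∈ Finset.Icc 1 (2 * m), ArithmeticFunction.vonMangoldt d * (if (2 * m / d) % 2 = 1 then 1 else 0) := by
  have h1 : (m.centralBinom : ℝ) = (2 * m).factorial / (m.factorial * m.factorial) := by
    rw [eq_div_iff (by positivity), Nat.centralBinom_eq_two_mul_choose]
    have := Nat.choose_mul_factorial_mul_factorial (show m ≤ 2 * m by omega)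
    rw [show 2 * m - m = m by omega] at this
    rw [← mul_assoc]; exact_mod_cast this
  rw [h1, Real.log_div (by positivity) (by positivity), Real.log_mul (by positivity) (by positivity),
    log_factorial_eq_sum, log_factorial_eq_sum m]
  have h2 : ∑ d ∈ Finset.Icc 1 m, ArithmeticFunction.vonMangoldt d * ((m / d : ℕ) : ℝ) =
      ∑ d ∈ Finset.Icc 1 (2 * m), ArithmeticFunction.vonMangoldt d * ((m / d : ℕ) : ℝ) := by
    refine Finset.sum_subset (Finset.Icc_subset_Icc le_rfl (by omega)) fun d hd hd' => ?_
    rw [Finset.mem_Icc] at hd hd'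
    rw [Nat.div_eq_of_lt (by omega)]; simp
  rw [h2, ← Finset.sum_add_distrib, ← Finset.sum_sub_distrib]
  refine Finset.sum_congr rfl fun d hd => ?_
  have hd0 : 0 < d := (Finset.mem_Icc.1 hd).1
  have h3 : m / d = (2 * m / d) / 2 := by
    rw [Nat.div_div_eq_div_mul, mul_comm d 2, Nat.mul_div_mul_left _ _ (by norm_num)]
  rw [h3]
  set q := 2 * m / d
  have h4 : (q : ℝ) = 2 * ((q / 2 : ℕ) : ℝ) + (if q % 2 = 1 then 1 else 0 : ℝ) := by
    have : q = 2 * (q / 2) + (if q % 2 = 1 then 1 else 0) := by split_ifs <;> omega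
    exact_mod_cast this
  rw [← mul_add, ← mul_sub]
  congr 1
  linarith

/-- The nontrivial character mod 4, real-valued. -/
def chi (n : ℕ) : ℝ := if n % 4 = 1 then 1 else if n % 4 = 3 then -1 else 0

lemma chi_mul (a b : ℕ) : chi (a * b) = chi a * chi b := by
  unfold chi
  rw [Nat.mul_mod]
  have ha : a % 4 < 4 := Nat.mod_lt _ (by norm_num)
  have hb : b % 4 < 4 := Nat.mod_lt _ (by norm_num)
  generalize a % 4 = x at *
  generalize b % 4 = y at *
  interval_cases x <;> interval_cases y <;> norm_num

lemma sum_chi (N : ℕ) : ∑ e ∈ Finset.Icc 1 N, chi e =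
    if N % 4 = 1 ∨ N % 4 = 2 then 1 else 0 := by
  induction N with
  | zero => simp
  | succ n ih =>
    rw [Finset.sum_Icc_succ_top (by omega), ih]
    unfold chi
    have h : n % 4 < 4 := Nat.mod_lt _ (by norm_num)
    rw [Nat.add_mod]
    generalize n % 4 = x at *
    interval_cases x <;> norm_num

/-- Partial sums of `-log 3 + log 5 - log 7 + ⋯`, the consecutive terms being grouped in pairs. -/
lemma sum_chi_log_ge (N : ℕ) (hN : 1 ≤ N) :
    (if N % 4 = 1 ∨ N % 4 = 2 then 0 else - Real.log N) ≤
      ∑ n ∈ Finset.Icc 1 N, chi n * Real.log n := by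
  induction N, hN using Nat.le_induction with
  | base => simp [chi]
  | succ n hn ih =>
    rw [Finset.sum_Icc_succ_top (by omega)]
    refine le_trans ?_ (add_le_add_left ih _)
    unfold chi
    have h : n % 4 < 4 := Nat.mod_lt _ (by norm_num)
    rw [Nat.add_mod]
    have h1 : Real.log n ≤ Real.log ((n + 1 : ℕ) : ℝ) :=
      Real.log_le_log (by exact_mod_cast hn) (by push_cast; linarith)
    have h2 : 0 ≤ Real.log n := Real.log_natCast_nonneg n
    generalize n % 4 = x at *
    interval_cases x <;> norm_num at h1 ⊢ <;> linarith

lemma sum_chi_log_eq (N : ℕ) : ∑ n ∈ Finset.Icc 1 N, chi n * Real.log n =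
    ∑ d ∈ Finset.Icc 1 N, ArithmeticFunction.vonMangoldt d * (chi d * if (N / d) % 4 = 1 ∨ (N / d) % 4 = 2 then 1 else 0) := by
  rw [sum_log_eq N chi chi_mul]
  simp only [sum_chi]

/-- `ψ(N; 4, 1) = ∑_{d ≤ N, d ≡ 1 (4)} Λ(d)`. -/
def psi1 (N : ℕ) : ℝ := ∑ d ∈ Finset.Icc 1 N, if d % 4 = 1 then ArithmeticFunction.vonMangoldt d else 0

lemma psi1_nonneg (N : ℕ) : 0 ≤ psi1 N := by
  refine Finset.sum_nonneg fun d _ => ?_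
  split_ifs
  · exact ArithmeticFunction.vonMangoldt_nonneg
  · exact le_rfl

lemma psi1_mono : Monotone psi1 := by
  intro a b hab
  refine Finset.sum_le_sum_of_subset_of_nonneg (Finset.Icc_subset_Icc le_rfl hab) fun d _ _ => ?_
  split_ifs
  · exact ArithmeticFunction.vonMangoldt_nonneg
  · exact le_rfl

/-- The even numbers on which `Λ` is nonzero are the powers of `2`. -/
lemma sum_even_le (N : ℕ) (hN : N ≠ 0):
    ∑ d ∈ Finset.Icc 1 N, (if d % 2 = 0 then ArithmeticFunction.vonMangoldt d else 0) ≤ Real.log N := by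
  rw [← Finset.sum_filter]
  have h : ∀ d ∈ (Finset.Icc 1 N).filter (fun d => d % 2 = 0), ArithmeticFunction.vonMangoldt d ≠ 0 →
      d ∈ (Finset.Icc 1 (Nat.log 2 N)).image (fun j => 2 ^ j) := by
    intro d hd hL
    rw [Finset.mem_filter, Finset.mem_Icc] at hd
    rw [ArithmeticFunction.vonMangoldt_ne_zero_iff, isPrimePow_nat_iff] at hL
    obtain ⟨p, k, hp, hk, rfl⟩ := hL
    have : p = 2 := by
      have h2 : 2 ∣ p := Nat.prime_two.dvd_of_dvd_pow (Nat.dvd_of_mod_eq_zero hd.2)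
      exact ((Nat.prime_dvd_prime_iff_eq Nat.prime_two hp).1 h2).symm
    subst this
    rw [Finset.mem_image]
    exact ⟨k, Finset.mem_Icc.2 ⟨hk, Nat.le_log_of_pow_le (by norm_num) hd.1.2⟩, rfl⟩
  rw [← Finset.sum_filter_ne_zero]
  calc _ ≤ ∑ d ∈ (Finset.Icc 1 (Nat.log 2 N)).image (fun j => 2 ^ j), ArithmeticFunction.vonMangoldt d := by
        refine Finset.sum_le_sum_of_subset_of_nonneg ?_ fun _ _ _ =>
          ArithmeticFunction.vonMangoldt_nonneg
        intro d hd
        rw [Finset.mem_filter] at hd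
        exact h d hd.1 hd.2
    _ = ∑ j ∈ Finset.Icc 1 (Nat.log 2 N), ArithmeticFunction.vonMangoldt (2 ^ j) := by
        rw [Finset.sum_image]
        intro a _ b _ hab
        exact Nat.pow_right_injective le_rfl hab
    _ = ∑ j ∈ Finset.Icc 1 (Nat.log 2 N), Real.log 2 := by
        refine Finset.sum_congr rfl fun j hj => ?_
        rw [ArithmeticFunction.vonMangoldt_apply_pow (by have := (Finset.mem_Icc.1 hj).1; omega),
          ArithmeticFunction.vonMangoldt_apply_prime Nat.prime_two]; norm_num
    _ = Real.log ((2 ^ Nat.log 2 N : ℕ) : ℝ) := by simp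
    _ ≤ Real.log N := Real.log_le_log (by positivity) (by
        exact_mod_cast Nat.pow_log_le_self 2 hN)

/-- Adding the identities for `log (2m choose m)` and for `∑ χ(n) log n` leaves, on the prime powers
`d ≡ 3 (mod 4)`, a coefficient that is at most `0` when `2m / 3 < d`; those `d ≤ 2m / 3` are
absorbed in `ψ(2m / 3)`. -/
lemma psi1_even_ge (m : ℕ) (hm : 1 ≤ m) :
    (2 * m : ℝ) * Real.log 2 - 2 * Real.log (2 * m) ≤
      2 * psi1 (2 * m) + Chebyshev.psi ((2 * m / 3 : ℕ) : ℝ) + Real.log (2 * m) := by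
  have h1 := log_centralBinom_eq m
  have h2 := sum_chi_log_eq (2 * m)
  have h3 := sum_chi_log_ge (2 * m) (by omega)
  have h3' : -Real.log (2 * m) ≤ ∑ n ∈ Finset.Icc 1 (2 * m), chi n * Real.log n := by
    refine le_trans ?_ h3
    have : 0 ≤ Real.log ((2 * m : ℕ) : ℝ) := Real.log_natCast_nonneg _
    push_cast at this ⊢
    split_ifs <;> linarith
  have h4 : (2 * m : ℝ) * Real.log 2 - Real.log (2 * m) ≤ Real.log m.centralBinom := by
    have h := Nat.four_pow_le_two_mul_self_mul_centralBinom m hm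
    have h' : ((4 : ℝ)) ^ m ≤ (2 * m) * m.centralBinom := by exact_mod_cast h
    have h'' := Real.log_le_log (by positivity) h'
    have hc : 0 < m.centralBinom := m.centralBinom_pos
    rw [Real.log_mul (by positivity) (by positivity), Real.log_pow,
      show (4 : ℝ) = 2 ^ 2 by norm_num, Real.log_pow] at h''
    push_cast at h''
    linarith
  have h5 : Chebyshev.psi ((2 * m / 3 : ℕ) : ℝ) =
      ∑ d ∈ Finset.Icc 1 (2 * m), if 3 * d ≤ 2 * m then ArithmeticFunction.vonMangoldt d else 0 := by
    rw [Chebyshev.psi, Nat.floor_natCast, ← Finset.sum_filter]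
    refine Finset.sum_congr ?_ fun _ _ => rfl
    ext d
    simp only [Finset.mem_Ioc, Finset.mem_filter, Finset.mem_Icc]
    omega
  have h6 := sum_even_le (2 * m) (by omega)
  push_cast at h6
  have h7 : Real.log m.centralBinom + ∑ n ∈ Finset.Icc 1 (2 * m), chi n * Real.log n ≤
      2 * psi1 (2 * m) + Chebyshev.psi ((2 * m / 3 : ℕ) : ℝ) +
        ∑ d ∈ Finset.Icc 1 (2 * m), (if d % 2 = 0 then ArithmeticFunction.vonMangoldt d else 0) := by
    rw [h1, h2, h5, psi1, Finset.mul_sum, ← Finset.sum_add_distrib, ← Finset.sum_add_distrib,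
      ← Finset.sum_add_distrib]
    refine Finset.sum_le_sum fun d hd => ?_
    have hL : 0 ≤ ArithmeticFunction.vonMangoldt d := ArithmeticFunction.vonMangoldt_nonneg
    have hd0 := (Finset.mem_Icc.1 hd).1
    have hq : (2 * m / d) % 4 = 3 → 3 * d ≤ 2 * m := by
      intro h
      have : 3 ≤ 2 * m / d := by
        generalize 2 * m / d = q at h ⊢
        omega
      rwa [Nat.le_div_iff_mul_le hd0] at this
    generalize 2 * m / d = q at *
    unfold chi
    have hd4 : d % 4 < 4 := Nat.mod_lt _ (by norm_num)
    have hd2 : d % 2 = (d % 4) % 2 := by omega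
    have hq4 : q % 4 < 4 := Nat.mod_lt _ (by norm_num)
    have hq2 : q % 2 = (q % 4) % 2 := by omega
    rw [hd2, hq2]
    generalize d % 4 = x at *
    generalize q % 4 = y at *
    by_cases h3 : 3 * d ≤ 2 * m
    · interval_cases x <;> interval_cases y <;> simp [h3] <;> linarith
    · have hy : y ≠ 3 := fun h => h3 (hq h)
      interval_cases x <;> interval_cases y <;> simp [h3] at hy ⊢ <;> linarith
  linarith

/-! ### The counting function of sums of two squares -/

/-- A Chebyshev lower bound for prime powers congruent to 1 mod 4. -/
lemma psi1_ge : ∃ x₀ : ℕ, 1 ≤ x₀ ∧ ∀ n : ℕ, x₀ ≤ n → (n : ℝ) / 20 ≤ psi1 n := by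
  have hlo := (isLittleO_log_rpow_atTop (show (0 : ℝ) < 1 / 2 by norm_num)).bound
    (show (0 : ℝ) < 1 / 100 by norm_num)
  obtain ⟨X, hX⟩ := eventually_atTop.1 hlo
  obtain ⟨x₁, hx₁⟩ := exists_nat_ge X
  have even_case : ∀ m : ℕ, 2 ≤ m → x₁ ≤ 2 * m → (9 / 100 : ℝ) * (2 * m) ≤ psi1 (2 * m) := by
    intro m hm hxm
    have h := psi1_even_ge m (by omega)
    have hx1 : (4 : ℝ) ≤ 2 * m := by exact_mod_cast (show 4 ≤ 2 * m by omega)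
    have hX' := hX (2 * m) (hx₁.trans (by exact_mod_cast hxm))
    have hy1 : (1 : ℝ) ≤ ((2 * m / 3 : ℕ) : ℝ) := by
      exact_mod_cast (show 1 ≤ 2 * m / 3 by omega)
    have hy2 : ((2 * m / 3 : ℕ) : ℝ) ≤ (2 * m : ℝ) / 3 := by
      have := @Nat.cast_div_le ℝ _ _ _ (2 * m) 3
      push_cast at this ⊢
      exact this
    have hpsi := Chebyshev.psi_le hy1
    set y : ℝ := ((2 * m / 3 : ℕ) : ℝ)
    set x : ℝ := 2 * m
    have hlog0 : 0 ≤ Real.log x := Real.log_nonneg (by linarith)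
    rw [Real.norm_of_nonneg hlog0, Real.norm_of_nonneg (by positivity), ← Real.sqrt_eq_rpow] at hX'
    have hs : √y ≤ √x := Real.sqrt_le_sqrt (by linarith)
    have hl : Real.log y ≤ Real.log x := Real.log_le_log (by linarith) (by linarith)
    have hl0 : 0 ≤ Real.log y := Real.log_nonneg hy1
    have h4 : Real.log 4 = 2 * Real.log 2 := by
      rw [show (4 : ℝ) = 2 ^ 2 by norm_num, Real.log_pow]; norm_num
    have hsx : √x * √x = x := Real.mul_self_sqrt (by linarith)
    have hsx1 : 1 ≤ √x := by rw [Real.one_le_sqrt]; linarith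
    have a1 : 2 * √y * Real.log y ≤ 2 * √x * (1 / 100 * √x) := by
      have : Real.log y ≤ 1 / 100 * √x := hl.trans hX'
      gcongr
    have a2 : Real.log 4 * y ≤ Real.log 4 * (x / 3) := by
      have : 0 ≤ Real.log 4 := Real.log_nonneg (by norm_num)
      gcongr
    have hl2 := Real.log_two_gt_d9
    rw [h4] at a2 hpsi
    have a3 : √x ≤ x := by nlinarith
    have a4 : 0.6931471803 * x ≤ x * Real.log 2 := by
      rw [mul_comm]; gcongr
    nlinarith
  refine ⟨x₁ + 5, by omega, fun n hn => ?_⟩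
  have h1 := even_case (n / 2) (by omega) (by omega)
  have h2 : psi1 (2 * (n / 2)) ≤ psi1 n := psi1_mono (by omega)
  have h3 : (n : ℝ) - 1 ≤ 2 * ((n / 2 : ℕ) : ℝ) := by
    have : n ≤ 2 * (n / 2) + 1 := by omega
    have : (n : ℝ) ≤ 2 * ((n / 2 : ℕ) : ℝ) + 1 := by exact_mod_cast this
    linarith
  have h4 : (5 : ℝ) ≤ n := by exact_mod_cast (show 5 ≤ n by omega)
  linarith

/-- Indicator function of `S₂`. -/
def hind (n : ℕ) : ℝ := by classical exact if n ∈ S₂ then 1 else 0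

lemma hind_nonneg (n : ℕ) : 0 ≤ hind n := by unfold hind; split_ifs <;> norm_num
lemma hind_le_one (n : ℕ) : hind n ≤ 1 := by unfold hind; split_ifs <;> norm_num
lemma hind_of_mem {n : ℕ} (h : n ∈ S₂) : hind n = 1 := by unfold hind; rw [if_pos h]
lemma hind_of_not_mem {n : ℕ} (h : n ∉ S₂) : hind n = 0 := by unfold hind; rw [if_neg h]

lemma S2_mul {m n : ℕ} (hm : m ∈ S₂) (hn : n ∈ S₂) : m * n ∈ S₂ := by
  obtain ⟨h1, a, b, h2⟩ := hm
  obtain ⟨h3, c, d, h4⟩ := hn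
  refine ⟨Nat.mul_pos h1 h3, a * c - b * d, a * d + b * c, ?_⟩
  push_cast
  rw [h2, h4]; ring

lemma S2_one : 1 ∈ S₂ := ⟨le_rfl, 1, 0, by norm_num⟩
lemma S2_two : 2 ∈ S₂ := ⟨by norm_num, 1, 1, by norm_num⟩
lemma S2_sq {n : ℕ} (hn : n ≠ 0) : n ^ 2 ∈ S₂ :=
  ⟨Nat.one_le_iff_ne_zero.2 (pow_ne_zero _ hn), n, 0, by push_cast; ring⟩
lemma S2_pow {n : ℕ} (hn : n ∈ S₂) (k : ℕ) : n ^ k ∈ S₂ := by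
  induction k with
  | zero => exact S2_one
  | succ k ih => exact S2_mul ih hn

lemma S2_prime {p : ℕ} (hp : p.Prime) (h : p % 4 ≠ 3) : p ∈ S₂ := by
  have := Fact.mk hp
  obtain ⟨a, b, hab⟩ := Nat.Prime.sq_add_sq h
  exact ⟨hp.one_le, a, b, by exact_mod_cast hab.symm⟩

/-- A prime power congruent to 1 mod 4 is a sum of two squares. -/
lemma S2_primePow {d : ℕ} (hd : IsPrimePow d) (h4 : d % 4 = 1) : d ∈ S₂ := by
  rw [isPrimePow_nat_iff] at hd
  obtain ⟨p, k, hp, hk, rfl⟩ := hd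
  by_cases h : p % 4 = 3
  · rcases Nat.even_or_odd' k with ⟨j, rfl | rfl⟩
    · rw [mul_comm, pow_mul]; exact S2_sq (pow_ne_zero _ hp.ne_zero)
    · exfalso
      rw [pow_succ, pow_mul, Nat.mul_mod, Nat.pow_mod, Nat.pow_mod p, h] at h4
      norm_num at h4
  · exact S2_pow (S2_prime hp h) k

/-- Number of factorizations `n = d e` with both factors in `S₂`. -/
def Bn (n : ℕ) : ℝ := ∑ p ∈ n.divisorsAntidiagonal, hind p.1 * hind p.2

lemma Bn_nonneg (n : ℕ) : 0 ≤ Bn n :=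
  Finset.sum_nonneg fun _ _ => mul_nonneg (hind_nonneg _) (hind_nonneg _)

lemma hind_mul_ge (a b : ℕ) : hind a * hind b ≤ hind (a * b) := by
  by_cases ha : a ∈ S₂
  · by_cases hb : b ∈ S₂
    · rw [hind_of_mem ha, hind_of_mem hb, hind_of_mem (S2_mul ha hb)]; norm_num
    · rw [hind_of_not_mem hb, mul_zero]; exact hind_nonneg _
  · rw [hind_of_not_mem ha, zero_mul]; exact hind_nonneg _

lemma Bn_mul_ge {m n : ℕ} (h : m.Coprime n) : Bn m * Bn n ≤ Bn (m * n) := by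
  unfold Bn
  rw [Finset.sum_mul_sum, ← Finset.sum_product']
  have key : ∀ {a b a' b' : ℕ}, a ∣ m → b ∣ n → a' ∣ m → b' ∣ n → a * b = a' * b' →
      a = a' ∧ b = b' := by
    intro a b a' b' ha hb ha' hb' hab
    have h1 : (a * b).gcd m = a := by
      rw [Nat.Coprime.gcd_mul_right_cancel _ (h.symm.coprime_dvd_left hb), Nat.gcd_eq_left ha]
    have h2 : (a' * b').gcd m = a' := by
      rw [Nat.Coprime.gcd_mul_right_cancel _ (h.symm.coprime_dvd_left hb'), Nat.gcd_eq_left ha']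
    have h3 : (a * b).gcd n = b := by
      rw [Nat.Coprime.gcd_mul_left_cancel _ (h.coprime_dvd_left ha), Nat.gcd_eq_left hb]
    have h4 : (a' * b').gcd n = b' := by
      rw [Nat.Coprime.gcd_mul_left_cancel _ (h.coprime_dvd_left ha'), Nat.gcd_eq_left hb']
    exact ⟨by rw [← h1, hab, h2], by rw [← h3, hab, h4]⟩
  let f : (ℕ × ℕ) × (ℕ × ℕ) → ℕ × ℕ := fun x => (x.1.1 * x.2.1, x.1.2 * x.2.2)
  calc _ ≤ ∑ x ∈ m.divisorsAntidiagonal ×ˢ n.divisorsAntidiagonal, hind (f x).1 * hind (f x).2 := by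
        refine Finset.sum_le_sum fun x _ => ?_
        calc _ = (hind x.1.1 * hind x.2.1) * (hind x.1.2 * hind x.2.2) := by ring
          _ ≤ _ := mul_le_mul (hind_mul_ge _ _) (hind_mul_ge _ _)
            (mul_nonneg (hind_nonneg _) (hind_nonneg _)) (hind_nonneg _)
    _ = ∑ y ∈ (m.divisorsAntidiagonal ×ˢ n.divisorsAntidiagonal).image f,
          hind y.1 * hind y.2 := by
        rw [Finset.sum_image]
        intro x hx y hy hxy
        simp only [Finset.coe_product, Set.mem_prod, Finset.mem_coe,
          Nat.mem_divisorsAntidiagonal] at hx hy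
        obtain ⟨⟨a, b⟩, c, d⟩ := x
        obtain ⟨⟨a', b'⟩, c', d'⟩ := y
        simp only [f, Prod.mk.injEq] at hx hy hxy ⊢
        have k1 := key (hx.1.1 ▸ dvd_mul_right a b) (hx.2.1 ▸ dvd_mul_right c d)
          (hy.1.1 ▸ dvd_mul_right a' b') (hy.2.1 ▸ dvd_mul_right c' d') hxy.1
        have k2 := key (hx.1.1 ▸ dvd_mul_left b a) (hx.2.1 ▸ dvd_mul_left d c)
          (hy.1.1 ▸ dvd_mul_left b' a') (hy.2.1 ▸ dvd_mul_left d' c') hxy.2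
        exact ⟨⟨k1.1, k2.1⟩, k1.2, k2.2⟩
    _ ≤ _ := by
        refine Finset.sum_le_sum_of_subset_of_nonneg ?_ fun _ _ _ =>
          mul_nonneg (hind_nonneg _) (hind_nonneg _)
        intro y hy
        obtain ⟨x, hx, rfl⟩ := Finset.mem_image.1 hy
        rw [Finset.mem_product, Nat.mem_divisorsAntidiagonal, Nat.mem_divisorsAntidiagonal] at hx
        rw [Nat.mem_divisorsAntidiagonal]
        refine ⟨?_, mul_ne_zero hx.1.2 hx.2.2⟩
        rw [← hx.1.1, ← hx.2.1]
        simp only [f]; ring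

/-- The number of factorizations of a prime power, from below. -/
lemma Bn_pow_ge {p : ℕ} (hp : p.Prime) (j : ℕ) (s : Finset ℕ) (hs : ∀ i ∈ s, i ≤ j ∧
    p ^ i ∈ S₂ ∧ p ^ (j - i) ∈ S₂) : (s.card : ℝ) ≤ Bn (p ^ j) := by
  unfold Bn
  have h1 : (s.card : ℝ) = ∑ q ∈ s.image (fun i => (p ^ i, p ^ (j - i))), hind q.1 * hind q.2 := by
    rw [Finset.sum_image]
    · rw [Finset.sum_congr rfl (g := fun _ => (1 : ℝ))]
      · simp
      · intro i hi
        rw [hind_of_mem (hs i hi).2.1, hind_of_mem (hs i hi).2.2, one_mul]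
    · intro a _ b _ hab
      exact Nat.pow_right_injective hp.two_le (Prod.ext_iff.1 hab).1
  rw [h1]
  refine Finset.sum_le_sum_of_subset_of_nonneg ?_ fun _ _ _ =>
    mul_nonneg (hind_nonneg _) (hind_nonneg _)
  intro q hq
  obtain ⟨i, hi, rfl⟩ := Finset.mem_image.1 hq
  rw [Nat.mem_divisorsAntidiagonal]
  exact ⟨by rw [← pow_add, Nat.add_sub_cancel' (hs i hi).1], pow_ne_zero _ hp.ne_zero⟩

lemma A_zero_split {p : ℕ} (hp : p.Prime) (h : p % 4 = 1) (j : ℕ) : A 0 (p ^ j) = j + 1 := by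
  induction j using Nat.twoStepInduction with
  | zero => simp [A_one]
  | one => rw [pow_one, A_split_zero hp h]; norm_num
  | more j h1 h2 => rw [A_split_rec hp h, A_split_zero hp h, h1, h2]; push_cast; ring

lemma A_zero_inert {p : ℕ} (hp : p.Prime) (h : p % 4 = 3) (j : ℕ) :
    A 0 (p ^ j) = if j % 2 = 0 then 1 else 0 := by
  induction j using Nat.twoStepInduction with
  | zero => simp [A_one]
  | one => rw [pow_one, A_inert_one hp h]; norm_num
  | more j h1 h2 => rw [A_inert_rec hp h, h1]; simp

lemma A_zero_le_Bn_pow {p : ℕ} (hp : p.Prime) (j : ℕ) : A 0 (p ^ j) ≤ Bn (p ^ j) := by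
  have h4 : p % 4 = 0 ∨ p % 4 = 1 ∨ p % 4 = 2 ∨ p % 4 = 3 := by omega
  have h2 : p % 2 = 1 ∨ p = 2 := by
    rcases hp.eq_two_or_odd with h | h <;> tauto
  rcases h2 with h2 | rfl
  · by_cases h : p % 4 = 3
    · rw [A_zero_inert hp h]
      split_ifs with hj
      · have := Bn_pow_ge hp j {0} (by
          intro i hi
          rw [Finset.mem_singleton] at hi
          subst hi
          refine ⟨by omega, S2_one, ?_⟩
          obtain ⟨l, rfl⟩ := Nat.dvd_of_mod_eq_zero hj
          rw [Nat.sub_zero, mul_comm, pow_mul]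
          exact S2_sq (pow_ne_zero _ hp.ne_zero))
        simpa using this
      · exact Bn_nonneg _
    · have h1 : p % 4 = 1 := by omega
      rw [A_zero_split hp h1]
      have := Bn_pow_ge hp j (Finset.range (j + 1)) (fun i hi =>
        ⟨by rw [Finset.mem_range] at hi; omega, S2_pow (S2_prime hp h) _, S2_pow (S2_prime hp h) _⟩)
      simpa using this
  · have := A_two_pow 0 j
    rw [mul_zero] at this
    rw [this]
    have := Bn_pow_ge hp j {0} (fun i _ => ⟨by simp_all, S2_pow S2_two _, S2_pow S2_two _⟩)
    simpa using this

/-- `A 0 n` counts the ideals of norm `n`. On powers of a split prime it equals `Bn`, and on powers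
of the other primes it is at most `1`, and is `0` when no factorization into elements of `S₂`
exists. -/
lemma A_zero_le_Bn (n : ℕ) (hn : n ≠ 0) : A 0 n ≤ Bn n := by
  induction n using Nat.recOnPosPrimePosCoprime with
  | prime_pow p j hp _ => exact A_zero_le_Bn_pow hp j
  | zero => exact absurd rfl hn
  | one => simpa using A_zero_le_Bn_pow Nat.prime_two 0
  | coprime a b ha hb hab iha ihb =>
    rw [A_mul 0 hab (by omega) (by omega)]
    exact (mul_le_mul (iha (by omega)) (ihb (by omega)) (A_zero_nonneg b) (Bn_nonneg a)).trans
      (Bn_mul_ge hab)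

/-- The harmonic sum over `S₂` has order at least `(log N) ^ (1 / 2)`: its square dominates
`∑ Bn n / n`, hence `∑ A 0 n / n`. -/
lemma sum_hind_div_sq_ge {N : ℕ} (hN : 4 ≤ N) :
    (1 / 32) * Real.log N ≤ (∑ e ∈ Finset.Icc 1 N, hind e / e) ^ 2 := by
  refine (sum_A_zero_ge hN).trans ?_
  calc ∑ n ∈ Finset.Icc 1 N, A 0 n / n ≤ ∑ n ∈ Finset.Icc 1 N, Bn n / n := by
        refine Finset.sum_le_sum fun n hn => ?_
        have := A_zero_le_Bn n (by have := (Finset.mem_Icc.1 hn).1; omega)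
        gcongr
    _ = ∑ n ∈ Finset.Icc 1 N, ∑ p ∈ n.divisorsAntidiagonal,
          (hind p.1 / p.1) * (hind p.2 / p.2) := by
        refine Finset.sum_congr rfl fun n _ => ?_
        rw [Bn, Finset.sum_div]
        refine Finset.sum_congr rfl fun p hp => ?_
        rw [← (Nat.mem_divisorsAntidiagonal.1 hp).1]
        push_cast
        rw [div_mul_div_comm]
    _ = ∑ d ∈ Finset.Icc 1 N, ∑ e ∈ Finset.Icc 1 (N / d), (hind d / d) * (hind e / e) :=
        sum_dd N (fun d e => (hind d / d) * (hind e / e))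
    _ ≤ ∑ d ∈ Finset.Icc 1 N, ∑ e ∈ Finset.Icc 1 N, (hind d / d) * (hind e / e) := by
        refine Finset.sum_le_sum fun d _ => ?_
        refine Finset.sum_le_sum_of_subset_of_nonneg
          (Finset.Icc_subset_Icc le_rfl (Nat.div_le_self _ _)) fun e _ _ => ?_
        exact mul_nonneg (div_nonneg (hind_nonneg _) (by positivity))
          (div_nonneg (hind_nonneg _) (by positivity))
    _ = _ := by rw [sq, Finset.sum_mul_sum]

/-- `S₂` is stable under multiplication by prime powers `d ≡ 1 (mod 4)`, and
`∑_{d ∣ n} Λ(d) = log n`. -/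
lemma log_mul_sum_hind_ge (N : ℕ) :
    ∑ e ∈ Finset.Icc 1 N, hind e * psi1 (N / e) ≤
      Real.log N * ∑ m ∈ Finset.Icc 1 N, hind m := by
  unfold psi1
  simp only [Finset.mul_sum]
  rw [← sum_dd N (fun e d => hind e * (if d % 4 = 1 then ArithmeticFunction.vonMangoldt d else 0))]
  refine Finset.sum_le_sum fun n hn => ?_
  obtain ⟨hn1, hn2⟩ := Finset.mem_Icc.1 hn
  have hlog : Real.log n ≤ Real.log N :=
    Real.log_le_log (by exact_mod_cast hn1) (by exact_mod_cast hn2)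
  refine le_trans ?_ (mul_le_mul_of_nonneg_right hlog (hind_nonneg n))
  rw [← ArithmeticFunction.vonMangoldt_sum,
    ← Nat.sum_divisorsAntidiagonal' (fun _ i => ArithmeticFunction.vonMangoldt i), Finset.sum_mul]
  refine Finset.sum_le_sum fun p hp => ?_
  have hL : 0 ≤ ArithmeticFunction.vonMangoldt p.2 := ArithmeticFunction.vonMangoldt_nonneg
  split_ifs with h4
  · by_cases h0 : ArithmeticFunction.vonMangoldt p.2 = 0
    · simp [h0]
    · have h1 : p.2 ∈ S₂ := S2_primePow (ArithmeticFunction.vonMangoldt_ne_zero_iff.1 h0) h4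
      have h2 := hind_mul_ge p.1 p.2
      rw [hind_of_mem h1, mul_one, (Nat.mem_divisorsAntidiagonal.1 hp).1] at h2
      rw [mul_comm]; gcongr
  · rw [mul_zero]; exact mul_nonneg hL (hind_nonneg n)

/-- Lower bound of the correct order for the counting function of `S₂`. -/
lemma sum_hind_ge : ∃ c : ℝ, 0 < c ∧ ∃ N₀ : ℕ, 3 ≤ N₀ ∧ ∀ N : ℕ, N₀ ≤ N →
    c * N * Real.log N ^ (-(1 / 2) : ℝ) ≤ ∑ m ∈ Finset.Icc 1 N, hind m := by
  obtain ⟨x₀, hx0, hpsi⟩ := psi1_ge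
  refine ⟨1 / 640, by norm_num, 4 * (x₀ + 4) ^ 2, by nlinarith, fun N hN => ?_⟩
  have hN64 : 64 ≤ N := by nlinarith
  have hx0' : (1 : ℝ) ≤ x₀ := by exact_mod_cast hx0
  set M := N / x₀ with hM
  have hMN : (x₀ + 4) * (x₀ + 4) ≤ N := by nlinarith
  have hM4 : 4 ≤ M := by rw [hM, Nat.le_div_iff_mul_le hx0]; nlinarith
  have hNM : N ≤ M ^ 2 := by
    have h1 : N < x₀ * (M + 1) := by
      rw [hM]; have := Nat.lt_mul_div_succ N hx0; simpa using this
    have h2 : 4 * x₀ ≤ M := by rw [hM, Nat.le_div_iff_mul_le hx0]; nlinarith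
    nlinarith
  have hN0 : (0 : ℝ) < N := by exact_mod_cast (show 0 < N by omega)
  have hlogN : 1 ≤ Real.log N := by
    rw [Real.le_log_iff_exp_le hN0]
    have : (64 : ℝ) ≤ N := by exact_mod_cast hN64
    linarith [Real.exp_one_lt_d9]
  have hlogM : Real.log N ≤ 2 * Real.log M := by
    have : Real.log N ≤ Real.log ((M : ℝ) ^ 2) :=
      Real.log_le_log hN0 (by exact_mod_cast hNM)
    rwa [Real.log_pow] at this
  have h1 := sum_hind_div_sq_ge hM4
  set S := ∑ e ∈ Finset.Icc 1 M, hind e / e with hS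
  have hS0 : 0 ≤ S := Finset.sum_nonneg fun e _ => div_nonneg (hind_nonneg e) (by positivity)
  have h2 : √(Real.log N) / 8 ≤ S := by
    rw [← Real.sqrt_sq hS0, show √(Real.log N) / 8 = √(Real.log N / 64) by
      rw [Real.sqrt_div (by linarith), show (64 : ℝ) = 8 ^ 2 by norm_num, Real.sqrt_sq (by norm_num)]]
    exact Real.sqrt_le_sqrt (by linarith)
  have h3 : (N : ℝ) / 40 * S ≤ ∑ e ∈ Finset.Icc 1 N, hind e * psi1 (N / e) := by
    calc (N : ℝ) / 40 * S = ∑ e ∈ Finset.Icc 1 M, hind e * ((N : ℝ) / 40 / e) := by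
          rw [hS, Finset.mul_sum]; refine Finset.sum_congr rfl fun e _ => by ring
      _ ≤ ∑ e ∈ Finset.Icc 1 M, hind e * psi1 (N / e) := by
          refine Finset.sum_le_sum fun e he => mul_le_mul_of_nonneg_left ?_ (hind_nonneg e)
          obtain ⟨he1, he2⟩ := Finset.mem_Icc.1 he
          have he0 : (0 : ℝ) < e := by exact_mod_cast he1
          have hq : x₀ ≤ N / e := by
            rw [Nat.le_div_iff_mul_le he1]
            rw [hM, Nat.le_div_iff_mul_le hx0] at he2
            rwa [mul_comm]
          refine le_trans ?_ (hpsi _ hq)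
          have h5 : N < e * (N / e + 1) := by
            have := Nat.lt_mul_div_succ N he1; simpa using this
          have h6 : (N : ℝ) < e * (((N / e : ℕ) : ℝ) + 1) := by exact_mod_cast h5
          have h7 : (1 : ℝ) ≤ ((N / e : ℕ) : ℝ) := by exact_mod_cast hx0.trans hq
          have h8 : (N : ℝ) / e ≤ ((N / e : ℕ) : ℝ) + 1 := by
            rw [div_le_iff₀ he0]; linarith
          have : (N : ℝ) / 40 / e = (N / e) / 40 := by ring
          rw [this]; linarith
      _ ≤ _ := Finset.sum_le_sum_of_subset_of_nonneg
          (Finset.Icc_subset_Icc le_rfl (Nat.div_le_self _ _))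
          fun e _ _ => mul_nonneg (hind_nonneg e) (psi1_nonneg _)
  have h4 := h3.trans (log_mul_sum_hind_ge N)
  set H := ∑ m ∈ Finset.Icc 1 N, hind m
  have h5 : (N : ℝ) / 40 * (√(Real.log N) / 8) ≤ Real.log N * H :=
    le_trans (by gcongr) h4
  have hs : √(Real.log N) * √(Real.log N) = Real.log N := Real.mul_self_sqrt (by linarith)
  have hs0 : 0 < √(Real.log N) := Real.sqrt_pos.2 (by linarith)
  rw [Real.rpow_neg (by linarith), ← Real.sqrt_eq_rpow, ← div_eq_mul_inv, div_le_iff₀ hs0]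
  have h6 : (N : ℝ) / 320 ≤ √(Real.log N) * H := by
    have : √(Real.log N) * ((N : ℝ) / 320) ≤ √(Real.log N) * (√(Real.log N) * H) := by
      rw [← mul_assoc, hs]; linarith
    exact le_of_mul_le_mul_left this hs0
  linarith

/-! ### Quantile functions of finite sets -/

/-- Distribution function of the uniform measure on the finite set `X`. -/
def Fc (X : Finset ℝ) (t : ℝ) : ℝ := ((X.filter (· ≤ t)).card : ℝ) / X.card

lemma Fc_mono (X : Finset ℝ) : Monotone (Fc X) := by
  intro a b hab
  unfold Fc
  have : (X.filter (· ≤ a)).card ≤ (X.filter (· ≤ b)).card := by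
    refine Finset.card_le_card fun x hx => ?_
    rw [Finset.mem_filter] at hx ⊢
    exact ⟨hx.1, hx.2.trans hab⟩
  gcongr

lemma Fc_nonneg (X : Finset ℝ) (t : ℝ) : 0 ≤ Fc X t := by unfold Fc; positivity

lemma Fc_le_one (X : Finset ℝ) (t : ℝ) : Fc X t ≤ 1 := by
  unfold Fc
  exact div_le_one_of_le₀ (by exact_mod_cast Finset.card_filter_le _ _) (by positivity)

/-- Quantile function of the uniform measure on the finite set `X` (meaningful on `(0, 1]`). -/
def Tq (X : Finset ℝ) (u : ℝ) : ℝ := sInf {t | t ∈ X ∧ u ≤ Fc X t}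

lemma Tq_mem {X : Finset ℝ} (hX : X.Nonempty) {u : ℝ} (hu : u ≤ 1) :
    Tq X u ∈ X ∧ u ≤ Fc X (Tq X u) := by
  have hfin : {t | t ∈ X ∧ u ≤ Fc X t}.Finite := X.finite_toSet.subset fun t ht => ht.1
  have hne : {t | t ∈ X ∧ u ≤ Fc X t}.Nonempty := by
    refine ⟨X.max' hX, X.max'_mem hX, ?_⟩
    have : X.filter (· ≤ X.max' hX) = X := Finset.filter_true_of_mem fun x hx => X.le_max' x hx
    rw [Fc, this, div_self (by have := hX.card_pos; positivity)]
    exact hu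
  exact hne.csInf_mem hfin

/-- Galois connection between quantile and distribution functions. -/
lemma Tq_le_iff {X : Finset ℝ} (hX : X.Nonempty) {u : ℝ} (hu : u ∈ Set.Ioc (0 : ℝ) 1) (t : ℝ) :
    Tq X u ≤ t ↔ u ≤ Fc X t := by
  constructor
  · intro h
    exact (Tq_mem hX hu.2).2.trans (Fc_mono X h)
  · intro h
    have hne : (X.filter (· ≤ t)).Nonempty := by
      rw [Finset.nonempty_iff_ne_empty]
      intro h0
      rw [Fc, h0] at h
      simp at h
      linarith [hu.1]
    have hm := Finset.max'_mem _ hne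
    set y := (X.filter (· ≤ t)).max' hne with hy
    rw [Finset.mem_filter] at hm
    have hF : X.filter (· ≤ t) = X.filter (· ≤ y) := by
      ext x
      simp only [Finset.mem_filter]
      constructor
      · intro hx
        exact ⟨hx.1, Finset.le_max' _ _ (Finset.mem_filter.2 hx)⟩
      · intro hx
        exact ⟨hx.1, hx.2.trans hm.2⟩
    refine le_trans (csInf_le ?_ ⟨hm.1, ?_⟩) hm.2
    · exact (X.finite_toSet.subset fun t (ht : t ∈ X ∧ u ≤ Fc X t) => ht.1).bddBelow
    · rw [Fc, ← hF]; exact h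

lemma Tq_monotoneOn {X : Finset ℝ} (hX : X.Nonempty) : MonotoneOn (Tq X) (Set.Ioc 0 1) := by
  intro a ha b hb hab
  rw [Tq_le_iff hX ha]
  exact hab.trans (Tq_mem hX hb.2).2

lemma Tq_aemeasurable {X : Finset ℝ} (hX : X.Nonempty) :
    AEMeasurable (Tq X) (volume.restrict (Set.Ioc 0 1)) :=
  aemeasurable_restrict_of_monotoneOn measurableSet_Ioc (Tq_monotoneOn hX)

/-- The uniform probability measure on the finite set `X`. -/
def muX (X : Finset ℝ) : Measure ℝ := ((X.card : ENNReal))⁻¹ • ∑ x ∈ X, Measure.dirac x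

/-- The quantile function transports Lebesgue measure on `(0, 1]` to the uniform measure on `X`. -/
lemma map_Tq {X : Finset ℝ} (hX : X.Nonempty) :
    (volume.restrict (Set.Ioc (0 : ℝ) 1)).map (Tq X) = muX X := by
  have h0 : (X.card : ENNReal) ≠ 0 := by exact_mod_cast hX.card_pos.ne'
  have hfin : IsFiniteMeasure (muX X) := by
    constructor
    simp [muX, ENNReal.mul_lt_top_iff, h0, hX]
  refine Measure.ext_of_Iic _ _ fun t => ?_
  rw [Measure.map_apply_of_aemeasurable (Tq_aemeasurable hX) measurableSet_Iic]
  have h1 : volume.restrict (Set.Ioc (0 : ℝ) 1) (Tq X ⁻¹' Set.Iic t) =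
      volume (Set.Ioc 0 (Fc X t)) := by
    rw [Measure.restrict_apply' measurableSet_Ioc]
    congr 1
    ext u
    simp only [Set.mem_inter_iff, Set.mem_preimage, Set.mem_Iic]
    constructor
    · rintro ⟨h1, h2⟩
      exact ⟨h2.1, (Tq_le_iff hX h2 t).1 h1⟩
    · rintro ⟨h1, h2⟩
      have h3 : u ∈ Set.Ioc (0 : ℝ) 1 := ⟨h1, h2.trans (Fc_le_one X t)⟩
      exact ⟨(Tq_le_iff hX h3 t).2 h2, h3⟩
  rw [h1, Real.volume_Ioc, sub_zero, muX, Measure.smul_apply, Measure.finsetSum_apply]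
  have h2 : ∑ x ∈ X, (Measure.dirac x) (Set.Iic t) = ((X.filter (· ≤ t)).card : ENNReal) := by
    rw [Finset.card_filter]
    push_cast
    refine Finset.sum_congr rfl fun x _ => ?_
    rw [Measure.dirac_apply' _ measurableSet_Iic]
    simp [Set.indicator_apply]
  rw [h2, Fc, ENNReal.ofReal_div_of_pos (by exact_mod_cast hX.card_pos), ENNReal.ofReal_natCast,
    ENNReal.ofReal_natCast, smul_eq_mul, mul_comm, div_eq_mul_inv]

lemma integral_step_ge {𝕜 : Type*} [RCLike 𝕜] {a b w : ℝ} (hw : w ∈ Set.Icc a b) {φ : ℝ → 𝕜} (hφ : Continuous φ) :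
    ∫ t in a..b, φ t * (if w ≤ t then 1 else 0) = ∫ t in w..b, φ t := by
  have e1 : Set.EqOn (fun t => φ t * (if w ≤ t then 1 else 0)) (fun _ => 0) (Set.Ioo a w) := by
    intro t ht
    simp [not_le.2 ht.2]
  have e2 : Set.EqOn (fun t => φ t * (if w ≤ t then 1 else 0)) φ (Set.Ioo w b) := by
    intro t ht
    simp [ht.1.le]
  have i1 : IntervalIntegrable (fun t => φ t * (if w ≤ t then 1 else 0)) volume a w := by
    rw [intervalIntegrable_iff_integrableOn_Ioo_of_le hw.1,
      integrableOn_congr_fun e1 measurableSet_Ioo]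
    exact integrableOn_zero
  have i2 : IntervalIntegrable (fun t => φ t * (if w ≤ t then 1 else 0)) volume w b := by
    rw [intervalIntegrable_iff_integrableOn_Ioo_of_le hw.2,
      integrableOn_congr_fun e2 measurableSet_Ioo,
      ← intervalIntegrable_iff_integrableOn_Ioo_of_le hw.2]
    exact hφ.intervalIntegrable _ _
  rw [← intervalIntegral.integral_add_adjacent_intervals i1 i2,
    intervalIntegral.integral_congr_Ioo_of_le hw.1 e1,
    intervalIntegral.integral_congr_Ioo_of_le hw.2 e2]
  simp

lemma step_ge_intervalIntegrable {𝕜 : Type*} [RCLike 𝕜] {a b w : ℝ} {φ : ℝ → 𝕜} (hφ : Continuous φ) :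
    IntervalIntegrable (fun t => φ t * (if w ≤ t then 1 else 0)) volume a b := by
  have h := (hφ.intervalIntegrable (μ := volume) a b)
  refine h.mono_fun ?_ ?_
  · refine (Measurable.mul hφ.measurable ?_).aestronglyMeasurable
    exact Measurable.ite measurableSet_Ici measurable_const measurable_const
  · refine Eventually.of_forall fun t => ?_
    simp only [norm_mul]
    split_ifs <;> simp

/-- The square as an integral of a difference of step functions, which is linear in the distribution
functions of the two points. -/
lemma sq_eq_integral {a w : ℝ} (ha : a ∈ Set.Icc (-(1 / 2) : ℝ) (1 / 2))
    (hw : w ∈ Set.Icc (-(1 / 2) : ℝ) (1 / 2)) (c : ℝ) :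
    (a - w - c) ^ 2 = c ^ 2 + ∫ t in (-(1 / 2) : ℝ)..(1 / 2),
      2 * (t - w - c) * ((if w ≤ t then 1 else 0) - (if a ≤ t then 1 else 0)) := by
  have hφ : Continuous fun t : ℝ => 2 * (t - w - c) := by fun_prop
  rw [intervalIntegral.integral_congr (g := fun t =>
      2 * (t - w - c) * (if w ≤ t then 1 else 0) - 2 * (t - w - c) * (if a ≤ t then 1 else 0))
      (fun t _ => mul_sub _ _ _)]
  rw [intervalIntegral.integral_sub, integral_step_ge hw (φ := fun t => 2 * (t - w - c)) hφ,
    integral_step_ge ha (φ := fun t => 2 * (t - w - c)) hφ]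
  · have : ∀ p q : ℝ, ∫ t in p..q, 2 * (t - w - c) = (q - w - c) ^ 2 - (p - w - c) ^ 2 := by
      intro p q
      rw [intervalIntegral.integral_eq_sub_of_hasDerivAt (f := fun t => (t - w - c) ^ 2)]
      · intro t _
        have := (((hasDerivAt_id' t).sub_const w).sub_const c).fun_pow 2
        exact this.congr_deriv (by simp)
      · exact hφ.intervalIntegrable _ _
    rw [this, this]; ring
  · exact step_ge_intervalIntegrable (φ := fun t => 2 * (t - w - c)) hφ
  · exact step_ge_intervalIntegrable (φ := fun t => 2 * (t - w - c)) hφ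

lemma integral_step_le {F q : ℝ} (hF : F ∈ Set.Icc (0 : ℝ) 1) :
    ∫ u in (0 : ℝ)..1, 2 * (q - u) * (if u ≤ F then 1 else 0) = 2 * q * F - F ^ 2 := by
  have h := intervalIntegral.integral_indicator (μ := volume) (f := fun u => 2 * (q - u)) hF
  have h2 : ∀ u, {x | x ≤ F}.indicator (fun u => 2 * (q - u)) u =
      2 * (q - u) * (if u ≤ F then 1 else 0) := by
    intro u; simp [Set.indicator_apply]
  simp only [h2] at h
  rw [h, intervalIntegral.integral_eq_sub_of_hasDerivAt (f := fun u => 2 * q * u - u ^ 2)]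
  · ring
  · intro t _
    have := ((hasDerivAt_id t).const_mul (2 * q)).fun_sub (hasDerivAt_pow 2 t)
    convert this using 1
    simp; ring
  · exact Continuous.intervalIntegrable (by fun_prop) _ _

lemma step_le_intervalIntegrable (F q : ℝ) :
    IntervalIntegrable (fun u => 2 * (q - u) * (if u ≤ F then 1 else 0)) volume 0 1 := by
  have h : IntervalIntegrable (fun u => 2 * (q - u)) volume 0 1 :=
    Continuous.intervalIntegrable (by fun_prop) _ _
  refine h.mono_fun ?_ ?_
  · refine (Measurable.mul (by fun_prop) ?_).aestronglyMeasurable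
    exact Measurable.ite measurableSet_Iic measurable_const measurable_const
  · refine Eventually.of_forall fun t => ?_
    simp only [norm_mul]
    split_ifs <;> simp

/-- Quadratic cost of the (shifted) monotone transport on `[-1/2, 1/2]`. -/
lemma integral_Tq_sq {X : Finset ℝ} (hX : X.Nonempty)
    (hX2 : ∀ x ∈ X, x ∈ Set.Ioc (-(1 / 2) : ℝ) (1 / 2)) (c : ℝ) :
    ∫ u in (0 : ℝ)..1, (Tq X u - (u - 1 / 2) - c) ^ 2 =
      c ^ 2 + ∫ t in (-(1 / 2) : ℝ)..(1 / 2),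
        ((Fc X t - t - 1 / 2) ^ 2 + 2 * c * (Fc X t - t - 1 / 2)) := by
  let K : ℝ → ℝ → ℝ := fun u t => 2 * (t - (u - 1 / 2) - c) *
    ((if u - 1 / 2 ≤ t then 1 else 0) - (if u ≤ Fc X t then 1 else 0))
  have h1 : ∫ u in (0 : ℝ)..1, (Tq X u - (u - 1 / 2) - c) ^ 2 =
      ∫ u in (0 : ℝ)..1, (c ^ 2 + ∫ t in (-(1 / 2) : ℝ)..(1 / 2), K u t) := by
    rw [intervalIntegral.integral_of_le zero_le_one, intervalIntegral.integral_of_le zero_le_one]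
    refine setIntegral_congr_fun measurableSet_Ioc fun u hu => ?_
    have hT := hX2 _ (Tq_mem hX hu.2).1
    have := sq_eq_integral (Set.Ioc_subset_Icc_self hT)
      (show u - 1 / 2 ∈ Set.Icc (-(1 / 2) : ℝ) (1 / 2) from
        ⟨by linarith [hu.1], by linarith [hu.2]⟩) c
    simp only [Tq_le_iff hX hu] at this
    exact this
  have hKm : Measurable (Function.uncurry K) := by
    have hF : Measurable (Fc X) := (Fc_mono X).measurable
    refine Measurable.mul (by fun_prop) (Measurable.sub ?_ ?_)
    · exact Measurable.ite (measurableSet_le (by fun_prop) (by fun_prop))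
        measurable_const measurable_const
    · exact Measurable.ite (measurableSet_le (by fun_prop) (hF.comp measurable_snd))
        measurable_const measurable_const
  have hKi : IntegrableOn (Function.uncurry K)
      (Set.uIoc (0 : ℝ) 1 ×ˢ Set.uIoc (-(1 / 2) : ℝ) (1 / 2)) := by
    rw [Set.uIoc_of_le zero_le_one, Set.uIoc_of_le (by norm_num)]
    refine Measure.integrableOn_of_bounded (M := 2 * (2 + |c|)) ?_ hKm.aestronglyMeasurable ?_
    · rw [Measure.volume_eq_prod, Measure.prod_prod]
      simp
    · refine (ae_restrict_iff' (measurableSet_Ioc.prod measurableSet_Ioc)).2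
        (Eventually.of_forall ?_)
      rintro ⟨u, t⟩ ⟨hu, ht⟩
      simp only [Set.mem_Ioc] at hu ht
      simp only [Function.uncurry, K, Real.norm_eq_abs, abs_mul, abs_two]
      have e1 : |t - (u - 1 / 2) - c| ≤ 2 + |c| := by
        refine (abs_sub _ _).trans (add_le_add ?_ le_rfl)
        rw [abs_le]; constructor <;> linarith
      have e2 : |(if u - 1 / 2 ≤ t then (1 : ℝ) else 0) - (if u ≤ Fc X t then 1 else 0)| ≤ 1 := by
        split_ifs <;> norm_num
      calc _ ≤ 2 * (2 + |c|) * 1 := by gcongr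
        _ = _ := by ring
  have hswap := intervalIntegral_intervalIntegral_swap hKi
  have hin : ∀ t ∈ Set.Icc (-(1 / 2) : ℝ) (1 / 2), ∫ u in (0 : ℝ)..1, K u t =
      (Fc X t - t - 1 / 2) ^ 2 + 2 * c * (Fc X t - t - 1 / 2) := by
    intro t ht
    have e : ∀ u, K u t = 2 * ((t + 1 / 2 - c) - u) * (if u ≤ t + 1 / 2 then 1 else 0) -
        2 * ((t + 1 / 2 - c) - u) * (if u ≤ Fc X t then 1 else 0) := by
      intro u
      have : (u - 1 / 2 ≤ t) ↔ (u ≤ t + 1 / 2) := by constructor <;> intro h <;> linarith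
      simp only [K, this]; ring
    simp only [e]
    rw [intervalIntegral.integral_sub (step_le_intervalIntegrable _ _)
      (step_le_intervalIntegrable _ _),
      integral_step_le ⟨by linarith [ht.1], by linarith [ht.2]⟩,
      integral_step_le ⟨Fc_nonneg X t, Fc_le_one X t⟩]
    ring
  have hin' : ∫ t in (-(1 / 2) : ℝ)..(1 / 2), ∫ u in (0 : ℝ)..1, K u t =
      ∫ t in (-(1 / 2) : ℝ)..(1 / 2),
        ((Fc X t - t - 1 / 2) ^ 2 + 2 * c * (Fc X t - t - 1 / 2)) := by
    refine intervalIntegral.integral_congr fun t ht => hin t ?_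
    rwa [Set.uIcc_of_le (by norm_num)] at ht
  rw [h1, ← hin', ← hswap, intervalIntegral.integral_add (by simp)]
  · simp
  · have := hKi
    rw [intervalIntegrable_iff]
    rw [IntegrableOn, Measure.volume_eq_prod, ← Measure.prod_restrict] at this
    have h2 := this.integral_prod_left
    refine h2.congr (Eventually.of_forall fun u => ?_)
    simp only [Function.uncurry]
    rw [intervalIntegral.integral_of_le (by norm_num), Set.uIoc_of_le (by norm_num)]

/-! ### Parseval identity for the discrepancy -/

/-- Fourier coefficient of the uniform measure on `X ⊆ ℝ / ℤ`. -/
def muhat (X : Finset ℝ) (n : ℤ) : ℂ :=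
  (∑ x ∈ X, Complex.exp (-(2 * π * Complex.I * n) * x)) / X.card

lemma Fc_eq_sum {X : Finset ℝ} (t : ℝ) :
    Fc X t = (∑ x ∈ X, if x ≤ t then (1 : ℝ) else 0) / X.card := by
  rw [Fc, Finset.card_filter]; push_cast; rfl

lemma integral_exp_step {l : ℂ} (hl : l ≠ 0) (hper : Complex.exp (l * (1 / 2)) = Complex.exp (l * (-(1 / 2))))
    {x : ℝ} (hx : x ∈ Set.Icc (-(1 / 2) : ℝ) (1 / 2)) :
    ∫ t in (-(1 / 2) : ℝ)..(1 / 2),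
      (Complex.exp (l * t) * (if x ≤ t then 1 else 0) - Complex.exp (l * t) * (t + 1 / 2)) =
      - (Complex.exp (l * x) / l) := by
  have hc : Continuous fun t : ℝ => Complex.exp (l * t) := by fun_prop
  rw [intervalIntegral.integral_sub (step_ge_intervalIntegrable hc)
    (Continuous.intervalIntegrable (by fun_prop) _ _), integral_step_ge hx hc,
    integral_exp_mul_complex hl]
  have hd : ∀ t : ℝ, HasDerivAt (fun t : ℝ => (((t : ℂ) + 1 / 2) / l - 1 / l ^ 2) * Complex.exp (l * t))
      (Complex.exp (l * t) * (t + 1 / 2)) t := by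
    intro t
    have h1 : HasDerivAt (fun z : ℂ => ((z + 1 / 2) / l - 1 / l ^ 2) * Complex.exp (l * z))
      (Complex.exp (l * t) * (t + 1 / 2)) t := by
      have ha : HasDerivAt (fun z : ℂ => (z + 1 / 2) / l - 1 / l ^ 2) (1 / l) (t : ℂ) :=
        (((hasDerivAt_id' (t : ℂ)).add_const _).div_const l).sub_const _
      have hb : HasDerivAt (fun z : ℂ => Complex.exp (l * z)) (Complex.exp (l * t) * l) (t : ℂ) := by
        have := ((hasDerivAt_id' (t : ℂ)).const_mul l).cexp
        simpa using this
      refine (ha.fun_mul hb).congr_deriv ?_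
      field_simp
      ring
    exact h1.comp_ofReal
  rw [intervalIntegral.integral_eq_sub_of_hasDerivAt (fun t _ => hd t)
    (Continuous.intervalIntegrable (by fun_prop) _ _)]
  push_cast
  rw [← hper]
  field_simp
  ring

/-- The discrepancy function: distribution function of `X` minus that of the uniform measure on
`[-1/2, 1/2]`. -/
def gX (X : Finset ℝ) (t : ℝ) : ℝ := Fc X t - t - 1 / 2

lemma gX_measurable (X : Finset ℝ) : Measurable (gX X) := by
  have := (Fc_mono X).measurable
  unfold gX; fun_prop

lemma gX_bound (X : Finset ℝ) {t : ℝ} (ht : t ∈ Set.Ioc (-(1 / 2) : ℝ) (1 / 2)) : |gX X t| ≤ 2 := by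
  have h1 := Fc_nonneg X t
  have h2 := Fc_le_one X t
  rw [gX, abs_le]
  constructor <;> linarith [ht.1, ht.2]

lemma hab_half : (-(1 / 2) : ℝ) < 1 / 2 := by norm_num

/-- Fourier coefficients of the discrepancy are those of the measure, divided by the frequency
(integration by parts). -/
lemma fourierCoeffOn_gX {X : Finset ℝ} (hX : X.Nonempty)
    (hX2 : ∀ x ∈ X, x ∈ Set.Ioc (-(1 / 2) : ℝ) (1 / 2)) {n : ℤ} (hn : n ≠ 0) :
    fourierCoeffOn hab_half (fun t => (gX X t : ℂ)) n = muhat X n / (2 * π * Complex.I * n) := by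
  have hr : (X.card : ℂ) ≠ 0 := by exact_mod_cast hX.card_pos.ne'
  set l : ℂ := -(2 * π * Complex.I * n) with hl
  have hl0 : l ≠ 0 := by
    rw [hl, neg_ne_zero]
    have : (n : ℂ) ≠ 0 := by exact_mod_cast hn
    have h2 : (π : ℂ) ≠ 0 := by exact_mod_cast Real.pi_ne_zero
    exact mul_ne_zero (mul_ne_zero (mul_ne_zero two_ne_zero h2) Complex.I_ne_zero) this
  have hper : Complex.exp (l * (1 / 2)) = Complex.exp (l * (-(1 / 2))) := by
    rw [Complex.exp_eq_exp_iff_exists_int]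
    exact ⟨-n, by rw [hl]; push_cast; ring⟩
  rw [fourierCoeffOn_eq_integral]
  have e1 : ∀ t : ℝ, fourier (-n) (t : AddCircle (1 / 2 - (-(1 / 2)) : ℝ)) • (gX X t : ℂ) =
      ∑ x ∈ X, (1 / (X.card : ℂ)) *
        (Complex.exp (l * t) * (if x ≤ t then 1 else 0) - Complex.exp (l * t) * (t + 1 / 2)) := by
    intro t
    rw [fourier_coe_apply]
    have : Complex.exp (2 * π * Complex.I * ((-n : ℤ) : ℂ) * t / ((1 / 2 - (-(1 / 2)) : ℝ) : ℂ)) =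
        Complex.exp (l * t) := by
      congr 1; rw [hl]; push_cast; ring
    rw [this, ← Finset.mul_sum, Finset.sum_sub_distrib, ← Finset.mul_sum, Finset.sum_const,
      gX, Fc_eq_sum, smul_eq_mul, nsmul_eq_mul]
    have hite : ∀ x : ℝ, (((if x ≤ t then 1 else 0 : ℝ)) : ℂ) = if x ≤ t then 1 else 0 := by
      intro x; split_ifs <;> simp
    push_cast
    simp only [hite]
    field_simp
    ring
  simp only [e1]
  rw [intervalIntegral.integral_finsetSum]
  · simp only [intervalIntegral.integral_const_mul]
    rw [Finset.sum_congr rfl fun x hx => by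
      rw [integral_exp_step hl0 hper (Set.Ioc_subset_Icc_self (hX2 x hx))], muhat,
      ← Finset.mul_sum, Finset.sum_neg_distrib, ← Finset.sum_div,
      show (2 * π * Complex.I * n : ℂ) = - l by rw [hl]; ring]
    norm_num
    field_simp
  · intro x hx
    refine IntervalIntegrable.const_mul (IntervalIntegrable.sub
      (step_ge_intervalIntegrable (by fun_prop))
      (Continuous.intervalIntegrable (by fun_prop) _ _)) _

lemma fourierCoeffOn_gX_zero (X : Finset ℝ) :
    fourierCoeffOn hab_half (fun t => (gX X t : ℂ)) 0 =
      ((∫ t in (-(1 / 2) : ℝ)..(1 / 2), gX X t : ℝ) : ℂ) := by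
  rw [fourierCoeffOn_eq_integral]
  simp only [neg_zero, fourier_zero, one_smul]
  rw [intervalIntegral.integral_ofReal]
  norm_num

/-- Parseval for the discrepancy function. -/
lemma hasSum_muhat {X : Finset ℝ} (hX : X.Nonempty)
    (hX2 : ∀ x ∈ X, x ∈ Set.Ioc (-(1 / 2) : ℝ) (1 / 2)) :
    HasSum (fun n : ℤ => if n = 0 then 0 else ‖muhat X n‖ ^ 2 / (4 * π ^ 2 * n ^ 2))
      ((∫ t in (-(1 / 2) : ℝ)..(1 / 2), gX X t ^ 2) -
        (∫ t in (-(1 / 2) : ℝ)..(1 / 2), gX X t) ^ 2) := by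
  have hm : Measurable fun t => (gX X t : ℂ) := Complex.measurable_ofReal.comp (gX_measurable X)
  have hL2 : MemLp (fun t => (gX X t : ℂ)) 2 (volume.restrict (Set.Ioc (-(1 / 2) : ℝ) (1 / 2))) := by
    refine MemLp.of_bound hm.aestronglyMeasurable 2 ?_
    refine (ae_restrict_iff' measurableSet_Ioc).2 (Eventually.of_forall fun t ht => ?_)
    simpa using gX_bound X ht
  have h := hasSum_sq_fourierCoeffOn hab_half hL2
  have h2 := h.sub (hasSum_ite_eq (0 : ℤ) ((∫ t in (-(1 / 2) : ℝ)..(1 / 2), gX X t) ^ 2))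
  have e1 : (1 / 2 - (-(1 / 2)) : ℝ)⁻¹ • ∫ x in (-(1 / 2) : ℝ)..(1 / 2), ‖(gX X x : ℂ)‖ ^ 2 =
      ∫ t in (-(1 / 2) : ℝ)..(1 / 2), gX X t ^ 2 := by
    simp only [Complex.norm_real, Real.norm_eq_abs, sq_abs]
    norm_num
  rw [e1] at h2
  refine h2.congr_fun ?_
  intro n
  by_cases hn : n = 0
  · subst hn
    rw [fourierCoeffOn_gX_zero]
    simp
  · rw [fourierCoeffOn_gX hX hX2 hn]
    simp only [hn, if_false, sub_zero, norm_div, norm_mul, div_pow, mul_pow]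
    simp
    norm_num

/-! ### The uniform measure on the circle -/

/-- The parametrization `t ↦ (cos 2πt, sin 2πt)` of the unit circle. -/
def eC (t : ℝ) : En 2 := !₂[Real.cos (2 * π * t), Real.sin (2 * π * t)]

/-- The standard isometric embedding of the complex unit circle. -/
def iotaC (z : Circle) : En 2 := Complex.orthonormalBasisOneI.repr (z : ℂ)

lemma iotaC_isometry : Isometry iotaC :=
  Complex.orthonormalBasisOneI.repr.isometry.comp isometry_subtype_coe

lemma iotaC_exp (t : ℝ) : iotaC (Circle.exp (2 * π * t)) = eC t := by
  ext i
  fin_cases i <;> simp [iotaC, eC, Complex.exp_re, Complex.exp_im]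

lemma range_iotaC : Set.range iotaC = Metric.sphere (0 : En 2) 1 := by
  ext v
  simp only [Set.mem_range, mem_sphere_iff_norm, sub_zero]
  constructor
  · rintro ⟨z, rfl⟩
    rw [iotaC, LinearIsometryEquiv.norm_map, Circle.norm_coe]
  · intro hv
    have h1 : ‖Complex.orthonormalBasisOneI.repr.symm v‖ = 1 := by
      rw [LinearIsometryEquiv.norm_map, hv]
    refine ⟨⟨Complex.orthonormalBasisOneI.repr.symm v, mem_sphere_zero_iff_norm.2 h1⟩, ?_⟩
    exact Complex.orthonormalBasisOneI.repr.apply_symm_apply v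

lemma unifSphere_eq_map (hms : MeasurableSpace Circle) (hbs : BorelSpace Circle) :
    unifSphere 2 = ((μH[1] : Measure Circle) Set.univ)⁻¹ • (μH[1] : Measure Circle).map iotaC := by
  have h1 := iotaC_isometry.map_hausdorffMeasure (d := 1) (Or.inl zero_le_one)
  rw [range_iotaC] at h1
  have h2 : (μH[1] : Measure (En 2)) (Metric.sphere 0 1) = (μH[1] : Measure Circle) Set.univ := by
    rw [← range_iotaC, ← Set.image_univ, iotaC_isometry.hausdorffMeasure_image (Or.inl zero_le_one)]
  have h3 : ((2 : ℕ) : ℝ) - 1 = 1 := by norm_num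
  rw [unifSphere, h3, h1, h2]

lemma hausdorff_circle_lt_top (hms : MeasurableSpace Circle) (hbs : BorelSpace Circle) :
    (μH[1] : Measure Circle) Set.univ < ⊤ := by
  have hlip : LipschitzWith 1 (fun t : ℝ => Circle.exp t) := by
    refine LipschitzWith.of_dist_le_mul fun x y => ?_
    change dist (Circle.exp x : ℂ) (Circle.exp y : ℂ) ≤ _
    rw [NNReal.coe_one, one_mul, dist_eq_norm, Circle.coe_exp, Circle.coe_exp]
    have h := Real.norm_exp_I_mul_ofReal_sub_one_le (x := x - y)
    have e : Complex.exp (x * Complex.I) - Complex.exp (y * Complex.I) =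
        Complex.exp (Complex.I * y) * (Complex.exp (Complex.I * ((x - y : ℝ) : ℂ)) - 1) := by
      rw [mul_sub, mul_one, ← Complex.exp_add]
      push_cast
      ring_nf
    rw [e, norm_mul, Complex.norm_exp_I_mul_ofReal, one_mul]
    exact h
  have hsurj : (fun t : ℝ => Circle.exp t) '' Set.Icc (-π) π = Set.univ := by
    ext z
    simp only [Set.mem_image, Set.mem_univ, iff_true]
    exact ⟨Complex.arg z, ⟨(Complex.neg_pi_lt_arg _).le, Complex.arg_le_pi _⟩, Circle.exp_arg z⟩
  rw [← hsurj]
  refine (hlip.hausdorffMeasure_image_le zero_le_one _).trans_lt ?_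
  rw [hausdorffMeasure_real]
  simp

lemma hausdorff_circle_pos (hms : MeasurableSpace Circle) (hbs : BorelSpace Circle) :
    (μH[1] : Measure Circle) Set.univ ≠ 0 := by
  intro h0
  have hlip : LipschitzWith 1 (fun z : Circle => (z : ℂ).re) := by
    refine LipschitzWith.of_dist_le_mul fun x y => ?_
    rw [NNReal.coe_one, one_mul, Real.dist_eq]
    change _ ≤ dist (x : ℂ) (y : ℂ)
    rw [Complex.dist_eq, ← Complex.sub_re]
    exact Complex.abs_re_le_norm _
  have h1 := hlip.hausdorffMeasure_image_le zero_le_one Set.univ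
  rw [h0, hausdorffMeasure_real] at h1
  have h2 : Set.Icc (-1 : ℝ) 1 ⊆ (fun z : Circle => (z : ℂ).re) '' Set.univ := by
    intro t ht
    refine ⟨Circle.exp (Real.arccos t), trivial, ?_⟩
    simp [Complex.exp_ofReal_mul_I_re, Real.cos_arccos ht.1 ht.2]
  have h3 := (measure_mono h2).trans h1
  rw [Real.volume_Icc, mul_zero, nonpos_iff_eq_zero, ENNReal.ofReal_eq_zero] at h3
  norm_num at h3

/-- The uniform measure on the circle is the push-forward of Lebesgue measure on a period. -/
lemma map_eC (c : ℝ) : (volume.restrict (Set.Ioc (0 : ℝ) 1)).map (fun u => eC (u + c)) =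
    unifSphere 2 := by
  let hms : MeasurableSpace Circle := borel Circle
  have hbs : BorelSpace Circle := ⟨rfl⟩
  have : Fact ((0 : ℝ) < 1) := ⟨zero_lt_one⟩
  rw [unifSphere_eq_map hms hbs]
  have hH0 := hausdorff_circle_pos hms hbs
  have hHt := hausdorff_circle_lt_top hms hbs
  let P : Measure Circle := (volume : Measure (AddCircle (1 : ℝ))).map AddCircle.toCircle
  have hcirc : Measurable (AddCircle.toCircle : AddCircle (1 : ℝ) → Circle) :=
    (AddCircle.continuous_toCircle).measurable
  have hP1 : P Set.univ = 1 := by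
    rw [Measure.map_apply hcirc MeasurableSet.univ, Set.preimage_univ, AddCircle.measure_univ,
      ENNReal.ofReal_one]
  have hPprob : IsProbabilityMeasure P := ⟨hP1⟩
  have hPinv : P.IsMulLeftInvariant := by
    constructor
    intro z
    obtain ⟨a, rfl⟩ := (AddCircle.homeomorphCircle (T := (1 : ℝ)) one_ne_zero).surjective z
    rw [AddCircle.homeomorphCircle_apply]
    rw [Measure.map_map (measurable_const_mul _) hcirc]
    have e : ((fun x => AddCircle.toCircle a * x) ∘ AddCircle.toCircle) =
        (AddCircle.toCircle : AddCircle (1 : ℝ) → Circle) ∘ (fun x => a + x) := by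
      funext x
      simp [AddCircle.toCircle_add]
    rw [e, ← Measure.map_map hcirc (measurable_const_add a), map_add_left_eq_self]
  have hHfin : IsFiniteMeasure (μH[1] : Measure Circle) := ⟨hHt⟩
  have hiso : IsIsometricSMul Circle Circle := by
    refine ⟨fun z => Isometry.of_dist_eq fun x y => ?_⟩
    change dist ((z * x : Circle) : ℂ) ((z * y : Circle) : ℂ) = dist (x : ℂ) (y : ℂ)
    rw [dist_eq_norm, dist_eq_norm, Circle.coe_mul, Circle.coe_mul, ← mul_sub, norm_mul,
      Circle.norm_coe, one_mul]
  have hHinv : (μH[1] : Measure Circle).IsMulLeftInvariant := by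
    constructor
    intro z
    exact (IsometryEquiv.constSMul z).map_hausdorffMeasure 1
  have hPhaar : P.IsHaarMeasure :=
    Measure.isHaarMeasure_of_isCompact_nonempty_interior P Set.univ isCompact_univ
      (by simp) (by rw [hP1]; exact one_ne_zero) (by rw [hP1]; exact ENNReal.one_ne_top)
  have e1 := Measure.isMulLeftInvariant_eq_smul (μH[1] : Measure Circle) P
  have hPH : P = ((μH[1] : Measure Circle) Set.univ)⁻¹ • (μH[1] : Measure Circle) := by
    generalize ((μH[1] : Measure Circle).haarScalarFactor P) = r at e1
    generalize (μH[1] : Measure Circle) = H at *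
    subst e1
    have h1 : (r • P) Set.univ = (r : ENNReal) := by
      rw [Measure.smul_apply, hP1, ENNReal.smul_def, smul_eq_mul, mul_one]
    rw [h1] at hH0 hHt ⊢
    change P = (r : ENNReal)⁻¹ • ((r : ENNReal) • P)
    rw [smul_smul, ENNReal.inv_mul_cancel hH0 hHt.ne, one_smul]
  have hiota : Measurable iotaC := iotaC_isometry.continuous.measurable
  rw [← Measure.map_smul, ← hPH, Measure.map_map hiota hcirc,
    ← (AddCircle.measurePreserving_mk (1 : ℝ) c).map_eq,
    Measure.map_map (hiota.comp hcirc) AddCircle.measurable_mk']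
  have hshift : (volume.restrict (Set.Ioc (0 : ℝ) 1)).map (fun u => u + c) =
      volume.restrict (Set.Ioc c (c + 1)) := by
    have h := ((measurePreserving_add_right (volume : Measure ℝ) c).restrict_preimage
      (measurableSet_Ioc (a := c) (b := c + 1))).map_eq
    simpa [add_comm] using h
  rw [← hshift, Measure.map_map ((hiota.comp hcirc).comp AddCircle.measurable_mk')
    (measurable_add_const c)]
  congr 1
  funext u
  simp only [Function.comp_apply]
  rw [AddCircle.toCircle_apply_mk, div_one, iotaC_exp]

/-! ### The quantile coupling -/

lemma dist_eC_sq_le (a b : ℝ) : dist (eC a) (eC b) ^ 2 ≤ (2 * π) ^ 2 * (a - b) ^ 2 := by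
  have h1 : dist (eC a) (eC b) ^ 2 = 2 - 2 * Real.cos (2 * π * (a - b)) := by
    rw [EuclideanSpace.dist_eq, Real.sq_sqrt (by positivity), Fin.sum_univ_two]
    simp only [eC, Real.dist_eq, sq_abs]
    have e : 2 * π * (a - b) = 2 * π * a - 2 * π * b := by ring
    rw [e, Real.cos_sub]
    have h1 := Real.sin_sq_add_cos_sq (2 * π * a)
    have h2 := Real.sin_sq_add_cos_sq (2 * π * b)
    simp
    linarith
  have h2 := Real.one_sub_sq_div_two_le_cos (x := 2 * π * (a - b))
  rw [h1]
  nlinarith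

lemma continuous_eC : Continuous eC := by
  have : eC = fun t => iotaC (Circle.exp (2 * π * t)) := funext fun t => (iotaC_exp t).symm
  rw [this]
  exact iotaC_isometry.continuous.comp (Circle.exp.continuous.comp (by fun_prop))

/-- Quantile coupling: transporting a shifted Lebesgue measure monotonically onto the atoms bounds
the transport cost to the uniform measure by the variance of the discrepancy function `gX`. -/
lemma W2sq_le_variance {X : Finset ℝ} (hX : X.Nonempty)
    (hX2 : ∀ x ∈ X, x ∈ Set.Ioc (-(1 / 2) : ℝ) (1 / 2)) :
    W2sq ((muX X).map eC) (unifSphere 2) ≤ (2 * π) ^ 2 *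
      ((∫ t in (-(1 / 2) : ℝ)..(1 / 2), gX X t ^ 2) -
        (∫ t in (-(1 / 2) : ℝ)..(1 / 2), gX X t) ^ 2) := by
  set c : ℝ := -∫ t in (-(1 / 2) : ℝ)..(1 / 2), gX X t with hc
  let ν : Measure ℝ := volume.restrict (Set.Ioc (0 : ℝ) 1)
  have hT : AEMeasurable (Tq X) ν := Tq_aemeasurable hX
  have hE : Measurable eC := continuous_eC.measurable
  have hF : AEMeasurable (fun u : ℝ => (eC (Tq X u), eC (u + (c - 1 / 2)))) ν :=
    (hE.comp_aemeasurable hT).prodMk (hE.comp (measurable_add_const _)).aemeasurable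
  have hmem : (∫ p, dist p.1 p.2 ^ 2 ∂(ν.map (fun u : ℝ => (eC (Tq X u), eC (u + (c - 1 / 2)))))) ∈
      {r : ℝ | ∃ ρ : Measure (En 2 × En 2), ρ.map Prod.fst = (muX X).map eC ∧
        ρ.map Prod.snd = unifSphere 2 ∧ r = ∫ p, dist p.1 p.2 ^ 2 ∂ρ} := by
    refine ⟨_, ?_, ?_, rfl⟩
    · rw [AEMeasurable.map_map_of_aemeasurable measurable_fst.aemeasurable hF, ← map_Tq hX,
        AEMeasurable.map_map_of_aemeasurable hE.aemeasurable hT]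
      rfl
    · rw [AEMeasurable.map_map_of_aemeasurable measurable_snd.aemeasurable hF]
      exact map_eC (c - 1 / 2)
  have hbdd : BddBelow {r : ℝ | ∃ ρ : Measure (En 2 × En 2), ρ.map Prod.fst = (muX X).map eC ∧
        ρ.map Prod.snd = unifSphere 2 ∧ r = ∫ p, dist p.1 p.2 ^ 2 ∂ρ} := by
    refine ⟨0, ?_⟩
    rintro r ⟨ρ, -, -, rfl⟩
    exact integral_nonneg fun p => by positivity
  have h1 : W2sq ((muX X).map eC) (unifSphere 2) ≤ _ := csInf_le hbdd hmem
  refine h1.trans ?_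
  rw [integral_map hF (by fun_prop)]
  have hint : IntervalIntegrable (fun u => (Tq X u - (u - 1 / 2) - c) ^ 2) volume 0 1 := by
    rw [intervalIntegrable_iff_integrableOn_Ioc_of_le zero_le_one]
    have hb : ∀ᵐ u ∂ν, ‖(Tq X u - (u - 1 / 2) - c) ^ 2‖ ≤ (1 + |c|) ^ 2 := by
      filter_upwards [ae_restrict_mem measurableSet_Ioc] with u hu
      have h2 := hX2 _ (Tq_mem hX hu.2).1
      rw [norm_pow, Real.norm_eq_abs]
      gcongr
      refine (abs_sub _ _).trans ?_
      gcongr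
      rw [abs_le]
      constructor <;> linarith [h2.1, h2.2, hu.1, hu.2]
    have : IsFiniteMeasure ν := inferInstance
    refine Integrable.of_bound ?_ _ hb
    exact (((hT.sub (measurable_id.sub_const _).aemeasurable).sub_const c).pow_const
      2).aestronglyMeasurable
  have h3 : ∫ u, dist (eC (Tq X u)) (eC (u + (c - 1 / 2))) ^ 2 ∂ν ≤
      ∫ u, (2 * π) ^ 2 * (Tq X u - (u - 1 / 2) - c) ^ 2 ∂ν := by
    refine integral_mono_of_nonneg (ae_of_all _ fun u => by positivity) ?_
      (ae_of_all _ fun u => ?_)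
    · rw [intervalIntegrable_iff_integrableOn_Ioc_of_le zero_le_one] at hint
      exact hint.const_mul _
    · refine (dist_eC_sq_le _ _).trans (le_of_eq ?_)
      ring
  refine h3.trans (le_of_eq ?_)
  rw [integral_const_mul, ← intervalIntegral.integral_of_le zero_le_one, integral_Tq_sq hX hX2]
  have hg2 : IntervalIntegrable (fun t => gX X t ^ 2) volume (-(1 / 2)) (1 / 2) := by
    rw [intervalIntegrable_iff_integrableOn_Ioc_of_le (by norm_num)]
    refine Measure.integrableOn_of_bounded (M := 2 ^ 2) (by simp)
      ((gX_measurable X).pow_const 2).aestronglyMeasurable ?_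
    filter_upwards [ae_restrict_mem measurableSet_Ioc] with t ht
    rw [norm_pow, Real.norm_eq_abs]
    gcongr
    exact gX_bound X ht
  have hg1 : IntervalIntegrable (fun t => gX X t) volume (-(1 / 2)) (1 / 2) := by
    rw [intervalIntegrable_iff_integrableOn_Ioc_of_le (by norm_num)]
    refine Measure.integrableOn_of_bounded (M := 2) (by simp)
      (gX_measurable X).aestronglyMeasurable ?_
    filter_upwards [ae_restrict_mem measurableSet_Ioc] with t ht
    exact gX_bound X ht
  change _ * (c ^ 2 + ∫ t in (-(1 / 2) : ℝ)..(1 / 2), (gX X t ^ 2 + 2 * c * gX X t)) = _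
  rw [intervalIntegral.integral_add hg2 (hg1.const_mul _), intervalIntegral.integral_const_mul]
  have e : (∫ t in (-(1 / 2) : ℝ)..(1 / 2), gX X t) = -c := by rw [hc, neg_neg]
  rw [e]
  ring

/-- The transport cost is bounded by the sum of `|μ̂(n)|² / n²` over non-zero frequencies. -/
lemma W2sq_le_tsum {X : Finset ℝ} (hX : X.Nonempty)
    (hX2 : ∀ x ∈ X, x ∈ Set.Ioc (-(1 / 2) : ℝ) (1 / 2)) :
    ∃ S, HasSum (fun n : ℤ => if n = 0 then 0 else ‖muhat X n‖ ^ 2 / (n : ℝ) ^ 2) S ∧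
      W2sq ((muX X).map eC) (unifSphere 2) ≤ S := by
  refine ⟨_, ?_, W2sq_le_variance hX hX2⟩
  have h := (hasSum_muhat hX hX2).mul_left ((2 * π) ^ 2)
  refine h.congr_fun fun n => ?_
  split_ifs with hn
  · simp
  · have : (n : ℝ) ≠ 0 := by exact_mod_cast hn
    field_simp
    ring

/-! ### Lattice points on the circle -/

/-- The angle of a Gaussian integer, in units of a full turn. -/
def angle (z : GaussianInt) : ℝ := Complex.arg (z : ℂ) / (2 * π)

/-- The angles of the Gaussian integers of norm `m`. -/
def angles (m : ℕ) : Finset ℝ := (gset m).image angle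

lemma two_pi_mul_angle (z : GaussianInt) : 2 * π * angle z = Complex.arg (z : ℂ) := by
  unfold angle
  field_simp

lemma angle_mem (z : GaussianInt) : angle z ∈ Set.Ioc (-(1 / 2) : ℝ) (1 / 2) := by
  have h1 := Complex.neg_pi_lt_arg (z : ℂ)
  have h2 := Complex.arg_le_pi (z : ℂ)
  have hp := Real.pi_pos
  unfold angle
  constructor
  · rw [lt_div_iff₀ (by positivity)]; linarith
  · rw [div_le_iff₀ (by positivity)]; linarith

lemma norm_gset {m : ℕ} {z : GaussianInt} (hz : z ∈ gset m) : ‖(z : ℂ)‖ = √(m : ℝ) := by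
  rw [mem_gset] at hz
  have h := gnorm_sq z
  rw [hz] at h
  rw [← Real.sqrt_sq (norm_nonneg (z : ℂ)), h]
  simp

lemma exp_angle {m : ℕ} (hm : m ≠ 0) {z : GaussianInt} (hz : z ∈ gset m) :
    Complex.exp (2 * π * Complex.I * angle z) = (z : ℂ) / (‖(z : ℂ)‖ : ℂ) := by
  have h0 : (‖(z : ℂ)‖ : ℂ) ≠ 0 := by
    rw [norm_gset hz]
    exact_mod_cast (Real.sqrt_pos.2 (by exact_mod_cast Nat.pos_of_ne_zero hm)).ne'
  rw [eq_div_iff h0]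
  have h := Complex.norm_mul_exp_arg_mul_I (z : ℂ)
  rw [← two_pi_mul_angle] at h
  rw [mul_comm]
  convert h using 3
  push_cast
  ring

lemma eC_angle {m : ℕ} (hm : m ≠ 0) {z : GaussianInt} (hz : z ∈ gset m) :
    eC (angle z) = !₂[(z.re : ℝ) / √(m : ℝ), (z.im : ℝ) / √(m : ℝ)] := by
  have h := norm_gset hz
  have h0 : (z : ℂ) ≠ 0 := by
    rw [← norm_ne_zero_iff, h]
    exact (Real.sqrt_pos.2 (by exact_mod_cast Nat.pos_of_ne_zero hm)).ne'
  rw [eC, two_pi_mul_angle, Complex.cos_arg h0, Complex.sin_arg, h]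
  simp

lemma eC_angle_injOn {m : ℕ} (hm : m ≠ 0) :
    Set.InjOn (fun z => eC (angle z)) (gset m : Set GaussianInt) := by
  intro z hz w hw h
  have hs : √(m : ℝ) ≠ 0 := (Real.sqrt_pos.2 (by exact_mod_cast Nat.pos_of_ne_zero hm)).ne'
  simp only [eC_angle hm (Finset.mem_coe.1 hz), eC_angle hm (Finset.mem_coe.1 hw)] at h
  have h0 := congrArg (fun v : En 2 => v 0) h
  have h1 := congrArg (fun v : En 2 => v 1) h
  simp only [Matrix.cons_val_zero, Matrix.cons_val_one] at h0 h1
  rw [div_left_inj' hs] at h0 h1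
  exact Zsqrtd.ext (by exact_mod_cast h0) (by exact_mod_cast h1)

lemma angle_injOn {m : ℕ} (hm : m ≠ 0) : Set.InjOn angle (gset m : Set GaussianInt) :=
  fun _ hz _ hw h => eC_angle_injOn hm hz hw (congrArg eC h)

lemma Lam_eq {m : ℕ} (hm : m ≠ 0) :
    Lam 2 m = ((gset m).image (fun z => eC (angle z)) : Finset (En 2)) := by
  have hs : √(m : ℝ) ≠ 0 := (Real.sqrt_pos.2 (by exact_mod_cast Nat.pos_of_ne_zero hm)).ne'
  have hsq : √(m : ℝ) ^ 2 = m := Real.sq_sqrt (Nat.cast_nonneg m)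
  have key : ∀ z : GaussianInt, (z.norm : ℝ) = z.re ^ 2 + z.im ^ 2 := by
    intro z; rw [Zsqrtd.norm_def]; push_cast; ring
  ext v
  simp only [Finset.coe_image, Set.mem_image, Finset.mem_coe]
  constructor
  · rintro ⟨h1, h2⟩
    obtain ⟨a, ha⟩ := h2 0
    obtain ⟨b, hb⟩ := h2 1
    have h3 : v 0 ^ 2 + v 1 ^ 2 = 1 := by
      have := EuclideanSpace.norm_sq_eq v
      rw [h1, Fin.sum_univ_two] at this
      simpa using this.symm
    rw [ha, hb, div_pow, div_pow, hsq, ← add_div, div_eq_one_iff_eq (Nat.cast_ne_zero.2 hm)] at h3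
    have hz : (⟨a, b⟩ : GaussianInt) ∈ gset m := by
      rw [mem_gset]
      have := key ⟨a, b⟩
      simp only at this
      rw [h3] at this
      exact_mod_cast this
    refine ⟨⟨a, b⟩, hz, ?_⟩
    rw [eC_angle hm hz]
    ext i
    fin_cases i
    · exact ha.symm
    · exact hb.symm
  · rintro ⟨z, hz, rfl⟩
    rw [eC_angle hm hz]
    have hzn := mem_gset.1 hz
    refine ⟨?_, fun i => ?_⟩
    · rw [EuclideanSpace.norm_eq, Real.sqrt_eq_one, Fin.sum_univ_two]
      have h4 := key z
      rw [hzn] at h4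
      simp only [Matrix.cons_val_zero, Matrix.cons_val_one, Real.norm_eq_abs,
        sq_abs, div_pow, hsq]
      rw [← add_div, ← h4]
      have : (m : ℝ) ≠ 0 := by exact_mod_cast hm
      simp [this]
    · fin_cases i
      · exact ⟨z.re, rfl⟩
      · exact ⟨z.im, rfl⟩

lemma rhoM_eq {m : ℕ} (hm : m ≠ 0) : rhoM 2 m = (muX (angles m)).map eC := by
  classical
  have hE : Measurable eC := continuous_eC.measurable
  have hcard : (angles m).card = (gset m).card := Finset.card_image_of_injOn (angle_injOn hm)
  have hr : rcnt 2 m = (gset m).card := by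
    rw [rcnt, Lam_eq hm, Nat.card_coe_set_eq, Set.ncard_coe_finset,
      Finset.card_image_of_injOn (eC_angle_injOn hm)]
  rw [rhoM, muX, Measure.map_smul, hcard, hr]
  congr 1
  rw [Lam_eq hm]
  ext s hs
  have hset : s ∩ ((gset m).image (fun z => eC (angle z)) : Finset (En 2)) =
      (((gset m).filter (fun z => eC (angle z) ∈ s)).image (fun z => eC (angle z)) :
        Finset (En 2)) := by
    ext v
    simp only [Set.mem_inter_iff, Finset.mem_coe, Finset.mem_image, Finset.mem_filter]
    constructor
    · rintro ⟨hv, z, hz, rfl⟩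
      exact ⟨z, ⟨hz, hv⟩, rfl⟩
    · rintro ⟨z, ⟨hz, hv⟩, rfl⟩
      exact ⟨hv, z, hz, rfl⟩
  rw [Measure.restrict_apply hs, Measure.map_apply hE hs, Measure.finsetSum_apply, hset,
    Measure.count_apply_finset, angles, Finset.sum_image (angle_injOn hm),
    Finset.card_image_of_injOn ((eC_angle_injOn hm).mono (Finset.coe_subset.2 (Finset.filter_subset _ _)))]
  simp only [Measure.dirac_apply' _ (hE hs), Set.indicator_apply, Set.mem_preimage, Pi.one_apply]
  rw [Finset.sum_boole]

/-- Sum of the `(-n)`-th powers of the directions of the Gaussian integers of norm `m`. -/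
def dirSum (m : ℕ) (n : ℤ) : ℂ := ∑ z ∈ gset m, ((z : ℂ) / (‖(z : ℂ)‖ : ℂ)) ^ (-n)

lemma muhat_angles {m : ℕ} (hm : m ≠ 0) (n : ℤ) :
    muhat (angles m) n = dirSum m n / (gset m).card := by
  have hcard : (angles m).card = (gset m).card := Finset.card_image_of_injOn (angle_injOn hm)
  rw [muhat, hcard, angles, Finset.sum_image (angle_injOn hm), dirSum]
  congr 1
  refine Finset.sum_congr rfl fun z hz => ?_
  rw [← exp_angle hm hz, ← Complex.exp_int_mul]
  congr 1
  push_cast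
  ring

lemma exists_rot : ∃ u : GaussianInt, (u : ℂ) = Complex.I ∧
    (∀ z : GaussianInt, (u * z).norm = z.norm) ∧ u * u = -1 := by
  refine ⟨⟨0, 1⟩, ?_, fun z => ?_, by decide +kernel⟩
  · apply Complex.ext <;> simp
  · rw [Zsqrtd.norm_mul]; simp [Zsqrtd.norm_def]

lemma dirSum_rot (m : ℕ) (n : ℤ) : dirSum m n = Complex.I ^ (-n) * dirSum m n := by
  obtain ⟨u, hu, hnorm, huu⟩ := exists_rot
  have hu0 : u ≠ 0 := by
    intro h
    rw [h, GaussianInt.toComplex_zero] at hu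
    exact Complex.I_ne_zero hu.symm
  conv_lhs => rw [dirSum]
  rw [dirSum, Finset.mul_sum]
  symm
  refine Finset.sum_bij (fun z _ => u * z) ?_ ?_ ?_ ?_
  · intro z hz
    rw [mem_gset] at hz ⊢
    rw [hnorm, hz]
  · intro z _ w _ h
    exact mul_left_cancel₀ hu0 h
  · intro z hz
    refine ⟨-u * z, ?_, ?_⟩
    · rw [mem_gset] at hz ⊢
      rw [neg_mul, Zsqrtd.norm_neg, hnorm, hz]
    · rw [neg_mul, mul_neg, ← mul_assoc, huu, neg_one_mul, neg_neg]
  · intro z _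
    rw [GaussianInt.toComplex_mul, hu, norm_mul, Complex.norm_I, one_mul, mul_div_assoc,
      mul_zpow]

lemma I_zpow_ne_one {n : ℤ} (hn : ¬ (4 : ℤ) ∣ n) : Complex.I ^ (-n) ≠ 1 := by
  intro h1
  have h2 := Int.emod_add_mul_ediv (-n) 4
  have h3 := Int.emod_nonneg (-n) (b := 4) (by norm_num)
  have h4 := Int.emod_lt_of_pos (-n) (b := 4) (by norm_num)
  have hI4 : Complex.I ^ (4 : ℤ) = 1 := by exact_mod_cast Complex.I_pow_four
  rw [← h2, zpow_add₀ Complex.I_ne_zero, zpow_mul, hI4, one_zpow, mul_one] at h1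
  have h5 : (-n) % 4 ≠ 0 := fun h => hn (dvd_neg.1 (Int.dvd_of_emod_eq_zero h))
  generalize (-n) % 4 = r at h1 h3 h4 h5
  lift r to ℕ using h3
  rw [zpow_natCast] at h1
  have h6 : r = 1 ∨ r = 2 ∨ r = 3 := by omega
  rcases h6 with rfl | rfl | rfl
  · have := congrArg Complex.re h1
    norm_num at this
  · rw [Complex.I_sq] at h1
    norm_num at h1
  · rw [Complex.I_pow_three] at h1
    have := congrArg Complex.re h1
    norm_num at this

/-- Invariance of the lattice points under rotation by a right angle kills every frequency not
divisible by four. -/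
lemma dirSum_eq_zero (m : ℕ) {n : ℤ} (hn : ¬ (4 : ℤ) ∣ n) : dirSum m n = 0 := by
  have h : (Complex.I ^ (-n) - 1) * dirSum m n = 0 := by
    rw [sub_mul, one_mul, ← dirSum_rot, sub_self]
  exact (mul_eq_zero.1 h).resolve_left (sub_ne_zero.2 (I_zpow_ne_one hn))

lemma norm_dirSum {m : ℕ} (k : ℕ) : ‖dirSum m (-(4 * k : ℤ))‖ = 4 * |A k m| := by
  have : dirSum m (-(4 * k : ℤ)) = 4 * Ac k m := by
    rw [dirSum, Ac]
    simp only [psi, neg_neg]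
    rw [← mul_assoc]
    norm_num
    refine Finset.sum_congr rfl fun z _ => ?_
    exact_mod_cast rfl
  rw [this, norm_mul, ← ofReal_A, Complex.norm_real]
  norm_num

lemma norm_dirSum_neg {m : ℕ} (hm : m ≠ 0) (n : ℤ) : ‖dirSum m (-n)‖ = ‖dirSum m n‖ := by
  rw [← RCLike.norm_conj (dirSum m n)]
  congr 1
  rw [dirSum, dirSum, map_sum]
  refine Finset.sum_congr rfl fun z hz => ?_
  have h0 : (‖(z : ℂ)‖) ≠ 0 := by
    rw [norm_gset hz]
    exact (Real.sqrt_pos.2 (by exact_mod_cast Nat.pos_of_ne_zero hm)).ne'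
  have h1 : ‖(z : ℂ) / (‖(z : ℂ)‖ : ℂ)‖ = 1 := by
    rw [norm_div, Complex.norm_real, norm_norm, div_self h0]
  rw [map_zpow₀, ← Complex.inv_eq_conj h1, inv_zpow', neg_neg]

lemma gset_nonempty {m : ℕ} (hm : m ∈ S₂) : (gset m).Nonempty := by
  obtain ⟨-, a, b, h⟩ := hm
  refine ⟨⟨a, b⟩, ?_⟩
  rw [mem_gset, Zsqrtd.norm_def, h]
  ring

lemma norm_muhat_four {m : ℕ} (hm : m ∈ S₂) (k : ℕ) :
    ‖muhat (angles m) (-(4 * k : ℤ))‖ ^ 2 = fk k m := by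
  have hm0 : m ≠ 0 := Nat.one_le_iff_ne_zero.1 hm.1
  rw [muhat_angles hm0, norm_div, norm_dirSum, fk, A_zero_eq, div_pow, div_pow, Complex.norm_natCast,
    mul_pow, sq_abs]
  field_simp

/-- The transport cost of `ρ_m` in terms of the normalized squared Weyl sums. -/
lemma W2sq_rhoM_le {m : ℕ} (hm : m ∈ S₂) :
    ∃ S, HasSum (fun k : ℕ => fk k m / (8 * (k : ℝ) ^ 2)) S ∧
      W2sq (rhoM 2 m) (unifSphere 2) ≤ S := by
  have hm0 : m ≠ 0 := Nat.one_le_iff_ne_zero.1 hm.1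
  obtain ⟨S, hS, hle⟩ := W2sq_le_tsum (X := angles m) ((gset_nonempty hm).image _) (by
    intro x hx
    obtain ⟨z, -, rfl⟩ := Finset.mem_image.1 hx
    exact angle_mem z)
  refine ⟨S, ?_, rhoM_eq hm0 ▸ hle⟩
  have hinj : Function.Injective (fun l : ℤ => 4 * l) := fun a b h => by
    simp only at h; omega
  rw [← hinj.hasSum_iff] at hS
  · have h := hS.nat_add_neg
    simp only [Function.comp_apply, mul_zero, if_true, add_zero] at h
    refine h.congr_fun fun k => ?_
    rcases eq_or_ne k 0 with rfl | hk
    · simp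
    · have hk' : (k : ℤ) ≠ 0 := by exact_mod_cast hk
      have e1 : ‖muhat (angles m) (4 * (k : ℤ))‖ = ‖muhat (angles m) (-(4 * k : ℤ))‖ := by
        rw [muhat_angles hm0, muhat_angles hm0, norm_div, norm_div, norm_dirSum_neg hm0]
      rw [if_neg (by omega), if_neg (by omega), mul_neg, e1, norm_muhat_four hm]
      have : (k : ℝ) ≠ 0 := by exact_mod_cast hk
      push_cast
      field_simp
      ring
  · intro n hn
    have h4 : ¬ (4 : ℤ) ∣ n := fun ⟨l, hl⟩ => hn ⟨l, hl.symm⟩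
    rw [muhat_angles hm0, dirSum_eq_zero m h4]
    simp

/-! ### Sparsity of the exceptional elements -/

/-- The squared transport distance of `ρ_m` to the uniform measure. -/
def W (m : ℕ) : ℝ := W2sq (rhoM 2 m) (unifSphere 2)

lemma W_nonneg (m : ℕ) : 0 ≤ W m := by
  refine Real.sInf_nonneg ?_
  rintro c ⟨ρ, -, -, rfl⟩
  exact integral_nonneg fun p => by positivity

lemma summable_inv_sq : Summable (fun k : ℕ => 1 / (8 * (k : ℝ) ^ 2)) := by
  have h : Summable (fun k : ℕ => ((k : ℝ) ^ 2)⁻¹) := Real.summable_nat_pow_inv.2 (by norm_num)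
  refine (h.mul_left (1 / 8)).congr fun k => ?_
  rw [one_div, one_div, mul_inv]

lemma summable_fk_freq {m : ℕ} (hm : m ≠ 0) : Summable (fun k : ℕ => fk k m / (8 * (k : ℝ) ^ 2)) := by
  refine Summable.of_nonneg_of_le (fun k => div_nonneg (fk_nonneg k m) (by positivity))
    (fun k => ?_) summable_inv_sq
  gcongr
  exact fk_le_one k hm

lemma summable_freq : Summable (fun k : ℕ => (k : ℝ) ^ (1 / 4 : ℝ) / (8 * (k : ℝ) ^ 2)) := by
  have h : Summable (fun k : ℕ => (k : ℝ) ^ (-(7 / 4) : ℝ)) :=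
    Real.summable_nat_rpow.2 (by norm_num)
  refine (h.mul_left (1 / 8)).congr fun k => ?_
  rcases eq_or_ne k 0 with rfl | hk
  · norm_num
  · have hk' : (0 : ℝ) < k := by exact_mod_cast Nat.pos_of_ne_zero hk
    rw [← Real.rpow_natCast, mul_comm (8 : ℝ), ← div_div, ← Real.rpow_sub hk']
    norm_num
    ring

/-- Mean value bound for the transport cost, obtained by summing `sum_fk_le` over the frequencies;
the sum over `k` converges because `1 / 4 - 2 < -1`. -/
lemma sum_W_le : ∃ C, 0 < C ∧ ∀ N : ℕ, 3 ≤ N →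
    ∑ m ∈ Finset.Icc 1 N, hind m * W m ≤ C * N * Real.log N ^ (-(3 / 4) : ℝ) := by
  obtain ⟨C, hC, h⟩ := sum_fk_le
  set K := ∑' k : ℕ, (k : ℝ) ^ (1 / 4 : ℝ) / (8 * (k : ℝ) ^ 2) with hK
  have hK0 : 0 ≤ K := tsum_nonneg fun k => by positivity
  refine ⟨C * K + 1, by positivity, fun N hN => ?_⟩
  have hL : 0 ≤ Real.log N := Real.log_natCast_nonneg N
  have h1 : ∀ m ∈ Finset.Icc 1 N, hind m * W m ≤ ∑' k : ℕ, fk k m / (8 * (k : ℝ) ^ 2) := by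
    intro m _
    by_cases hm : m ∈ S₂
    · obtain ⟨S, hS, hle⟩ := W2sq_rhoM_le hm
      rw [hind_of_mem hm, one_mul, hS.tsum_eq]
      exact hle
    · rw [hind_of_not_mem hm, zero_mul]
      exact tsum_nonneg fun k => div_nonneg (fk_nonneg k m) (by positivity)
  have hs : ∀ m ∈ Finset.Icc 1 N, Summable (fun k : ℕ => fk k m / (8 * (k : ℝ) ^ 2)) := by
    intro m hm
    exact summable_fk_freq (by have := (Finset.mem_Icc.1 hm).1; omega)
  set R := C * N * Real.log N ^ (-(3 / 4) : ℝ) with hR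
  have hR0 : 0 ≤ R := by positivity
  calc ∑ m ∈ Finset.Icc 1 N, hind m * W m
      ≤ ∑ m ∈ Finset.Icc 1 N, ∑' k : ℕ, fk k m / (8 * (k : ℝ) ^ 2) := Finset.sum_le_sum h1
    _ = ∑' k : ℕ, ∑ m ∈ Finset.Icc 1 N, fk k m / (8 * (k : ℝ) ^ 2) :=
        (Summable.tsum_finsetSum hs).symm
    _ ≤ ∑' k : ℕ, R * ((k : ℝ) ^ (1 / 4 : ℝ) / (8 * (k : ℝ) ^ 2)) := by
        refine Summable.tsum_le_tsum (fun k => ?_) (summable_sum hs) (summable_freq.mul_left R)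
        rcases eq_or_ne k 0 with rfl | hk
        · simp
        · rw [← Finset.sum_div, mul_div_assoc']
          gcongr
          refine (h k hk N hN).trans (le_of_eq ?_)
          rw [hR]; ring
    _ = R * K := by rw [tsum_mul_left]
    _ ≤ _ := by
        have : 0 ≤ N * Real.log N ^ (-(3 / 4) : ℝ) := by positivity
        rw [hR]
        nlinarith

/-- If exceptional elements of `S₂` have transport distance at least `(log m)^{-1/5}`, then they
have relative density zero. -/
lemma relDensityOne_of_exceptional {A : Set ℕ} (hA : A ⊆ S₂)
    (hex : ∀ m ∈ S₂, m ∉ A → 3 ≤ m → Real.log m ^ (-(1 / 5) : ℝ) ≤ W m) :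
    HasRelDensityOne A S₂ := by
  classical
  obtain ⟨C, hC, hW⟩ := sum_W_le
  obtain ⟨c, hc, N₀, hN₀, hS⟩ := sum_hind_ge
  have hcard : ∀ (B : Set ℕ) (N : ℕ), (Nat.card ↥(B ∩ Set.Icc 1 N) : ℝ) =
      ((Finset.Icc 1 N).filter (· ∈ B)).card := by
    intro B N
    rw [Nat.card_coe_set_eq, ← Set.ncard_coe_finset]
    congr 2
    ext m
    simp only [Set.mem_inter_iff, Set.mem_Icc, Finset.coe_filter, Finset.mem_Icc, Set.mem_ofPred_eq]
    tauto
  set s : ℕ → ℝ := fun N => ((Finset.Icc 1 N).filter (· ∈ S₂)).card with hs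
  set b : ℕ → ℝ := fun N => ((Finset.Icc 1 N).filter (fun m => m ∈ S₂ ∧ m ∉ A)).card with hb
  have hsum : ∀ N, s N = ∑ m ∈ Finset.Icc 1 N, hind m := by
    intro N
    rw [hs]
    simp only [Finset.card_filter, Nat.cast_sum]
    refine Finset.sum_congr rfl fun m _ => ?_
    by_cases hm : m ∈ S₂
    · rw [hind_of_mem hm, if_pos hm, Nat.cast_one]
    · rw [hind_of_not_mem hm, if_neg hm, Nat.cast_zero]
  have hab : ∀ N, (((Finset.Icc 1 N).filter (· ∈ A)).card : ℝ) = s N - b N := by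
    intro N
    have h := Finset.card_filter_add_card_filter_not (s := (Finset.Icc 1 N).filter (· ∈ S₂)) (· ∈ A)
    rw [Finset.filter_filter, Finset.filter_filter] at h
    have e : (Finset.Icc 1 N).filter (fun m => m ∈ S₂ ∧ m ∈ A) = (Finset.Icc 1 N).filter (· ∈ A) :=
      Finset.filter_congr fun m _ => ⟨fun h => h.2, fun h => ⟨hA h, h⟩⟩
    rw [e] at h
    simp only [hs, hb]
    rw [← h]
    push_cast
    ring
  -- the exceptional set is small by Markov's inequality
  have hbound : ∀ N : ℕ, 3 ≤ N → b N ≤ 2 + C * N * Real.log N ^ (-(11 / 20) : ℝ) := by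
    intro N hN
    have hL : 1 ≤ Real.log N := by
      rw [Real.le_log_iff_exp_le (by positivity)]
      have : (3 : ℝ) ≤ N := by exact_mod_cast hN
      linarith [Real.exp_one_lt_d9]
    have h1 : b N ≤ ∑ m ∈ Finset.Icc 1 N,
        ((if m < 3 then 1 else 0) + Real.log N ^ (1 / 5 : ℝ) * (hind m * W m)) := by
      simp only [hb, Finset.card_filter, Nat.cast_sum]
      refine Finset.sum_le_sum fun m hm => ?_
      have hmN : (m : ℝ) ≤ N := by exact_mod_cast (Finset.mem_Icc.1 hm).2
      have h0 : 0 ≤ Real.log N ^ (1 / 5 : ℝ) * (hind m * W m) :=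
        mul_nonneg (by positivity) (mul_nonneg (hind_nonneg m) (W_nonneg m))
      by_cases h3 : m < 3
      · rw [if_pos h3]
        have : (((if m ∈ S₂ ∧ m ∉ A then 1 else 0 : ℕ)) : ℝ) ≤ 1 := by split_ifs <;> norm_num
        linarith
      · rw [if_neg h3, zero_add]
        split_ifs with hmA
        · have hm3 : (3 : ℝ) ≤ m := by exact_mod_cast not_lt.1 h3
          have hlm : 0 < Real.log m := Real.log_pos (by linarith)
          have h2 : Real.log N ^ (-(1 / 5) : ℝ) ≤ W m := by
            refine le_trans ?_ (hex m hmA.1 hmA.2 (not_lt.1 h3))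
            exact Real.rpow_le_rpow_of_nonpos hlm (Real.log_le_log (by linarith) hmN) (by norm_num)
          rw [hind_of_mem hmA.1, one_mul, Nat.cast_one]
          calc (1 : ℝ) = Real.log N ^ (1 / 5 : ℝ) * Real.log N ^ (-(1 / 5) : ℝ) := by
                rw [← Real.rpow_add (by linarith)]; norm_num
            _ ≤ _ := by gcongr
        · rw [Nat.cast_zero]
          exact h0
    refine h1.trans ?_
    rw [Finset.sum_add_distrib, ← Finset.mul_sum]
    refine add_le_add ?_ ?_
    · rw [← Finset.sum_filter]
      have : (Finset.Icc 1 N).filter (fun m => m < 3) ⊆ {1, 2} := by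
        intro m hm
        simp only [Finset.mem_filter, Finset.mem_Icc] at hm
        simp only [Finset.mem_insert, Finset.mem_singleton]
        omega
      have h2 := Finset.card_le_card this
      rw [Finset.sum_const, nsmul_eq_mul, mul_one]
      exact_mod_cast h2
    · calc Real.log N ^ (1 / 5 : ℝ) * ∑ m ∈ Finset.Icc 1 N, hind m * W m
          ≤ Real.log N ^ (1 / 5 : ℝ) * (C * N * Real.log N ^ (-(3 / 4) : ℝ)) := by
            gcongr
            exact hW N hN
        _ = C * N * (Real.log N ^ (1 / 5 : ℝ) * Real.log N ^ (-(3 / 4) : ℝ)) := by ring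
        _ = _ := by
            rw [← Real.rpow_add (by linarith)]
            norm_num
  have hlogN : Tendsto (fun N : ℕ => Real.log N) atTop atTop :=
    Real.tendsto_log_atTop.comp tendsto_natCast_atTop_atTop
  have hlim : Tendsto (fun N : ℕ => (2 / c) * (Real.log N / N) +
      (C / c) * Real.log N ^ (-(1 / 20) : ℝ)) atTop (nhds 0) := by
    have h1 : Tendsto (fun N : ℕ => Real.log N / N) atTop (nhds 0) := by
      have := (Real.tendsto_pow_log_div_mul_add_atTop 1 0 1 one_ne_zero).comp
        tendsto_natCast_atTop_atTop
      simpa [Function.comp_def] using this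
    have h2 : Tendsto (fun N : ℕ => Real.log N ^ (-(1 / 20) : ℝ)) atTop (nhds 0) :=
      (tendsto_rpow_neg_atTop (by norm_num)).comp hlogN
    simpa using (h1.const_mul (2 / c)).add (h2.const_mul (C / c))
  have hratio : Tendsto (fun N => b N / s N) atTop (nhds 0) := by
    refine squeeze_zero' (Eventually.of_forall fun N => by simp only [hb, hs]; positivity) ?_ hlim
    filter_upwards [eventually_ge_atTop N₀] with N hN
    have hN3 : 3 ≤ N := hN₀.trans hN
    have hNr : (3 : ℝ) ≤ N := by exact_mod_cast hN3
    have hL : 1 ≤ Real.log N := by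
      rw [Real.le_log_iff_exp_le (by positivity)]
      linarith [Real.exp_one_lt_d9]
    have hL0 : 0 < Real.log N := by linarith
    have hsN := hS N hN
    rw [← hsum] at hsN
    have hN0 : (0 : ℝ) < N := by linarith
    have hpos : 0 < c * N * Real.log N ^ (-(1 / 2) : ℝ) := by positivity
    rw [div_le_iff₀ (hpos.trans_le hsN)]
    refine (hbound N hN3).trans ?_
    have hf0 : 0 ≤ 2 / c * (Real.log N / N) + C / c * Real.log N ^ (-(1 / 20) : ℝ) := by positivity
    refine le_trans ?_ (mul_le_mul_of_nonneg_left hsN hf0)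
    have e1 : Real.log N ^ (-(1 / 20) : ℝ) * Real.log N ^ (-(1 / 2) : ℝ) =
        Real.log N ^ (-(11 / 20) : ℝ) := by
      rw [← Real.rpow_add hL0]; norm_num
    have e2 : Real.log N * Real.log N ^ (-(1 / 2) : ℝ) = Real.log N ^ (1 / 2 : ℝ) := by
      rw [← Real.rpow_one_add' hL0.le (by norm_num)]; norm_num
    have e3 : 1 ≤ Real.log N ^ (1 / 2 : ℝ) := Real.one_le_rpow hL (by norm_num)
    have e4 : (2 / c * (Real.log N / N) + C / c * Real.log N ^ (-(1 / 20) : ℝ)) *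
        (c * N * Real.log N ^ (-(1 / 2) : ℝ)) = 2 * (Real.log N * Real.log N ^ (-(1 / 2) : ℝ)) +
        C * N * (Real.log N ^ (-(1 / 20) : ℝ) * Real.log N ^ (-(1 / 2) : ℝ)) := by
      field_simp
    rw [e4, e1, e2]
    linarith
  unfold HasRelDensityOne
  have h1 : Tendsto (fun N => 1 - b N / s N) atTop (nhds 1) := by
    simpa using hratio.const_sub 1
  refine h1.congr' ?_
  filter_upwards [eventually_ge_atTop N₀] with N hN
  have hN3 : (3 : ℝ) ≤ N := by exact_mod_cast hN₀.trans hN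
  have hsN := hS N hN
  rw [← hsum] at hsN
  have hL0 : 0 < Real.log N := Real.log_pos (by linarith)
  have hpos : 0 < c * N * Real.log N ^ (-(1 / 2) : ℝ) := by positivity
  rw [hcard, hcard, hab, sub_div, div_self (hpos.trans_le hsN).ne']

lemma exponent_bound {κ ε : ℝ} (hκ : κ = Real.log (Real.pi / 2) / 2) (hε : 0 < ε) :
    -(1 / 5) ≤ -2 * κ / 3 + ε := by
  have h1 := Real.log_le_sub_one_of_pos (x := Real.pi / 2) (by positivity)
  have h2 := Real.pi_lt_d2
  rw [hκ]
  linarith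

theorem stmt10 (κ : ℝ) (hκ : κ = Real.log (Real.pi / 2) / 2) (ε : ℝ) (hε : 0 < ε) :
    ∃ (C : ℝ) (A : Set ℕ), A ⊆ S₂ ∧ HasRelDensityOne A S₂ ∧
      ∀ m ∈ A, W2sq (rhoM 2 m) (unifSphere 2) ≤ C * Real.log m ^ (-2 * κ / 3 + ε) := by
  refine ⟨1, {m | m ∈ S₂ ∧ W m ≤ 1 * Real.log m ^ (-2 * κ / 3 + ε)}, fun m hm => hm.1,
    relDensityOne_of_exceptional (fun m hm => hm.1) fun m hm hmA h3 => ?_, fun m hm => hm.2⟩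
  have h1 : Real.log m ^ (-2 * κ / 3 + ε) ≤ W m := by
    by_contra! h
    exact hmA ⟨hm, by rw [one_mul]; exact h.le⟩
  refine le_trans (Real.rpow_le_rpow_of_exponent_le ?_ (exponent_bound hκ hε)) h1
  rw [Real.le_log_iff_exp_le (by positivity)]
  have : (3 : ℝ) ≤ m := by exact_mod_cast h3
  linarith [Real.exp_one_lt_d9]

end
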